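/- arXiv:1910.08870 — 5 statements merged into one kernel-verified Lean document; each statement's English description precedes it below -/
import Mathlib

section
/- Let N ≥ 2, σ ∈ (−1, 0), and 1 < p < (N−2σ)/(N−2−2σ). Let α ∈ (0,1) and let w ∈ C^α(ℝ^N) ∩ C_0(ℝ^N) ∩ L¹(ℝ^N) satisfy ∫_{ℝ^N} w(x) dx > 0. Then for every u_0 ∈ C_0(ℝ^N) there is no global mild solution of ∂_t u = Δu + |u|^p + t^σ w(x) with initial data u_0; equivalently, every mild solution blows up in finite time. -/
open MeasureTheory Filter Set
open scoped ENNReal NNReal ZeroAtInfty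

noncomputable section

abbrev Eu (N : ℕ) := EuclideanSpace ℝ (Fin N)

noncomputable def heatSG (N : ℕ) (t : ℝ) (φ : Eu N → ℝ) (x : Eu N) : ℝ :=
  if t ≤ 0 then φ x
  else ∫ y, (4 * Real.pi * t) ^ (-(N : ℝ) / 2) * Real.exp (-‖x - y‖ ^ 2 / (4 * t)) * φ y

def IsC0 {N : ℕ} (φ : Eu N → ℝ) : Prop :=
  Continuous φ ∧ Tendsto φ (cocompact (Eu N)) (nhds 0)

def IsHolder {N : ℕ} (α : ℝ) (φ : Eu N → ℝ) : Prop :=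
  ∃ C : ℝ≥0, HolderWith C α.toNNReal φ

def IsMildSolution (N : ℕ) (p σ : ℝ) (u₀ w : Eu N → ℝ) (T : ℝ)
    (u : ℝ → C₀(Eu N, ℝ)) : Prop :=
  ContinuousOn u (Icc 0 T) ∧
  ∀ t ∈ Icc (0:ℝ) T, ∀ x,
    u t x = heatSG N t u₀ x
      + ∫ s in (0:ℝ)..t, heatSG N (t - s) (fun y => |u s y| ^ p + s ^ σ * w y) x

def IsGlobalMildSolution (N : ℕ) (p σ : ℝ) (u₀ w : Eu N → ℝ)
    (u : ℝ → C₀(Eu N, ℝ)) : Prop :=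
  ContinuousOn u (Ici 0) ∧
  ∀ t ∈ Ici (0:ℝ), ∀ x,
    u t x = heatSG N t u₀ x
      + ∫ s in (0:ℝ)..t, heatSG N (t - s) (fun y => |u s y| ^ p + s ^ σ * w y) x



def gK (N : ℕ) (ξ : Eu N) : ℝ := (4 * Real.pi) ^ (-(N : ℝ) / 2) * Real.exp (-‖ξ‖ ^ 2 / 4)

lemma gK_nonneg (N : ℕ) (ξ : Eu N) : 0 ≤ gK N ξ := by
  unfold gK; positivity

lemma gK_cont (N : ℕ) : Continuous (gK N) := by
  unfold gK; fun_prop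

def gM (N : ℕ) : Measure (Eu N) := volume.withDensity (fun ξ => ENNReal.ofReal (gK N ξ))

lemma integral_gM {F : Type*} [NormedAddCommGroup F] [NormedSpace ℝ F] (N : ℕ) (f : Eu N → F) :
    ∫ ξ, f ξ ∂(gM N) = ∫ ξ, gK N ξ • f ξ := by
  unfold gM
  rw [integral_withDensity_eq_integral_toReal_smul]
  · simp [ENNReal.toReal_ofReal (gK_nonneg N _)]
  · exact (gK_cont N).measurable.ennreal_ofReal
  · simp

lemma gK_int (N : ℕ) : ∫ ξ, gK N ξ = 1 := by
  unfold gK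
  have h := GaussianFourier.integral_rexp_neg_mul_sq_norm (V := Eu N) (b := 1/4) (by norm_num)
  rw [integral_const_mul]
  have e : (fun a : Eu N => Real.exp (-‖a‖ ^ 2 / 4)) = fun a => Real.exp (-(1/4) * ‖a‖ ^ 2) := by
    ext a; congr 1; ring
  rw [e, h]
  simp only [finrank_euclideanSpace, Fintype.card_fin]
  rw [show Real.pi / (1/4) = 4 * Real.pi by ring, neg_div, ← Real.rpow_add (by positivity)]
  simp

lemma gK_integrable (N : ℕ) : Integrable (gK N) := by
  by_contra h
  have := gK_int N
  rw [integral_undef h] at this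
  norm_num at this

instance gM_prob (N : ℕ) : IsProbabilityMeasure (gM N) := by
  constructor
  unfold gM
  rw [withDensity_apply _ MeasurableSet.univ, Measure.restrict_univ,
    ← ofReal_integral_eq_lintegral_ofReal (gK_integrable N)
      (Eventually.of_forall (gK_nonneg N)), gK_int]
  simp

lemma heatSG_eq (N : ℕ) {t : ℝ} (ht : 0 ≤ t) (φ : Eu N → ℝ) (x : Eu N) :
    heatSG N t φ x = ∫ ξ, φ (x + √t • ξ) ∂(gM N) := by
  rcases ht.eq_or_lt with rfl | ht
  · simp [heatSG]
  · rw [integral_gM]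
    have h1 := Measure.integral_comp_smul (μ := (volume : Measure (Eu N)))
      (fun η => ((4 * Real.pi) ^ (-(N : ℝ) / 2) * Real.exp (-‖η‖ ^ 2 / (4 * t))) * φ (x + η)) (√t)
    have h2 : (fun ξ => gK N ξ • φ (x + √t • ξ)) = fun ξ =>
        ((4 * Real.pi) ^ (-(N : ℝ) / 2) * Real.exp (-‖√t • ξ‖ ^ 2 / (4 * t))) * φ (x + √t • ξ) := by
      ext ξ
      unfold gK
      rw [smul_eq_mul, norm_smul, mul_pow]
      simp only [Real.norm_eq_abs, sq_abs, Real.sq_sqrt ht.le]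
      congr 3
      field_simp
    rw [h2, h1]
    unfold heatSG
    rw [if_neg (not_le.mpr ht)]
    have h3 := integral_add_left_eq_self (μ := (volume : Measure (Eu N))) (fun y => (4 * Real.pi * t) ^ (-(N : ℝ) / 2) * Real.exp (-‖x - y‖ ^ 2 / (4 * t)) * φ y) x
    rw [← h3, smul_eq_mul, ← integral_const_mul]
    congr 1
    ext y
    rw [show x - (x + y) = -y by abel, norm_neg]
    have : (4 * Real.pi * t) ^ (-(N : ℝ) / 2) = |(√t ^ Module.finrank ℝ (Eu N))⁻¹| * (4 * Real.pi) ^ (-(N : ℝ) / 2) := by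
      rw [Real.mul_rpow (by positivity) ht.le, mul_comm]
      congr 1
      rw [abs_of_nonneg (by positivity)]
      simp only [finrank_euclideanSpace, Fintype.card_fin]
      rw [neg_div, Real.rpow_neg ht.le, Real.sqrt_eq_rpow, ← Real.rpow_natCast, ← Real.rpow_mul ht.le]
      congr 2
      ring
    rw [this]
    ring

lemma charFun_gM (N : ℕ) (s : Eu N) : charFun (gM N) s = Complex.exp (-(‖s‖:ℂ) ^ 2) := by
  rw [charFun_apply, integral_gM]
  have h := GaussianFourier.integral_cexp_neg_mul_sq_norm_add (V := Eu N) (b := 1/4)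
    (by norm_num) Complex.I s
  have e : (fun ξ : Eu N => gK N ξ • Complex.exp (inner ℝ ξ s * Complex.I)) = fun ξ =>
     ((4 * Real.pi : ℂ) ^ (-(N : ℂ) / 2)) * Complex.exp (-(1/4) * ‖ξ‖ ^ 2 + Complex.I * inner ℝ s ξ) := by
    ext ξ
    rw [Complex.exp_add, real_inner_comm, Complex.real_smul]
    unfold gK
    push_cast
    rw [Complex.ofReal_cpow (by positivity)]
    push_cast
    rw [mul_comm (Complex.I), mul_assoc, show -(‖ξ‖:ℂ) ^ 2 / 4 = -(1/4) * (‖ξ‖:ℂ) ^ 2 by ring]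
  rw [e, integral_const_mul, h]
  simp only [finrank_euclideanSpace, Fintype.card_fin]
  have hpi : (4 * (Real.pi:ℂ)) ≠ 0 := by
    simp [Real.pi_ne_zero]
  rw [show (Real.pi : ℂ) / (1/4) = 4 * Real.pi by ring, neg_div, ← mul_assoc, ← Complex.cpow_add _ _ hpi]
  simp

lemma gM_conv (N : ℕ) {a b : ℝ} (ha : 0 ≤ a) (hb : 0 ≤ b) :
    ((gM N).map (fun ξ => √a • ξ)) ∗ ((gM N).map (fun ξ => √b • ξ))
      = (gM N).map (fun ξ => √(a + b) • ξ) := by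
  have i1 : ∀ c : ℝ, IsProbabilityMeasure ((gM N).map (fun ξ => c • ξ)) := fun c =>
    Measure.isProbabilityMeasure_map (by fun_prop)
  have := i1 (√a)
  have := i1 (√b)
  have := i1 (√(a+b))
  apply Measure.ext_of_charFun
  ext s
  rw [charFun_conv]
  simp only [charFun_map_smul, charFun_gM, norm_smul, ← Complex.exp_add]
  congr 1
  simp only [Real.norm_eq_abs, abs_of_nonneg (Real.sqrt_nonneg _), ← Complex.ofReal_pow, mul_pow,
    Real.sq_sqrt ha, Real.sq_sqrt hb, Real.sq_sqrt (add_nonneg ha hb)]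
  push_cast
  ring

lemma integrable_bdd {X : Type*} [MeasurableSpace X] [TopologicalSpace X] [BorelSpace X]
    (μ : Measure X) [IsFiniteMeasure μ] {f : X → ℝ}
    (hf : Continuous f) {C : ℝ} (hC : ∀ y, |f y| ≤ C) : Integrable f μ :=
  Integrable.of_bound (hf.measurable.aestronglyMeasurable) C (Eventually.of_forall hC)

lemma semigroup (N : ℕ) {a b : ℝ} (ha : 0 ≤ a) (hb : 0 ≤ b) {φ : Eu N → ℝ} (hφ : Continuous φ)
    {C : ℝ} (hC : ∀ y, |φ y| ≤ C) (x : Eu N) :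
    ∫ ξ, (∫ η, φ (x + √a • ξ + √b • η) ∂(gM N)) ∂(gM N) = ∫ ξ, φ (x + √(a + b) • ξ) ∂(gM N) := by
  have h := gM_conv N ha hb
  have h1 : ∫ ξ, φ (x + √(a + b) • ξ) ∂(gM N) = ∫ y, φ (x + y) ∂((gM N).map (fun ξ => √(a + b) • ξ)) := by
    rw [integral_map (by fun_prop) (by fun_prop)]
  have i1 : ∀ c : ℝ, IsProbabilityMeasure ((gM N).map (fun ξ => c • ξ)) := fun c =>
    Measure.isProbabilityMeasure_map (by fun_prop)
  have := i1 (√a)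
  have := i1 (√b)
  rw [h1, ← h, Measure.conv, integral_map (by fun_prop) (by fun_prop), integral_prod]
  · rw [integral_map (by fun_prop)]
    · congr 1
      ext ξ
      rw [integral_map (by fun_prop) (by fun_prop)]
      simp only [add_assoc]
    · apply Continuous.aestronglyMeasurable
      apply continuous_of_dominated (bound := fun _ => C)
      · intro x; fun_prop
      · intro x; exact Eventually.of_forall fun y => hC _
      · exact integrable_const _
      · exact Eventually.of_forall fun y => by fun_prop
  · exact integrable_bdd _ (by fun_prop) (fun y => hC _)

lemma ode_kernel_integrable {p : ℝ} (hp : 1 < p) : Integrable (fun y : ℝ => (1 + |y| ^ p)⁻¹) := by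
  have h := integrable_one_add_norm (E := ℝ) (μ := volume) (r := p) (by simpa using hp)
  have hc : Continuous (fun y : ℝ => (1 + |y| ^ p)⁻¹) := by
    apply Continuous.inv₀
    · exact continuous_const.add (continuous_abs.rpow_const (fun _ => Or.inr (by linarith)))
    · intro y; positivity
  refine (h.const_mul (2 ^ p)).mono' hc.aestronglyMeasurable (Eventually.of_forall fun y => ?_)
  rw [Real.norm_eq_abs, abs_of_nonneg (by positivity), Real.norm_eq_abs,
    Real.rpow_neg (by positivity), ← div_eq_mul_inv, inv_eq_one_div, div_le_div_iff₀ (by positivity) (by positivity), one_mul]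
  rcases le_total |y| 1 with h1 | h1
  · calc (1 + |y|) ^ p ≤ 2 ^ p := Real.rpow_le_rpow (by positivity) (by linarith) (by linarith)
      _ ≤ 2 ^ p * (1 + |y| ^ p) := by
        have : 0 ≤ |y| ^ p := by positivity
        have h2 : (0:ℝ) ≤ 2 ^ p := by positivity
        nlinarith
  · calc (1 + |y|) ^ p ≤ (2 * |y|) ^ p := Real.rpow_le_rpow (by positivity) (by linarith) (by linarith)
      _ = 2 ^ p * |y| ^ p := Real.mul_rpow (by norm_num) (by positivity)
      _ ≤ 2 ^ p * (1 + |y| ^ p) := by gcongr; linarith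

lemma ode_bound {p : ℝ} (hp : 1 < p) : ∃ K : ℝ, ∀ (γ a b : ℝ) (z z' : ℝ → ℝ), 0 < γ → a ≤ b →
    (∀ t ∈ Icc a b, HasDerivAt z (z' t) t) → (∀ t ∈ Icc a b, |z t| ^ p + γ ≤ z' t) →
    (b - a) * γ ^ (1 - 1 / p) ≤ K := by
  set k : ℝ → ℝ := fun y => (1 + |y| ^ p)⁻¹ with hk
  have hc : Continuous k := by
    apply Continuous.inv₀
    · exact continuous_const.add (continuous_abs.rpow_const (fun _ => Or.inr (by linarith)))
    · intro y; positivity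
  have hi : Integrable k := ode_kernel_integrable hp
  set Φ : ℝ → ℝ := fun x => ∫ y in (0:ℝ)..x, k y with hΦ
  have hΦd : ∀ x, HasDerivAt Φ (k x) x := fun x =>
    intervalIntegral.integral_hasDerivAt_right (hc.intervalIntegrable _ _)
      hc.aestronglyMeasurable.stronglyMeasurableAtFilter hc.continuousAt
  have hΦb : ∀ x, |Φ x| ≤ ∫ y, k y := by
    intro x
    rw [← Real.norm_eq_abs]
    have hk0 : ∀ y, 0 ≤ k y := fun y => by simp only [hk]; positivity
    calc ‖Φ x‖ ≤ ∫ y in uIoc 0 x, ‖k y‖ := intervalIntegral.norm_integral_le_integral_norm_uIoc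
      _ = ∫ y in uIoc 0 x, k y := by
        congr 1; ext y; rw [Real.norm_eq_abs, abs_of_nonneg (hk0 y)]
      _ ≤ ∫ y, k y := setIntegral_le_integral hi (Eventually.of_forall hk0)
  refine ⟨2 * ∫ y, k y, ?_⟩
  intro γ a b z z' hγ hab hz hz'
  set c := γ ^ (1 / p) with hcdef
  have hc0 : 0 < c := by positivity
  have hcp : c ^ p = γ := by
    rw [hcdef, ← Real.rpow_mul hγ.le, one_div_mul_cancel (by linarith), Real.rpow_one]
  have hcg : γ ^ (1 - 1 / p) = γ / c := by
    rw [Real.rpow_sub hγ, Real.rpow_one]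
  have hFd : ∀ t ∈ Icc a b, HasDerivAt (fun t => Φ (z t / c) - γ ^ (1 - 1/p) * t)
      (k (z t / c) * (z' t / c) - γ ^ (1 - 1/p) * 1) t := by
    intro t ht
    exact ((hΦd _).comp t ((hz t ht).div_const c)).sub ((hasDerivAt_id t).const_mul _)
  have hmono : MonotoneOn (fun t => Φ (z t / c) - γ ^ (1 - 1/p) * t) (Icc a b) := by
    apply monotoneOn_of_deriv_nonneg (convex_Icc a b)
    · intro t ht
      exact (hFd t ht).continuousAt.continuousWithinAt
    · intro t ht
      exact (hFd t (interior_subset ht)).differentiableAt.differentiableWithinAt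
    · intro t ht
      have ht := interior_subset ht
      rw [(hFd t ht).deriv, hcg, mul_one, sub_nonneg]
      have e : k (z t / c) = γ / (γ + |z t| ^ p) := by
        simp only [hk]
        rw [abs_div, abs_of_pos hc0, Real.div_rpow (abs_nonneg _) hc0.le, hcp]
        have : 0 ≤ |z t| ^ p := by positivity
        field_simp
      rw [e, ← mul_div_assoc]
      have h0 : 0 < γ + |z t| ^ p := by positivity
      have := hz' t ht
      gcongr
      rw [div_mul_eq_mul_div, le_div_iff₀ h0]
      gcongr
      linarith
  have := hmono (left_mem_Icc.mpr hab) (right_mem_Icc.mpr hab) hab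
  simp only at this
  have h1 := abs_le.mp (hΦb (z a / c))
  have h2 := abs_le.mp (hΦb (z b / c))
  nlinarith [h1.1, h2.2]

lemma rpow_le_of_neg {σ s s₀ : ℝ} (hσ : σ < 0) (hs₀ : 0 < s₀) (h : s₀ ≤ s) : s ^ σ ≤ s₀ ^ σ :=
  Real.rpow_le_rpow_of_nonpos hs₀ h hσ.le

/-- The heat flow of a time dependent function. -/
def Qf (N : ℕ) (f : ℝ → Eu N → ℝ) (r s : ℝ) (x : Eu N) : ℝ := ∫ ξ, f s (x + √r • ξ) ∂(gM N)

lemma slice_cont {N : ℕ} {f : ℝ → Eu N → ℝ}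
    (hf : ContinuousOn (fun q : ℝ × Eu N => f q.1 q.2) (Ioi 0 ×ˢ univ)) {s : ℝ} (hs : 0 < s) :
    Continuous (f s) := by
  rw [continuous_iff_continuousAt]
  intro y
  have h1 : ContinuousAt (fun q : ℝ × Eu N => f q.1 q.2) (s, y) :=
    hf.continuousAt ((isOpen_Ioi.prod isOpen_univ).mem_nhds ⟨hs, mem_univ _⟩)
  exact h1.comp (f := fun y => (s, y)) (by fun_prop)

lemma Qf_bound {N : ℕ} {f : ℝ → Eu N → ℝ} {r s M : ℝ} {x : Eu N} (h : ∀ y, |f s y| ≤ M) :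
    |Qf N f r s x| ≤ M := by
  unfold Qf
  have := norm_integral_le_of_norm_le_const (μ := gM N) (f := fun ξ => f s (x + √r • ξ)) (C := M)
    (Eventually.of_forall fun ξ => h _)
  simpa using this

lemma Qf_contAt {N : ℕ} {f : ℝ → Eu N → ℝ} {A B σ T : ℝ} (hB : 0 ≤ B) (hσ : σ < 0)
    (hf : ContinuousOn (fun q : ℝ × Eu N => f q.1 q.2) (Ioi 0 ×ˢ univ))
    (hb : ∀ s ∈ Ioc 0 T, ∀ y, |f s y| ≤ A + B * s ^ σ) (q : ℝ × ℝ × Eu N)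
    (hq : q.2.1 ∈ Ioo 0 T) :
    ContinuousAt (fun q : ℝ × ℝ × Eu N => Qf N f q.1 q.2.1 q.2.2) q := by
  unfold Qf
  have hev : ∀ᶠ q' in nhds q, q'.2.1 ∈ Ioo (q.2.1 / 2) T := by
    have hc : ContinuousAt (fun q' : ℝ × ℝ × Eu N => q'.2.1) q := by fun_prop
    exact hc.eventually (isOpen_Ioo.mem_nhds ⟨by linarith [hq.1], hq.2⟩)
  have hpos : 0 < q.2.1 / 2 := by linarith [hq.1]
  apply continuousAt_of_dominated (bound := fun _ => A + B * (q.2.1 / 2) ^ σ)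
  · filter_upwards [hev] with q' hq'
    have := slice_cont hf (hpos.trans hq'.1)
    exact Continuous.aestronglyMeasurable (by fun_prop)
  · filter_upwards [hev] with q' hq'
    refine Eventually.of_forall fun ξ => ?_
    refine (hb _ ⟨hpos.trans hq'.1, hq'.2.le⟩ _).trans ?_
    have := rpow_le_of_neg hσ hpos hq'.1.le
    gcongr
  · exact integrable_const _
  · refine Eventually.of_forall fun ξ => ?_
    have h1 : ContinuousAt (fun q : ℝ × Eu N => f q.1 q.2) (q.2.1, q.2.2 + √q.1 • ξ) :=
      hf.continuousAt ((isOpen_Ioi.prod isOpen_univ).mem_nhds ⟨hq.1, mem_univ _⟩)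
    exact h1.comp (f := fun q : ℝ × ℝ × Eu N => (q.2.1, q.2.2 + √q.1 • ξ)) (by fun_prop)

lemma bound_integrable {A B σ t : ℝ} (hσ : -1 < σ) (ht : 0 ≤ t) :
    IntegrableOn (fun s : ℝ => A + B * s ^ σ) (Ioc 0 t) := by
  have h : IntervalIntegrable (fun s : ℝ => A + B * s ^ σ) volume 0 t :=
    intervalIntegrable_const.add ((intervalIntegral.intervalIntegrable_rpow' hσ).const_mul B)
  exact (intervalIntegrable_iff_integrableOn_Ioc_of_le ht).mp h

lemma duhamel {N : ℕ} {f : ℝ → Eu N → ℝ} {A B σ T : ℝ} (hB : 0 ≤ B) (hσ : σ < 0) (hσ1 : -1 < σ)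
    (hf : ContinuousOn (fun q : ℝ × Eu N => f q.1 q.2) (Ioi 0 ×ˢ univ))
    (hb : ∀ s ∈ Ioc 0 T, ∀ y, |f s y| ≤ A + B * s ^ σ)
    {u₀ : Eu N → ℝ} (hu : Continuous u₀) {C : ℝ} (hC : ∀ y, |u₀ y| ≤ C)
    {t : ℝ} (ht : t ∈ Ioo 0 T) {v : Eu N → ℝ}
    (hv : ∀ x, v x = (∫ ξ, u₀ (x + √t • ξ) ∂(gM N)) + ∫ s in (0:ℝ)..t, Qf N f (t - s) s x) :
    ∫ ξ, v (√(T - t) • ξ) ∂(gM N)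
      = (∫ ξ, u₀ (√T • ξ) ∂(gM N)) + ∫ s in (0:ℝ)..t, Qf N f (T - s) s 0 := by
  have hTt : 0 ≤ T - t := by linarith [ht.2]
  simp only [hv]
  have hμ : (gM N).prod (volume.restrict (Ioc 0 t)) =
      ((gM N).prod (volume : Measure ℝ)).restrict (univ ×ˢ Ioc 0 t) := by
    rw [← Measure.prod_restrict, Measure.restrict_univ]
  have hint : Integrable (Function.uncurry fun (ξ : Eu N) (s : ℝ) => Qf N f (t - s) s (√(T - t) • ξ))
      ((gM N).prod (volume.restrict (Ioc 0 t))) := by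
    have hbi : Integrable (fun q : Eu N × ℝ => A + B * q.2 ^ σ)
        ((gM N).prod (volume.restrict (Ioc 0 t))) :=
      Integrable.comp_snd (f := fun s : ℝ => A + B * s ^ σ) (bound_integrable hσ1 ht.1.le) (gM N)
    refine hbi.mono' ?_ ?_
    · rw [hμ]
      apply ContinuousOn.aestronglyMeasurable
      · intro q hq
        have h1 := Qf_contAt hB hσ hf hb (t - q.2, q.2, √(T - t) • q.1)
          ⟨hq.2.1, lt_of_le_of_lt hq.2.2 ht.2⟩
        exact (h1.comp (f := fun q : Eu N × ℝ => (t - q.2, q.2, √(T - t) • q.1))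
          (by fun_prop)).continuousWithinAt
      · exact MeasurableSet.univ.prod measurableSet_Ioc
    · rw [hμ]
      filter_upwards [ae_restrict_mem (MeasurableSet.univ.prod measurableSet_Ioc)] with q hq
      exact Qf_bound (hb _ ⟨hq.2.1, hq.2.2.trans ht.2.le⟩)
  rw [integral_add]
  · congr 1
    · have := semigroup N hTt ht.1.le hu hC 0
      simpa using this
    · simp only [intervalIntegral.integral_of_le ht.1.le]
      rw [integral_integral_swap hint]
      apply setIntegral_congr_fun measurableSet_Ioc
      intro s hs
      have hfs := slice_cont hf hs.1
      have := semigroup N hTt (by linarith [hs.2] : 0 ≤ t - s) hfs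
        (hb s ⟨hs.1, hs.2.trans ht.2.le⟩) 0
      simp only [zero_add] at this
      simp only [Qf, zero_add]
      rw [this]
      congr 5
      ring_nf
  · apply integrable_bdd _ (C := C)
    · apply continuous_of_dominated (bound := fun _ => C)
      · intro x; fun_prop
      · intro x; exact Eventually.of_forall fun y => hC _
      · exact integrable_const _
      · exact Eventually.of_forall fun y => by fun_prop
    · intro y
      have := norm_integral_le_of_norm_le_const (μ := gM N)
        (f := fun ξ => u₀ (√(T - t) • y + √t • ξ)) (C := C) (Eventually.of_forall fun ξ => hC _)
      simpa using this
  · simp only [intervalIntegral.integral_of_le ht.1.le]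
    exact hint.integral_prod_left

lemma IsC0.bdd {N : ℕ} {φ : Eu N → ℝ} (h : IsC0 φ) : ∃ C, 0 ≤ C ∧ ∀ y, |φ y| ≤ C := by
  let F : C₀(Eu N, ℝ) := ⟨⟨φ, h.1⟩, h.2⟩
  exact ⟨‖F.toBCF‖, norm_nonneg _, fun y => F.toBCF.norm_coe_le_norm y⟩

lemma C0_le_norm {N : ℕ} (F : C₀(Eu N, ℝ)) (y : Eu N) : |F y| ≤ ‖F‖ :=
  F.toBCF.norm_coe_le_norm y

lemma C0_eval_cont {N : ℕ} {U : ℝ → C₀(Eu N, ℝ)} (hU : Continuous U) :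
    Continuous (fun q : ℝ × Eu N => U q.1 q.2) := by
  have h : Continuous (fun q : ℝ × Eu N => (U q.1).toBCF q.2) := by
    have h1 : Continuous (fun s => (U s).toBCF) :=
      (ZeroAtInftyContinuousMap.isometry_toBCF (α := Eu N) (β := ℝ)).continuous.comp hU
    exact (h1.comp continuous_fst).eval continuous_snd
  exact h

lemma w_lower {N : ℕ} {w : Eu N → ℝ} (hwI : Integrable w) (hwpos : 0 < ∫ x, w x) :
    ∃ R : ℝ, 0 < R ∧ ∀ r, R ≤ r →
      (4 * Real.pi * r) ^ (-(N : ℝ) / 2) * ((∫ x, w x) / 2) ≤ heatSG N r w 0 := by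
  have hlim : Tendsto (fun r : ℝ => ∫ y, Real.exp (-‖y‖ ^ 2 / (4 * r)) * w y) atTop
      (nhds (∫ y, w y)) := by
    apply tendsto_integral_filter_of_dominated_convergence (fun y => ‖w y‖)
    · refine Eventually.of_forall fun r => ?_
      exact (Continuous.aestronglyMeasurable (by fun_prop)).mul hwI.1
    · filter_upwards [eventually_gt_atTop 0] with r hr
      refine Eventually.of_forall fun y => ?_
      rw [norm_mul, Real.norm_eq_abs, Real.abs_exp]
      have : Real.exp (-‖y‖ ^ 2 / (4 * r)) ≤ 1 := by
        rw [Real.exp_le_one_iff, neg_div, neg_nonpos]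
        positivity
      exact mul_le_of_le_one_left (norm_nonneg _) this
    · exact hwI.norm
    · refine Eventually.of_forall fun y => ?_
      have h1 : Tendsto (fun r : ℝ => -‖y‖ ^ 2 / (4 * r)) atTop (nhds 0) :=
        Tendsto.const_div_atTop (tendsto_id.const_mul_atTop (by norm_num)) _
      have h2 := (Real.continuous_exp.tendsto 0).comp h1
      have h3 := h2.mul_const (w y)
      simpa using h3
  have hev := hlim.eventually (lt_mem_nhds (show (∫ y, w y) / 2 < ∫ y, w y by linarith))
  obtain ⟨R, hR⟩ := eventually_atTop.mp hev
  refine ⟨max R 1, by positivity, fun r hr => ?_⟩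
  have hr0 : 0 < r := lt_of_lt_of_le (by positivity) hr
  have := hR r ((le_max_left _ _).trans hr)
  unfold heatSG
  rw [if_neg (not_le.mpr hr0)]
  simp only [mul_assoc, zero_sub, norm_neg]
  rw [integral_const_mul]
  gcongr

lemma jensen_abs {N : ℕ} {p : ℝ} (hp : 1 < p) {v : Eu N → ℝ} (hv : Continuous v) {C : ℝ}
    (hC : ∀ y, |v y| ≤ C) :
    |∫ ξ, v ξ ∂(gM N)| ^ p ≤ ∫ ξ, |v ξ| ^ p ∂(gM N) := by
  have hcp : Continuous fun ξ => |v ξ| ^ p := hv.abs.rpow_const (fun _ => Or.inr (by linarith))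
  have h1 : |∫ ξ, v ξ ∂(gM N)| ≤ ∫ ξ, |v ξ| ∂(gM N) := abs_integral_le_integral_abs
  have h2 : (∫ ξ, |v ξ| ∂(gM N)) ^ p ≤ ∫ ξ, |v ξ| ^ p ∂(gM N) := by
    refine (convexOn_rpow hp.le).map_integral_le (f := fun ξ => |v ξ|) (μ := gM N) ?_ isClosed_Ici
      (Eventually.of_forall fun ξ => mem_Ici.mpr (abs_nonneg _)) ?_ ?_
    · exact continuousOn_id.rpow_const (fun _ _ => Or.inr (by linarith))
    · exact integrable_bdd _ hv.abs (C := C) (fun y => by rw [abs_abs]; exact hC y)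
    · refine integrable_bdd _ hcp (C := C ^ p) (fun y => ?_)
      rw [Function.comp_apply, abs_of_nonneg (by positivity : 0 ≤ |v y| ^ p)]
      exact Real.rpow_le_rpow (abs_nonneg _) (hC y) (by linarith)
  exact (Real.rpow_le_rpow (abs_nonneg _) h1 (by linarith)).trans h2

lemma key_bound {N : ℕ} {σ p : ℝ} (hσ : σ ∈ Set.Ioo (-1 : ℝ) 0) (hp1 : 1 < p)
    {w : Eu N → ℝ} (hwC : IsC0 w) (hwI : Integrable w) (hwpos : 0 < ∫ x, w x)
    {u₀ : Eu N → ℝ} (hu₀ : IsC0 u₀) {u : ℝ → C₀(Eu N, ℝ)}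
    (hu : IsGlobalMildSolution N p σ u₀ w u) :
    ∃ K R : ℝ, 0 < R ∧ ∀ T, R ≤ T → (T / 2 - T / 4) *
      (T ^ σ * ((4 * Real.pi * T) ^ (-(N : ℝ) / 2) * ((∫ x, w x) / 2))) ^ (1 - 1 / p) ≤ K := by
  obtain ⟨K, hK⟩ := ode_bound hp1
  obtain ⟨R, hR0, hR⟩ := w_lower hwI hwpos
  refine ⟨K, 2 * R, by linarith, fun T hT => ?_⟩
  have hT0 : 0 < T := by linarith
  obtain ⟨W, hW0, hW⟩ := hwC.bdd
  obtain ⟨C, hC0, hC⟩ := hu₀.bdd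
  set U : ℝ → C₀(Eu N, ℝ) := fun s => u (max s 0) with hUdef
  have hU : Continuous U := by
    have h1 : Continuous fun s : ℝ => max s 0 := by fun_prop
    exact hu.1.comp_continuous h1 (fun s => mem_Ici.mpr (le_max_right _ _))
  have hUeq : ∀ s, 0 ≤ s → U s = u s := fun s hs => by simp only [hUdef, max_eq_left hs]
  have hUc : Continuous (fun q : ℝ × Eu N => U q.1 q.2) := C0_eval_cont hU
  obtain ⟨M, hM⟩ := (isCompact_Icc (a := (0:ℝ)) (b := T)).exists_bound_of_continuousOn
    hU.continuousOn
  have hM' : ∀ s ∈ Icc 0 T, ∀ y, |U s y| ≤ M := fun s hs y => (C0_le_norm _ _).trans (hM s hs)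
  set f : ℝ → Eu N → ℝ := fun s y => |U s y| ^ p + s ^ σ * w y with hfdef
  have hf : ContinuousOn (fun q : ℝ × Eu N => f q.1 q.2) (Ioi 0 ×ˢ univ) := by
    apply ContinuousOn.add
    · exact (hUc.abs.rpow_const (fun _ => Or.inr (by linarith))).continuousOn
    · apply ContinuousOn.mul
      · exact continuous_fst.continuousOn.rpow_const (fun q hq => Or.inl (ne_of_gt hq.1))
      · exact (hwC.1.comp continuous_snd).continuousOn
  have hb : ∀ s ∈ Ioc 0 T, ∀ y, |f s y| ≤ M ^ p + W * s ^ σ := by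
    intro s hs y
    refine (abs_add_le _ _).trans ?_
    have hs0 := hs.1
    rw [abs_of_nonneg (by positivity : 0 ≤ |U s y| ^ p), abs_mul,
      abs_of_nonneg (by positivity : 0 ≤ s ^ σ), mul_comm]
    gcongr
    · exact hM' s ⟨hs.1.le, hs.2⟩ y
    · exact hW y
  set z : ℝ → ℝ := fun t => ∫ ξ, U t (√(T - t) • ξ) ∂(gM N) with hz
  set h : ℝ → ℝ := fun s => Qf N f (T - s) s 0 with hh
  have hzeq : ∀ t ∈ Ioo 0 T, z t = (∫ ξ, u₀ (√T • ξ) ∂(gM N)) + ∫ s in (0:ℝ)..t, h s := by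
    intro t ht
    refine duhamel hW0 hσ.2 hσ.1 hf hb hu₀.1 hC ht (v := fun x => U t x) ?_
    intro x
    rw [hUeq t ht.1.le, hu.2 t ht.1.le x, heatSG_eq N ht.1.le]
    congr 1
    apply intervalIntegral.integral_congr
    intro s hs
    rw [uIcc_of_le ht.1.le] at hs
    simp only [Qf, hfdef]
    rw [heatSG_eq N (by linarith [hs.2]), hUeq s hs.1]
  have hcont : ∀ t ∈ Ioo 0 T, ContinuousAt h t := by
    intro t ht
    exact (Qf_contAt hW0 hσ.2 hf hb (T - t, t, 0) ht).comp
      (f := fun s : ℝ => (T - s, s, (0 : Eu N))) (by fun_prop)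
  have hcontOn : ContinuousOn h (Ioo 0 T) := fun t ht => (hcont t ht).continuousWithinAt
  have hderiv : ∀ t ∈ Ioo 0 T, HasDerivAt z (h t) t := by
    intro t ht
    have hii : IntervalIntegrable h volume 0 t := by
      rw [intervalIntegrable_iff_integrableOn_Ioc_of_le ht.1.le]
      refine (bound_integrable (A := M ^ p) (B := W) hσ.1 ht.1.le).mono' ?_ ?_
      · exact (hcontOn.mono fun s hs => ⟨hs.1, lt_of_le_of_lt hs.2 ht.2⟩).aestronglyMeasurable
          measurableSet_Ioc
      · filter_upwards [ae_restrict_mem measurableSet_Ioc] with s hs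
        exact Qf_bound (hb _ ⟨hs.1, hs.2.trans ht.2.le⟩)
    have hd := (intervalIntegral.integral_hasDerivAt_right hii
      (hcontOn.stronglyMeasurableAtFilter isOpen_Ioo t ht) (hcont t ht)).const_add
      (∫ ξ, u₀ (√T • ξ) ∂(gM N))
    refine hd.congr_of_eventuallyEq ?_
    filter_upwards [isOpen_Ioo.mem_nhds ht] with s hs
    exact hzeq s hs
  refine hK _ (T / 4) (T / 2) z h (by positivity) (by linarith)
    (fun t ht => hderiv t ⟨by linarith [ht.1], by linarith [ht.2]⟩) ?_
  intro t ht
  have ht0 : 0 < t := by linarith [ht.1]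
  have htT : t ≤ T := by linarith [ht.2]
  have hUt : Continuous fun y => U t y := (U t).continuous
  have hvc : Continuous fun ξ : Eu N => U t (√(T - t) • ξ) := by fun_prop
  have hwc : Continuous w := hwC.1
  have hexp : h t = (∫ ξ, |U t (√(T - t) • ξ)| ^ p ∂(gM N)) + t ^ σ * heatSG N (T - t) w 0 := by
    simp only [hh, Qf, hfdef, zero_add]
    rw [heatSG_eq N (by linarith), ← integral_const_mul, ← integral_add]
    · simp only [zero_add]
    · refine integrable_bdd _ (hvc.abs.rpow_const (fun _ => Or.inr (by linarith))) (C := M ^ p) ?_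
      intro y
      rw [abs_of_nonneg (by positivity)]
      exact Real.rpow_le_rpow (abs_nonneg _) (hM' t ⟨ht0.le, htT⟩ _) (by linarith)
    · apply Integrable.const_mul
      exact integrable_bdd _ (by fun_prop) (C := W) fun y => hW _
  rw [hexp]
  have hj := jensen_abs hp1 hvc (fun y => hM' t ⟨ht0.le, htT⟩ _)
  have hr := hR (T - t) (by linarith [ht.2])
  have hTt : 0 < T - t := by linarith [ht.2]
  apply add_le_add hj
  refine mul_le_mul (rpow_le_of_neg hσ.2 ht0 htT) (le_trans ?_ hr) (by positivity) (by positivity)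
  have hNn : -(N : ℝ) / 2 ≤ 0 := by
    rw [neg_div, neg_nonpos]; positivity
  have : (4 * Real.pi * T) ^ (-(N : ℝ) / 2) ≤ (4 * Real.pi * (T - t)) ^ (-(N : ℝ) / 2) := by
    apply Real.rpow_le_rpow_of_nonpos (by positivity) _ hNn
    gcongr
    linarith
  gcongr

/-- Blow-up for 1 < p < (N-2σ)/(N-2-2σ), σ ∈ (-1,0): no global mild solution. -/
theorem blowup_subcritical_neg_sigma
    (N : ℕ) (hN : 2 ≤ N) (σ p α : ℝ)
    (hσ : σ ∈ Set.Ioo (-1 : ℝ) 0) (hp1 : 1 < p)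
    (hpc : p < ((N : ℝ) - 2 * σ) / ((N : ℝ) - 2 - 2 * σ))
    (hα : α ∈ Set.Ioo (0 : ℝ) 1)
    (w : Eu N → ℝ) (hwH : IsHolder α w) (hwC : IsC0 w) (hwI : Integrable w)
    (hwpos : 0 < ∫ x, w x)
    (u₀ : Eu N → ℝ) (hu₀ : IsC0 u₀) :
    ¬ ∃ u : ℝ → C₀(Eu N, ℝ), IsGlobalMildSolution N p σ u₀ w u := by
  rintro ⟨u, hu⟩
  obtain ⟨K, R, hR0, hKR⟩ := key_bound hσ hp1 hwC hwI hwpos hu₀ hu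
  set m := ((4 * Real.pi) ^ (-(N : ℝ) / 2) * ((∫ x, w x) / 2)) ^ (1 - 1 / p) with hm
  have hm0 : 0 < m := by positivity
  set e := 1 + (σ + -(N : ℝ) / 2) * (1 - 1 / p) with he
  have hN' : (2 : ℝ) ≤ N := by exact_mod_cast hN
  have hσ2 := hσ.2
  have he0 : 0 < e := by
    have hden : 0 < (N : ℝ) - 2 - 2 * σ := by linarith
    rw [lt_div_iff₀ hden] at hpc
    have hp0 : 0 < p := by linarith
    have : e = (2 * p + (2 * σ - N) * (p - 1)) / (2 * p) := by
      rw [he]; field_simp; ring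
    rw [this]
    apply div_pos _ (by linarith)
    nlinarith
  have hlim : Tendsto (fun T : ℝ => m / 4 * T ^ e) atTop atTop :=
    (tendsto_rpow_atTop he0).const_mul_atTop (by positivity)
  obtain ⟨T, hT1, hT2⟩ := ((hlim.eventually_gt_atTop K).and (eventually_ge_atTop R)).exists
  have hT0 : 0 < T := by linarith
  have h1 := hKR T hT2
  have h2 : (T / 2 - T / 4) *
      (T ^ σ * ((4 * Real.pi * T) ^ (-(N : ℝ) / 2) * ((∫ x, w x) / 2))) ^ (1 - 1 / p)
      = m / 4 * T ^ e := by
    have e1 : T ^ σ * ((4 * Real.pi * T) ^ (-(N : ℝ) / 2) * ((∫ x, w x) / 2)) =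
        T ^ (σ + -(N : ℝ) / 2) * ((4 * Real.pi) ^ (-(N : ℝ) / 2) * ((∫ x, w x) / 2)) := by
      rw [Real.mul_rpow (by positivity) hT0.le, Real.rpow_add hT0]
      ring
    rw [e1, Real.mul_rpow (by positivity) (by positivity), ← Real.rpow_mul hT0.le, he,
      Real.rpow_add hT0, Real.rpow_one, ← hm]
    ring
  linarith

end
end

section
/- Let N ≥ 2, p > 1 and σ > 0. Let α ∈ (0,1) and let w ∈ C^α(ℝ^N) ∩ C_0(ℝ^N) ∩ L¹(ℝ^N) satisfy ∫_{ℝ^N} w(x) dx > 0. Then for every u_0 ∈ C_0(ℝ^N) there is no global mild solution of ∂_t u = Δu + |u|^p + t^σ w(x) with initial data u_0; equivalently, every mild solution blows up in finite time. -/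
open MeasureTheory Filter Set
open scoped ENNReal NNReal ZeroAtInfty

noncomputable section

/-- The heat kernel. -/
def hk (N : ℕ) (r : ℝ) (x : Eu N) : ℝ :=
  (4 * Real.pi * r) ^ (-(N : ℝ) / 2) * Real.exp (-‖x‖ ^ 2 / (4 * r))

lemma integrable_gauss {N : ℕ} {b : ℝ} (hb : 0 < b) :
    Integrable (fun x : Eu N => Real.exp (-b * ‖x‖ ^ 2)) := by
  apply Integrable.of_integral_ne_zero
  rw [GaussianFourier.integral_rexp_neg_mul_sq_norm hb]
  positivity

lemma hk_eq {N : ℕ} (r : ℝ) (x : Eu N) :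
    hk N r x = (4 * Real.pi * r) ^ (-(N : ℝ) / 2) * Real.exp (-(1 / (4 * r)) * ‖x‖ ^ 2) := by
  unfold hk
  congr 2
  ring

lemma hk_pos {N : ℕ} {r : ℝ} (hr : 0 < r) (x : Eu N) : 0 < hk N r x := by
  unfold hk; positivity

lemma hk_integrable {N : ℕ} {r : ℝ} (hr : 0 < r) : Integrable (hk N r) := by
  have : hk N r = fun x => (4 * Real.pi * r) ^ (-(N : ℝ) / 2) *
      Real.exp (-(1 / (4 * r)) * ‖x‖ ^ 2) := by
    ext x; exact hk_eq r x
  rw [this]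
  exact (integrable_gauss (by positivity)).const_mul _

lemma hk_integral {N : ℕ} {r : ℝ} (hr : 0 < r) : ∫ x, hk N r x = 1 := by
  simp_rw [hk_eq]
  rw [integral_const_mul, GaussianFourier.integral_rexp_neg_mul_sq_norm (by positivity)]
  rw [show Real.pi / (1 / (4 * r)) = 4 * Real.pi * r by field_simp]
  rw [finrank_euclideanSpace_fin, ← Real.rpow_add (by positivity)]
  rw [show -(N : ℝ) / 2 + (N : ℝ) / 2 = 0 by ring, Real.rpow_zero]

lemma hk_continuous {N : ℕ} (r : ℝ) : Continuous (hk N r) := by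
  unfold hk; fun_prop

lemma hk_measurable (N : ℕ) : Measurable (fun z : ℝ × Eu N => hk N z.1 z.2) := by
  unfold hk; fun_prop

lemma hk_sub_integrable {N : ℕ} {r : ℝ} (hr : 0 < r) (x : Eu N) :
    Integrable (fun y => hk N r (x - y)) :=
  (hk_integrable hr).comp_sub_left x

lemma hk_sub_integral {N : ℕ} {r : ℝ} (hr : 0 < r) (x : Eu N) :
    ∫ y, hk N r (x - y) = 1 := by
  rw [integral_sub_left_eq_self (fun y => hk N r y), hk_integral hr]

lemma hk_conv {N : ℕ} {r t : ℝ} (hr : 0 < r) (ht : 0 < t) (y : Eu N) :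
    ∫ x, hk N r x * hk N t (x - y) = hk N (r + t) y := by
  have key : ∀ x : Eu N, hk N r x * hk N t (x - y) =
      ((4 * Real.pi * r) ^ (-(N : ℝ) / 2) * (4 * Real.pi * t) ^ (-(N : ℝ) / 2) *
        Real.exp (-‖y‖ ^ 2 / (4 * (r + t)))) *
        Real.exp (-((r + t) / (4 * r * t)) * ‖x - (r / (r + t)) • y‖ ^ 2) := by
    intro x
    unfold hk
    have : Real.exp (-‖y‖ ^ 2 / (4 * (r + t))) *
        Real.exp (-((r + t) / (4 * r * t)) * ‖x - (r / (r + t)) • y‖ ^ 2) =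
        Real.exp (-‖x‖ ^ 2 / (4 * r)) * Real.exp (-‖x - y‖ ^ 2 / (4 * t)) := by
      rw [← Real.exp_add, ← Real.exp_add]
      congr 1
      rw [norm_sub_sq_real, norm_sub_sq_real, inner_smul_right, norm_smul, Real.norm_eq_abs,
        abs_of_pos (by positivity)]
      field_simp
      ring
    linear_combination (-((4 * Real.pi * r) ^ (-(N : ℝ) / 2) *
      (4 * Real.pi * t) ^ (-(N : ℝ) / 2))) * this
  simp_rw [key]
  rw [integral_const_mul, integral_sub_right_eq_self
    (fun x : Eu N => Real.exp (-((r + t) / (4 * r * t)) * ‖x‖ ^ 2)),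
    GaussianFourier.integral_rexp_neg_mul_sq_norm (by positivity), finrank_euclideanSpace_fin]
  unfold hk
  have h : (4 * Real.pi * r) ^ (-(N : ℝ) / 2) * (4 * Real.pi * t) ^ (-(N : ℝ) / 2) *
      (Real.pi / ((r + t) / (4 * r * t))) ^ ((N : ℝ) / 2) =
      (4 * Real.pi * (r + t)) ^ (-(N : ℝ) / 2) := by
    have h1 : Real.pi / ((r + t) / (4 * r * t)) = ((4 * Real.pi * (r + t)) /
      ((4 * Real.pi * r) * (4 * Real.pi * t)))⁻¹ := by field_simp
    have hA : 0 < 4 * Real.pi * r := by positivity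
    have hB : 0 < 4 * Real.pi * t := by positivity
    have hC : 0 < 4 * Real.pi * (r + t) := by positivity
    rw [h1]
    generalize 4 * Real.pi * r = A at *
    generalize 4 * Real.pi * t = B at *
    generalize 4 * Real.pi * (r + t) = C at *
    rw [Real.inv_rpow (by positivity), ← Real.rpow_neg (by positivity),
      Real.div_rpow (by positivity) (by positivity), Real.mul_rpow (by positivity) (by positivity),
      neg_div]
    have := Real.rpow_pos_of_pos hA (-((N : ℝ) / 2))
    have := Real.rpow_pos_of_pos hB (-((N : ℝ) / 2))
    field_simp
  linear_combination Real.exp (-‖y‖ ^ 2 / (4 * (r + t))) * h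

/-- Semigroup property at the origin. -/
lemma hk_semigroup {N : ℕ} {r t : ℝ} (hr : 0 < r) (ht : 0 < t) (φ : Eu N → ℝ)
    (hφ : Measurable φ) (M : ℝ) (hM : ∀ y, |φ y| ≤ M) :
    ∫ x, hk N r x * (∫ y, hk N t (x - y) * φ y) = ∫ y, hk N (r + t) y * φ y := by
  have hm : Measurable (fun z : Eu N × Eu N => hk N r z.1 * hk N t (z.1 - z.2)) := by
    have h1 := hk_continuous (N := N) r
    have h2 := hk_continuous (N := N) t
    exact (by fun_prop : Continuous _).measurable
  have hint0 : Integrable (fun z : Eu N × Eu N => hk N r z.1 * hk N t (z.1 - z.2))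
      (volume.prod volume) := by
    rw [integrable_prod_iff hm.aestronglyMeasurable]
    refine ⟨Eventually.of_forall fun x => (hk_sub_integrable ht x).const_mul (hk N r x), ?_⟩
    have : (fun x => ∫ y, ‖hk N r x * hk N t (x - y)‖) = hk N r := by
      ext x
      have : ∀ y, ‖hk N r x * hk N t (x - y)‖ = hk N r x * hk N t (x - y) := fun y => by
        rw [Real.norm_eq_abs, abs_of_pos (mul_pos (hk_pos hr _) (hk_pos ht _))]
      simp_rw [this]
      rw [integral_const_mul, hk_sub_integral ht, mul_one]
    simp only [this]
    exact hk_integrable hr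
  have hint : Integrable (Function.uncurry
      (fun (x y : Eu N) => hk N r x * hk N t (x - y) * φ y)) (volume.prod volume) := by
    refine hint0.mul_bdd (c := M) ?_ ?_
    · exact (hφ.comp measurable_snd).aestronglyMeasurable
    · exact Eventually.of_forall fun z => hM z.2
  calc ∫ x, hk N r x * (∫ y, hk N t (x - y) * φ y)
      = ∫ x, ∫ y, hk N r x * hk N t (x - y) * φ y := by
        congr 1; ext x
        rw [← integral_const_mul]
        simp_rw [mul_assoc]
    _ = ∫ y, ∫ x, hk N r x * hk N t (x - y) * φ y := integral_integral_swap hint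
    _ = _ := by
        congr 1; ext y
        rw [integral_mul_const, hk_conv hr ht]

lemma hk_bound {N : ℕ} {r₀ : ℝ} (h0 : 0 < r₀) : ∃ C > 0, ∀ r ∈ Ioo (r₀ / 2) (2 * r₀),
    ∀ y : Eu N, hk N r y ≤ C * Real.exp (-(1 / (8 * r₀)) * ‖y‖ ^ 2) := by
  refine ⟨(4 * Real.pi * (r₀ / 2)) ^ (-(N : ℝ) / 2), by positivity, fun r hr y => ?_⟩
  have hr0 : 0 < r := by have := hr.1; linarith
  rw [hk_eq]
  have h1 : (4 * Real.pi * r) ^ (-(N : ℝ) / 2) ≤ (4 * Real.pi * (r₀ / 2)) ^ (-(N : ℝ) / 2) := by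
    apply Real.rpow_le_rpow_of_nonpos (by positivity)
    · have := hr.1; gcongr
    · have : (0:ℝ) ≤ N := by positivity
      linarith
  have h2 : 1 / (8 * r₀) ≤ 1 / (4 * r) := by
    apply one_div_le_one_div_of_le (by positivity); linarith [hr.2]
  have h3 : Real.exp (-(1 / (4 * r)) * ‖y‖ ^ 2) ≤ Real.exp (-(1 / (8 * r₀)) * ‖y‖ ^ 2) := by
    gcongr
  gcongr

/-- Joint continuity of the heat flow evaluated at the origin. -/
lemma hk_joint_continuousAt {N : ℕ} (Φ : ℝ → Eu N → ℝ)
    (hc : Continuous (Function.uncurry Φ))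
    (hb : ∀ s₀, ∃ M, ∀ᶠ s in nhds s₀, ∀ y, |Φ s y| ≤ M)
    {r₀ : ℝ} (h0 : 0 < r₀) (s₀ : ℝ) :
    ContinuousAt (fun z : ℝ × ℝ => ∫ y, hk N z.1 y * Φ z.2 y) (r₀, s₀) := by
  obtain ⟨C, hC, hCb⟩ := hk_bound (N := N) h0
  obtain ⟨M, hM⟩ := hb s₀
  refine continuousAt_of_dominated (bound := fun y => C * Real.exp (-(1 / (8 * r₀)) * ‖y‖ ^ 2) * M)
    ?_ ?_ ?_ ?_
  · refine Eventually.of_forall fun z => ?_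
    have h1 := hk_continuous (N := N) z.1
    have h2 : Continuous (Φ z.2) := hc.comp (Continuous.prodMk_right z.2)
    exact (h1.mul h2).aestronglyMeasurable
  · have e1 : ∀ᶠ z : ℝ × ℝ in nhds (r₀, s₀), z.1 ∈ Ioo (r₀ / 2) (2 * r₀) :=
      continuousAt_fst.eventually_mem (Ioo_mem_nhds (by simp; linarith) (by simp; linarith))
    have e2 : ∀ᶠ z : ℝ × ℝ in nhds (r₀, s₀), ∀ y, |Φ z.2 y| ≤ M :=
      (continuousAt_snd (p := (r₀, s₀))).eventually hM
    filter_upwards [e1, e2] with z h1 h2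
    refine Eventually.of_forall fun y => ?_
    have hp := hk_pos (N := N) (r := z.1) (by have := h1.1; linarith) y
    rw [norm_mul, Real.norm_eq_abs, Real.norm_eq_abs, abs_of_pos hp]
    gcongr
    · exact hCb _ h1 y
    · exact h2 y
  · exact ((integrable_gauss (by positivity)).const_mul _).mul_const _
  · refine Eventually.of_forall fun y => ?_
    have h2 : Continuous (fun z : ℝ × ℝ => Φ z.2 y) :=
      hc.comp (continuous_snd.prodMk continuous_const)
    refine ContinuousAt.mul ?_ h2.continuousAt
    unfold hk
    have hne : 4 * Real.pi * r₀ ≠ 0 := by positivity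
    have hne' : 4 * r₀ ≠ 0 := by positivity
    refine ContinuousAt.mul (ContinuousAt.rpow_const (by fun_prop) (Or.inl hne)) ?_
    have hdv : ContinuousAt (fun z : ℝ × ℝ => -‖y‖ ^ 2 / (4 * z.1)) (r₀, s₀) :=
      ContinuousAt.div (by fun_prop) (by fun_prop) hne'
    exact hdv.rexp

/-- The polynomial factor in the time derivative of the heat kernel. -/
def hq (N : ℕ) (r : ℝ) (x : Eu N) : ℝ := ‖x‖ ^ 2 / (4 * r ^ 2) - N / (2 * r)

lemma hk_hasDerivAt {N : ℕ} {r : ℝ} (hr : 0 < r) (x : Eu N) :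
    HasDerivAt (fun r => hk N r x) (hk N r x * hq N r x) r := by
  unfold hk hq
  have h1 : HasDerivAt (fun r : ℝ => 4 * Real.pi * r) (4 * Real.pi) r := by
    simpa using (hasDerivAt_id r).const_mul (4 * Real.pi)
  have h2 := h1.rpow_const (p := -(N : ℝ) / 2) (Or.inl (by positivity))
  have h3 : HasDerivAt (fun r : ℝ => -‖x‖ ^ 2 / (4 * r)) (‖x‖ ^ 2 / (4 * r ^ 2)) r := by
    have := (hasDerivAt_inv hr.ne').const_mul (-‖x‖ ^ 2 / 4)
    refine (this.congr_of_eventuallyEq ?_).congr_deriv ?_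
    · refine Eventually.of_forall fun s => ?_
      simp only [div_eq_mul_inv, mul_inv]; ring
    · field_simp
  have h4 := h2.mul h3.exp
  refine h4.congr_deriv ?_
  rw [Real.rpow_sub_one (by positivity)]
  field_simp
  ring

lemma hq_bound {N : ℕ} {r₀ k : ℝ} (h0 : 0 < r₀) (hk : 0 < k) : ∃ C > 0,
    ∀ r ∈ Ioo (r₀ / 2) (2 * r₀), ∀ y : Eu N, |hq N r y| ≤ C * Real.exp (k * ‖y‖ ^ 2) := by
  refine ⟨1 / (k * r₀ ^ 2) + N / r₀, by positivity, fun r hr y => ?_⟩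
  have hr0 : 0 < r := by have := hr.1; linarith
  unfold hq
  have h1 : ‖y‖ ^ 2 / (4 * r ^ 2) ≤ 1 / (k * r₀ ^ 2) * Real.exp (k * ‖y‖ ^ 2) := by
    have ha : ‖y‖ ^ 2 / (4 * r ^ 2) ≤ ‖y‖ ^ 2 / r₀ ^ 2 := by
      apply div_le_div_of_nonneg_left (by positivity) (by positivity)
      nlinarith [hr.1]
    have hb : k * ‖y‖ ^ 2 ≤ Real.exp (k * ‖y‖ ^ 2) := by
      linarith [Real.add_one_le_exp (k * ‖y‖ ^ 2)]
    calc _ ≤ ‖y‖ ^ 2 / r₀ ^ 2 := ha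
      _ = 1 / (k * r₀ ^ 2) * (k * ‖y‖ ^ 2) := by field_simp
      _ ≤ _ := by gcongr
  have h2 : (N : ℝ) / (2 * r) ≤ N / r₀ * Real.exp (k * ‖y‖ ^ 2) := by
    have ha : (N : ℝ) / (2 * r) ≤ N / r₀ := by
      apply div_le_div_of_nonneg_left (by positivity) (by positivity)
      linarith [hr.1]
    have hb : 1 ≤ Real.exp (k * ‖y‖ ^ 2) := Real.one_le_exp (by positivity)
    calc _ ≤ (N : ℝ) / r₀ * 1 := by rw [mul_one]; exact ha
      _ ≤ _ := by gcongr
  have h3 : 0 ≤ ‖y‖ ^ 2 / (4 * r ^ 2) := by positivity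
  have h4 : 0 ≤ (N : ℝ) / (2 * r) := by positivity
  rw [abs_le, add_mul]
  constructor <;> linarith [(by positivity : 0 ≤ 1 / (k * r₀ ^ 2) * Real.exp (k * ‖y‖ ^ 2)),
    (by positivity : 0 ≤ N / r₀ * Real.exp (k * ‖y‖ ^ 2))]

lemma hq_continuous {N : ℕ} (r : ℝ) : Continuous (hq N r) := by
  unfold hq; fun_prop

lemma flow_hasDerivAt {N : ℕ} {r₀ : ℝ} (h0 : 0 < r₀) (φ : Eu N → ℝ) (hφ : Continuous φ)
    (M : ℝ) (hM : ∀ y, |φ y| ≤ M) :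
    Integrable (fun y => hk N r₀ y * hq N r₀ y * φ y) ∧
    HasDerivAt (fun r => ∫ y, hk N r y * φ y) (∫ y, hk N r₀ y * hq N r₀ y * φ y) r₀ := by
  obtain ⟨C, hC, hCb⟩ := hk_bound (N := N) h0
  obtain ⟨D, hD, hDb⟩ := hq_bound (N := N) (k := 1 / (16 * r₀)) h0 (by positivity)
  refine hasDerivAt_integral_of_dominated_loc_of_deriv_le (s := Ioo (r₀ / 2) (2 * r₀))
    (F := fun r y => hk N r y * φ y) (F' := fun r y => hk N r y * hq N r y * φ y)
    (bound := fun y => C * D * M * Real.exp (-(1 / (16 * r₀)) * ‖y‖ ^ 2))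
    (Ioo_mem_nhds (by linarith) (by linarith)) ?_ ?_ ?_ ?_ ?_ ?_
  · exact Eventually.of_forall fun r => ((hk_continuous r).mul hφ).aestronglyMeasurable
  · exact (hk_integrable h0).mul_bdd (c := M) hφ.aestronglyMeasurable (Eventually.of_forall hM)
  · exact (((hk_continuous r₀).mul (hq_continuous r₀)).mul hφ).aestronglyMeasurable
  · refine Eventually.of_forall fun y r hr => ?_
    have hr0 : 0 < r := by have := hr.1; linarith
    rw [norm_mul, norm_mul, Real.norm_eq_abs, Real.norm_eq_abs, Real.norm_eq_abs,
      abs_of_pos (hk_pos hr0 y)]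
    calc hk N r y * |hq N r y| * |φ y|
        ≤ (C * Real.exp (-(1 / (8 * r₀)) * ‖y‖ ^ 2)) * (D * Real.exp (1 / (16 * r₀) * ‖y‖ ^ 2))
          * M := by
          have := hCb r hr y
          have := hDb r hr y
          have := hM y
          gcongr
      _ = C * D * M * (Real.exp (-(1 / (8 * r₀)) * ‖y‖ ^ 2) *
            Real.exp (1 / (16 * r₀) * ‖y‖ ^ 2)) := by ring
      _ = _ := by
          rw [← Real.exp_add]; congr 2; field_simp; ring
  · exact (integrable_gauss (by positivity)).const_mul _
  · refine Eventually.of_forall fun y r hr => ?_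
    have hr0 : 0 < r := by have := hr.1; linarith
    exact (hk_hasDerivAt hr0 y).mul_const _

lemma heatSG_pos {N : ℕ} {t : ℝ} (ht : 0 < t) (φ : Eu N → ℝ) (x : Eu N) :
    heatSG N t φ x = ∫ y, hk N t (x - y) * φ y := by
  unfold heatSG
  rw [if_neg (not_le.mpr ht)]
  rfl

lemma heat_abs_le {N : ℕ} {t : ℝ} (ht : 0 < t) (φ : Eu N → ℝ) (M : ℝ)
    (hM : ∀ y, |φ y| ≤ M) (x : Eu N) :
    |∫ y, hk N t (x - y) * φ y| ≤ M := by
  have : ‖∫ y, hk N t (x - y) * φ y‖ ≤ ∫ y, hk N t (x - y) * M := by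
    refine norm_integral_le_of_norm_le ((hk_sub_integrable ht x).mul_const M) ?_
    refine Eventually.of_forall fun y => ?_
    rw [norm_mul, Real.norm_eq_abs, Real.norm_eq_abs, abs_of_pos (hk_pos ht _)]
    have := hk_pos ht (x - y)
    have := hM y
    gcongr
  rwa [integral_mul_const, hk_sub_integral ht, one_mul] at this

lemma duhamel_s2 {N : ℕ} (U F : ℝ → Eu N → ℝ) (u₀ : Eu N → ℝ) (M₀ : ℝ)
    (hu₀ : Continuous u₀) (hM₀ : ∀ y, |u₀ y| ≤ M₀)
    (hF : Continuous (Function.uncurry F))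
    (B : ℝ → ℝ) (hB : Continuous B) (hFB : ∀ s y, |F s y| ≤ B s)
    (hU : ∀ t, 0 ≤ t → ∀ x, U t x = heatSG N t u₀ x + ∫ s in (0:ℝ)..t, heatSG N (t - s) (F s) x)
    {r t : ℝ} (hr : 0 < r) (ht : 0 ≤ t) :
    ∫ x, hk N r x * U t x = (∫ y, hk N (r + t) y * u₀ y)
      + ∫ s in (0:ℝ)..t, ∫ y, hk N (r + t - s) y * F s y := by
  rcases ht.eq_or_lt with rfl | ht
  · simp only [hU 0 le_rfl, heatSG, le_refl, if_true, intervalIntegral.integral_same, add_zero]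
  obtain ⟨M, hM⟩ : ∃ M, ∀ s ∈ Icc 0 t, ∀ y, |F s y| ≤ M := by
    obtain ⟨M, hM⟩ := (isCompact_Icc (a := (0:ℝ)) (b := t)).bddAbove_image hB.continuousOn
    exact ⟨M, fun s hs y => (hFB s y).trans (hM (mem_image_of_mem _ hs))⟩
  set Q : ℝ → Eu N → ℝ := fun s x => ∫ y, hk N (t - s) (x - y) * F s y with hQ
  have hQm : StronglyMeasurable (fun z : Eu N × ℝ => Q z.2 z.1) := by
    refine StronglyMeasurable.integral_prod_right
      (f := fun (z : Eu N × ℝ) (y : Eu N) => hk N (t - z.2) (z.1 - y) * F z.2 y) ?_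
    refine Measurable.stronglyMeasurable ?_
    refine Measurable.mul ?_ ?_
    · exact (hk_measurable N).comp
        (f := fun q : (Eu N × ℝ) × Eu N => (t - q.1.2, q.1.1 - q.2)) (by fun_prop)
    · exact hF.measurable.comp
        (f := fun q : (Eu N × ℝ) × Eu N => (q.1.2, q.2)) (by fun_prop)
  have hae : ∀ᵐ s ∂(volume.restrict (Ioc 0 t)), s ∈ Ioo 0 t := by
    rw [← restrict_Ioo_eq_restrict_Ioc]
    exact ae_restrict_mem measurableSet_Ioo
  have hUQ : ∀ x, U t x = (∫ y, hk N t (x - y) * u₀ y) + ∫ s in Ioc 0 t, Q s x := by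
    intro x
    rw [hU t ht.le x, heatSG_pos ht, intervalIntegral.integral_of_le ht.le]
    congr 1
    refine integral_congr_ae ?_
    filter_upwards [hae] with s hs
    rw [heatSG_pos (by linarith [hs.2])]
  have hint : Integrable (Function.uncurry (fun (x : Eu N) (s : ℝ) => hk N r x * Q s x))
      (volume.prod (volume.restrict (Ioc 0 t))) := by
    have h1 : Integrable (fun z : Eu N × ℝ => hk N r z.1 * M)
        (volume.prod (volume.restrict (Ioc 0 t))) :=
      Integrable.mul_prod (hk_integrable hr) (integrable_const M)
    refine h1.mono' ?_ ?_
    · exact ((((hk_continuous r).comp continuous_fst).stronglyMeasurable).mul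
        hQm).aestronglyMeasurable
    · have h2 : ∀ᵐ z : Eu N × ℝ ∂(volume.prod (volume.restrict (Ioc 0 t))), z.2 ∈ Ioo 0 t :=
        Measure.quasiMeasurePreserving_snd.ae hae
      filter_upwards [h2] with z hz
      simp only [Function.uncurry]
      rw [norm_mul, Real.norm_eq_abs, Real.norm_eq_abs, abs_of_pos (hk_pos hr _)]
      have := hk_pos hr z.1
      have := heat_abs_le (by linarith [hz.2]) (F z.2) M (hM z.2 ⟨hz.1.le, hz.2.le⟩) z.1
        (t := t - z.2)
      gcongr
  have hint1 : Integrable (fun x => hk N r x * ∫ y, hk N t (x - y) * u₀ y) := by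
    refine (hk_integrable hr).mul_bdd (c := M₀) ?_
      (Eventually.of_forall fun x => heat_abs_le ht u₀ M₀ hM₀ x)
    refine StronglyMeasurable.aestronglyMeasurable ?_
    refine StronglyMeasurable.integral_prod_right
      (f := fun (x : Eu N) (y : Eu N) => hk N t (x - y) * u₀ y) ?_
    have := hk_continuous (N := N) t
    exact (by fun_prop : Continuous (fun z : Eu N × Eu N => hk N t (z.1 - z.2) * u₀ z.2)).stronglyMeasurable
  have hint2 : Integrable (fun x => hk N r x * ∫ s in Ioc 0 t, Q s x) := by
    have := hint.integral_prod_left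
    simpa only [Function.uncurry, integral_const_mul] using this
  simp_rw [hUQ, mul_add]
  rw [integral_add hint1 hint2, hk_semigroup hr ht u₀ hu₀.measurable M₀ hM₀]
  congr 1
  rw [intervalIntegral.integral_of_le ht.le]
  calc ∫ x, hk N r x * ∫ s in Ioc 0 t, Q s x
      = ∫ x, ∫ s in Ioc 0 t, hk N r x * Q s x := by simp_rw [integral_const_mul]
    _ = ∫ s in Ioc 0 t, ∫ x, hk N r x * Q s x := integral_integral_swap hint
    _ = _ := by
      refine integral_congr_ae ?_
      filter_upwards [hae] with s hs
      have hFs : Continuous (F s) := hF.comp (Continuous.prodMk_right s)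
      have := hk_semigroup hr (by linarith [hs.2] : 0 < t - s) (F s) hFs.measurable (B s) (hFB s)
      rw [hQ, this, add_sub_assoc]

lemma bound_loc {N : ℕ} (F : ℝ → Eu N → ℝ) (B : ℝ → ℝ) (hB : Continuous B)
    (hFB : ∀ s y, |F s y| ≤ B s) (s₀ : ℝ) : ∃ M, ∀ᶠ s in nhds s₀, ∀ y, |F s y| ≤ M := by
  refine ⟨B s₀ + 1, ?_⟩
  filter_upwards [hB.continuousAt.eventually_lt_const (lt_add_one (B s₀))] with s hs y
  exact (hFB s y).trans hs.le

lemma flow_right_deriv {N : ℕ} (U F : ℝ → Eu N → ℝ) (u₀ : Eu N → ℝ) (M₀ : ℝ)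
    (hu₀ : Continuous u₀) (hM₀ : ∀ y, |u₀ y| ≤ M₀)
    (hF : Continuous (Function.uncurry F))
    (B : ℝ → ℝ) (hB : Continuous B) (hFB : ∀ s y, |F s y| ≤ B s)
    (hUc : ∀ t, Continuous (U t)) (A : ℝ → ℝ) (hUA : ∀ t y, |U t y| ≤ A t)
    (hU : ∀ t, 0 ≤ t → ∀ x, U t x = heatSG N t u₀ x + ∫ s in (0:ℝ)..t, heatSG N (t - s) (F s) x)
    {R t : ℝ} (hR : 0 < R) (ht : 0 ≤ t) :
    HasDerivWithinAt (fun t => ∫ x, hk N R x * U t x)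
      ((∫ x, hk N R x * hq N R x * U t x) + ∫ x, hk N R x * F t x) (Ici t) t := by
  set K : ℝ × ℝ → ℝ := fun z => ∫ y, hk N z.1 y * F z.2 y with hK
  have hKc : ∀ r s, 0 < r → ContinuousAt K (r, s) := fun r s hr =>
    hk_joint_continuousAt F hF (bound_loc F B hB hFB) hr s
  have hid : ∀ t' ∈ Ici t, ∫ x, hk N R x * U t' x =
      (∫ x, hk N (R + (t' - t)) x * U t x) + ∫ s in t..t', K (R + t' - s, s) := by
    intro t' ht'
    have ht' : t ≤ t' := ht'
    rw [duhamel_s2 U F u₀ M₀ hu₀ hM₀ hF B hB hFB hU hR (ht.trans ht'),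
      duhamel_s2 U F u₀ M₀ hu₀ hM₀ hF B hB hFB hU (by linarith : 0 < R + (t' - t)) ht]
    have e : R + (t' - t) + t = R + t' := by ring
    rw [e, add_assoc]
    congr 1
    have hii : ∀ a b, a ≤ t' → b ≤ t' →
        IntervalIntegrable (fun s => K (R + t' - s, s)) volume a b := by
      intro a b ha hb
      apply ContinuousOn.intervalIntegrable
      intro s hs
      have hs' : s ≤ t' := hs.2.trans (max_le ha hb)
      refine ContinuousAt.continuousWithinAt ?_
      exact ContinuousAt.comp (f := fun s => (R + t' - s, s)) (hKc _ _ (by linarith))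
        (by fun_prop)
    exact (intervalIntegral.integral_add_adjacent_intervals
      (hii 0 t (ht.trans ht') ht') (hii t t' ht' le_rfl)).symm
  have hd1 : HasDerivWithinAt (fun t' => ∫ x, hk N (R + (t' - t)) x * U t x)
      (∫ x, hk N R x * hq N R x * U t x) (Ici t) t := by
    have h := (flow_hasDerivAt hR (U t) (hUc t) (A t) (hUA t)).2
    have h2 : HasDerivAt (fun t' : ℝ => R + (t' - t)) 1 t :=
      ((hasDerivAt_id t).sub_const t).const_add R
    have h3 : R + (t - t) = R := by ring
    have h4 := HasDerivAt.comp (h := fun t' : ℝ => R + (t' - t)) t (by rw [h3]; exact h) h2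
    rw [mul_one] at h4
    exact h4.hasDerivWithinAt
  have hd2 : HasDerivWithinAt (fun t' => ∫ s in t..t', K (R + t' - s, s)) (K (R, t)) (Ici t) t := by
    rw [hasDerivWithinAt_iff_isLittleO, Asymptotics.isLittleO_iff]
    intro ε hε
    obtain ⟨δ, hδ, hδb⟩ := Metric.continuousAt_iff.mp (hKc R t hR) ε hε
    have hnb : Ico t (t + δ) ∈ nhdsWithin t (Ici t) := Ico_mem_nhdsGE (by linarith)
    filter_upwards [hnb] with t' ht'
    rw [intervalIntegral.integral_same, sub_zero]
    have hii : IntervalIntegrable (fun s => K (R + t' - s, s)) volume t t' := by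
      apply ContinuousOn.intervalIntegrable
      intro s hs
      rw [uIcc_of_le ht'.1] at hs
      refine ContinuousAt.continuousWithinAt ?_
      exact ContinuousAt.comp (f := fun s => (R + t' - s, s)) (hKc _ _ (by linarith [hs.2]))
        (by fun_prop)
    have e : (∫ s in t..t', K (R + t' - s, s)) - (t' - t) • K (R, t) =
        ∫ s in t..t', (K (R + t' - s, s) - K (R, t)) := by
      rw [intervalIntegral.integral_sub hii intervalIntegrable_const,
        intervalIntegral.integral_const]
    rw [e]
    refine intervalIntegral.norm_integral_le_of_norm_le_const fun s hs => ?_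
    rw [uIoc_of_le ht'.1] at hs
    rw [← dist_eq_norm]
    refine (hδb ?_).le
    rw [Prod.dist_eq, max_lt_iff, Real.dist_eq, Real.dist_eq, abs_lt, abs_lt]
    have := ht'.2
    have := hs.1
    have := hs.2
    refine ⟨⟨?_, ?_⟩, ?_, ?_⟩ <;> simp only <;> linarith
  have := (hd1.add hd2)
  refine this.congr (fun t' ht' => hid t' ht') (hid t self_mem_Ici)

lemma flow_continuous {N : ℕ} (U : ℝ → Eu N → ℝ) (hU : Continuous (Function.uncurry U))
    (A : ℝ → ℝ) (hA : Continuous A) (hUA : ∀ t y, |U t y| ≤ A t) {R : ℝ} (hR : 0 < R) :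
    Continuous (fun t => ∫ x, hk N R x * U t x) := by
  rw [continuous_iff_continuousAt]
  intro t
  exact ContinuousAt.comp (f := fun t => (R, t))
    (hk_joint_continuousAt U hU (bound_loc U A hA hUA) hR t) (by fun_prop)

/-- Lower bound for the right derivative. -/
lemma deriv_lower {N : ℕ} {p p' : ℝ} (hpp : p.HolderConjugate p') {R : ℝ} (hR : 0 < R)
    (v w : Eu N → ℝ) (hv : Continuous v) (hw : Continuous w) (A D : ℝ)
    (hA : ∀ y, |v y| ≤ A) (hD : ∀ y, |w y| ≤ D) (τ : ℝ) :
    (1 - 1 / p) * |∫ x, hk N R x * v x| ^ p + τ * (∫ x, hk N R x * w x)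
      - (∫ x, hk N R x * |hq N R x| ^ p') / p' ≤
    (∫ x, hk N R x * hq N R x * v x) + ∫ x, hk N R x * (|v x| ^ p + τ * w x) := by
  have hp1 : 1 < p := hpp.lt
  have hp0 : 0 < p := hpp.pos
  have hp'0 : 0 < p' := hpp.symm.pos
  have hkR := hk_integrable (N := N) hR
  have hvp : Continuous (fun x => |v x| ^ p) := hv.abs.rpow_const (fun _ => Or.inr hp0.le)
  have i1 : Integrable (fun x => hk N R x * |v x|) :=
    hkR.mul_bdd (c := A) hv.abs.aestronglyMeasurable
      (Eventually.of_forall fun x => by simpa using hA x)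
  have i2 : Integrable (fun x => hk N R x * |v x| ^ p) := by
    refine hkR.mul_bdd (c := A ^ p) hvp.aestronglyMeasurable
      (Eventually.of_forall fun x => ?_)
    rw [Real.norm_eq_abs, abs_of_nonneg (by positivity)]
    exact Real.rpow_le_rpow (abs_nonneg _) (hA x) hp0.le
  have i3 : Integrable (fun x => hk N R x * w x) :=
    hkR.mul_bdd (c := D) hw.aestronglyMeasurable (Eventually.of_forall fun x => hD x)
  have i4 := (flow_hasDerivAt hR v hv A hA).1
  have i5 : Integrable (fun x => hk N R x * |hq N R x| ^ p') := by
    obtain ⟨C, hC, hCb⟩ := hq_bound (N := N) (r₀ := R) (k := 1 / (8 * R * p')) hR (by positivity)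
    have hqp : Continuous (fun x => |hq N R x| ^ p') :=
      (hq_continuous R).abs.rpow_const (fun _ => Or.inr hp'0.le)
    refine ((integrable_gauss (N := N) (b := 1 / (8 * R)) (by positivity)).const_mul
      ((4 * Real.pi * R) ^ (-(N : ℝ) / 2) * C ^ p')).mono'
      ((hk_continuous R).mul hqp).aestronglyMeasurable (Eventually.of_forall fun x => ?_)
    have hkp := hk_pos hR x
    rw [Real.norm_eq_abs, abs_of_nonneg (by positivity)]
    have h1 := Real.rpow_le_rpow (abs_nonneg _)
      (hCb R ⟨by linarith, by linarith⟩ x) hp'0.le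
    rw [Real.mul_rpow hC.le (Real.exp_nonneg _), ← Real.exp_mul] at h1
    calc hk N R x * |hq N R x| ^ p'
        ≤ hk N R x * (C ^ p' * Real.exp (1 / (8 * R * p') * ‖x‖ ^ 2 * p')) := by gcongr
      _ = (4 * Real.pi * R) ^ (-(N : ℝ) / 2) * C ^ p' * (Real.exp (-(1 / (4 * R)) * ‖x‖ ^ 2) *
          Real.exp (1 / (8 * R * p') * ‖x‖ ^ 2 * p')) := by rw [hk_eq]; ring
      _ = _ := by
        rw [← Real.exp_add]; congr 2; field_simp; ring
  -- Jensen
  have hJ : |∫ x, hk N R x * v x| ^ p ≤ ∫ x, hk N R x * |v x| ^ p := by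
    set m := |∫ x, hk N R x * v x| with hm
    have hm0 : 0 ≤ m := abs_nonneg _
    have h1 : m ≤ ∫ x, hk N R x * |v x| := by
      rw [hm, ← Real.norm_eq_abs]
      refine (norm_integral_le_integral_norm _).trans (le_of_eq ?_)
      congr 1; ext x
      rw [norm_mul, Real.norm_eq_abs, Real.norm_eq_abs, abs_of_pos (hk_pos hR x)]
    have hmm : (m ^ (p - 1)) ^ p' = m ^ p := by
      rw [← Real.rpow_mul hm0, hpp.sub_one_mul_conj]
    have hmp : m ^ (p - 1) * m = m ^ p := by
      rw [← Real.rpow_add_one' hm0 (by linarith)]; congr 1; ring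
    have h2 : ∫ x, hk N R x * |v x| * m ^ (p - 1) ≤
        ∫ x, (hk N R x * |v x| ^ p * (1 / p) + hk N R x * (m ^ p / p')) := by
      refine integral_mono (i1.mul_const _) ((i2.mul_const _).add (hkR.mul_const _)) fun x => ?_
      have hy := Real.young_inequality_of_nonneg (abs_nonneg (v x))
        (Real.rpow_nonneg hm0 (p - 1)) hpp
      rw [hmm] at hy
      have := mul_le_mul_of_nonneg_left hy (hk_pos hR x).le
      simp only
      linear_combination this
    rw [integral_mul_const, integral_add (i2.mul_const _) (hkR.mul_const _), integral_mul_const,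
      integral_mul_const, hk_integral hR, one_mul] at h2
    have h3 : m ^ p ≤ (∫ x, hk N R x * |v x|) * m ^ (p - 1) := by
      rw [← hmp, mul_comm]; gcongr
    have h4 : m ^ p / p' = m ^ p - m ^ p * (1 / p) := by
      have := hpp.inv_add_inv_eq_one
      rw [div_eq_mul_inv, one_div]
      linear_combination m ^ p * this
    rw [h4] at h2
    have h5 : m ^ p * (1 / p) ≤ (∫ x, hk N R x * |v x| ^ p) * (1 / p) := by linarith
    exact le_of_mul_le_mul_right h5 (by positivity)
  -- Young
  have hY : - (∫ x, hk N R x * |v x| ^ p) * (1 / p) - (∫ x, hk N R x * |hq N R x| ^ p') * (1 / p')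
      ≤ ∫ x, hk N R x * hq N R x * v x := by
    have h2 : ∫ x, (hk N R x * |v x| ^ p * (-(1 / p)) + hk N R x * |hq N R x| ^ p' * (-(1 / p')))
        ≤ ∫ x, hk N R x * hq N R x * v x := by
      refine integral_mono ((i2.mul_const _).add (i5.mul_const _)) i4 fun x => ?_
      have hy := Real.young_inequality_of_nonneg (abs_nonneg (v x)) (abs_nonneg (hq N R x)) hpp
      have h3 : -(|v x| * |hq N R x|) ≤ hq N R x * v x := by
        rw [← abs_mul, mul_comm]; exact neg_abs_le _
      have h4 : -(|v x| ^ p / p + |hq N R x| ^ p' / p') ≤ hq N R x * v x := by linarith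
      have := mul_le_mul_of_nonneg_left h4 (hk_pos hR x).le
      simp only
      linear_combination this
    rw [integral_add (i2.mul_const _) (i5.mul_const _), integral_mul_const,
      integral_mul_const] at h2
    linarith
  have hs : ∫ x, hk N R x * (|v x| ^ p + τ * w x) =
      (∫ x, hk N R x * |v x| ^ p) + τ * ∫ x, hk N R x * w x := by
    rw [← integral_const_mul, ← integral_add i2 (i3.const_mul τ)]
    congr 1; ext x; ring
  rw [hs]
  have hpos : 0 ≤ 1 - 1 / p := by
    have : 1 / p ≤ 1 := by rw [div_le_one hp0]; exact hp1.le
    linarith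
  have := mul_le_mul_of_nonneg_left hJ hpos
  rw [div_eq_mul_one_div _ p']
  linarith

lemma exists_R {N : ℕ} (w : Eu N → ℝ) (hwI : Integrable w) (hwpos : 0 < ∫ x, w x) :
    ∃ R > 0, 0 < ∫ x, hk N R x * w x := by
  have ht : Tendsto (fun R : ℝ => ∫ x : Eu N, Real.exp (-‖x‖ ^ 2 / (4 * R)) * w x) atTop
      (nhds (∫ x, w x)) := by
    refine tendsto_integral_filter_of_dominated_convergence (fun x => ‖w x‖) ?_ ?_ hwI.norm ?_
    · refine Eventually.of_forall fun R => ?_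
      have : Continuous (fun x : Eu N => Real.exp (-‖x‖ ^ 2 / (4 * R))) := by fun_prop
      exact this.aestronglyMeasurable.mul hwI.aestronglyMeasurable
    · filter_upwards [eventually_gt_atTop 0] with R hR
      refine Eventually.of_forall fun x => ?_
      rw [norm_mul, Real.norm_eq_abs, Real.abs_exp]
      have : Real.exp (-‖x‖ ^ 2 / (4 * R)) ≤ 1 := by
        rw [Real.exp_le_one_iff, neg_div, neg_nonpos]; positivity
      exact mul_le_of_le_one_left (norm_nonneg _) this
    · refine Eventually.of_forall fun x => ?_
      have h1 : Tendsto (fun R : ℝ => -‖x‖ ^ 2 / (4 * R)) atTop (nhds 0) :=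
        Tendsto.div_atTop tendsto_const_nhds (tendsto_id.const_mul_atTop (by norm_num))
      have h2 := (Real.continuous_exp.tendsto 0).comp h1
      simpa using h2.mul_const (w x)
  obtain ⟨R, h1, h2⟩ := ((ht.eventually (lt_mem_nhds hwpos)).and (eventually_gt_atTop 0)).exists
  refine ⟨R, h2, ?_⟩
  unfold hk
  simp_rw [mul_assoc _ (Real.exp _)]
  rw [integral_const_mul]
  positivity

lemma ode_blowup (g g' : ℝ → ℝ) (hg : Continuous g)
    (hd : ∀ t, 0 ≤ t → HasDerivWithinAt g (g' t) (Ici t) t)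
    {θ p c C σ : ℝ} (hθ : 0 < θ) (hp : 1 < p) (hc : 0 < c) (hσ : 0 < σ)
    (hlow : ∀ t, 0 ≤ t → θ * |g t| ^ p + t ^ σ * c - C ≤ g' t) : False := by
  have hev : ∀ᶠ t : ℝ in atTop, (C + 1) / c ≤ t ^ σ :=
    (tendsto_rpow_atTop hσ).eventually_ge_atTop _
  obtain ⟨t₁, ht₁⟩ := eventually_atTop.mp (hev.and (eventually_ge_atTop 0))
  have ht₁0 : 0 ≤ t₁ := (ht₁ t₁ le_rfl).2
  have hlow1 : ∀ t, t₁ ≤ t → θ * |g t| ^ p + 1 ≤ g' t := by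
    intro t ht
    have h1 := (ht₁ t ht).1
    rw [div_le_iff₀ hc] at h1
    have := hlow t (ht₁0.trans ht)
    linarith
  -- linear growth
  have hlin : ∀ t, t₁ ≤ t → g t₁ + (t - t₁) / 2 ≤ g t := by
    intro t ht
    have h := image_le_of_deriv_right_lt_deriv_boundary' (f := fun s => -g s)
      (f' := fun s => -g' s) (a := t₁) (b := t) hg.neg.continuousOn
      (fun s hs => (hd s (ht₁0.trans hs.1)).neg)
      (B := fun s => -(g t₁ + (s - t₁) / 2)) (B' := fun _ => -(1 / 2)) (by simp)
      (by fun_prop)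
      (fun s hs => by
        have := (((hasDerivAt_id s).sub_const t₁).div_const 2).const_add (g t₁)
        exact this.neg.hasDerivWithinAt)
      (fun s hs _ => by
        have := hlow1 s hs.1
        have : 0 ≤ θ * |g s| ^ p := by positivity
        linarith) (right_mem_Icc.mpr ht)
    linarith
  obtain ⟨t₂, ht₂, hg2⟩ : ∃ t₂, t₁ ≤ t₂ ∧ 1 ≤ g t₂ := by
    refine ⟨t₁ + 2 * (|g t₁| + 1), by linarith [abs_nonneg (g t₁)], ?_⟩
    have := hlin (t₁ + 2 * (|g t₁| + 1)) (by linarith [abs_nonneg (g t₁)])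
    linarith [neg_abs_le (g t₁)]
  set k := θ * (p - 1) with hk
  have hp1 : 0 < p - 1 := by linarith
  have hk0 : 0 < k := by positivity
  obtain ⟨M, hM⟩ := (isCompact_Icc (a := t₂) (b := t₂ + 1 / k)).bddAbove_image hg.continuousOn
  set L := |M| + 2 with hL
  have hL1 : 1 < L := by have := abs_nonneg M; linarith
  set z := L ^ (-(p - 1)) with hz
  have hz0 : 0 < z := by positivity
  have hz1 : z < 1 := Real.rpow_lt_one_of_one_lt_of_neg hL1 (by linarith)
  set b := t₂ + (1 - z) / k with hb
  have hbt : t₂ ≤ b := by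
    have : 0 ≤ (1 - z) / k := div_nonneg (by linarith) hk0.le
    linarith
  have hbt' : b ≤ t₂ + 1 / k := by
    rw [hb]; gcongr; linarith
  have hpos : ∀ s ∈ Icc t₂ b, 0 < 1 - k * (s - t₂) := by
    intro s hs
    have : k * (s - t₂) ≤ k * (b - t₂) := by
      have := hs.2; gcongr
    have e : k * (b - t₂) = 1 - z := by rw [hb]; field_simp; ring
    linarith
  have hder : ∀ s ∈ Icc t₂ b, HasDerivAt (fun s => (1 - k * (s - t₂)) ^ (-(1 / (p - 1))))
      (θ * ((1 - k * (s - t₂)) ^ (-(1 / (p - 1)))) ^ p) s := by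
    intro s hs
    have h0 := hpos s hs
    have h1 : HasDerivAt (fun s => 1 - k * (s - t₂)) (-(k * 1)) s :=
      (((hasDerivAt_id s).sub_const t₂).const_mul k).const_sub 1
    have h2 := h1.rpow_const (p := -(1 / (p - 1))) (Or.inl h0.ne')
    refine h2.congr_deriv ?_
    rw [← Real.rpow_mul h0.le, show -(1 / (p - 1)) * p = -(1 / (p - 1)) - 1 by field_simp; ring]
    rw [hk]; field_simp
  have h := image_le_of_deriv_right_lt_deriv_boundary' (f := fun s => -g s)
      (f' := fun s => -g' s) (a := t₂) (b := b) hg.neg.continuousOn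
      (fun s hs => (hd s (ht₁0.trans (ht₂.trans hs.1))).neg)
      (B := fun s => -((1 - k * (s - t₂)) ^ (-(1 / (p - 1)))))
      (B' := fun s => -(θ * ((1 - k * (s - t₂)) ^ (-(1 / (p - 1)))) ^ p))
      (by simpa using hg2)
      (fun s hs => (hder s hs).neg.continuousAt.continuousWithinAt)
      (fun s hs => (hder s ⟨hs.1, hs.2.le⟩).neg.hasDerivWithinAt)
      (fun s hs he => by
        have h1 := hlow1 s (ht₂.trans hs.1)
        have h0 := hpos s ⟨hs.1, hs.2.le⟩
        have he' : g s = (1 - k * (s - t₂)) ^ (-(1 / (p - 1))) := neg_injective he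
        rw [← he']
        rw [abs_of_pos (by rw [he']; positivity)] at h1
        linarith) (right_mem_Icc.mpr hbt)
  have e : 1 - k * (b - t₂) = z := by rw [hb]; field_simp; ring
  rw [e, hz, ← Real.rpow_mul (by linarith),
    show -(p - 1) * -(1 / (p - 1)) = 1 by field_simp, Real.rpow_one] at h
  have h6 : g b ≤ M := hM (mem_image_of_mem _ ⟨hbt, hbt'⟩)
  have := le_abs_self M
  linarith

lemma c0_abs_le {N : ℕ} (φ : C₀(Eu N, ℝ)) (y : Eu N) : |φ y| ≤ ‖φ‖ := by
  have := φ.toBCF.norm_coe_le_norm y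
  rwa [ZeroAtInftyContinuousMap.norm_toBCF_eq_norm] at this

lemma isC0_bound {N : ℕ} {φ : Eu N → ℝ} (h : IsC0 φ) : ∃ M, ∀ y, |φ y| ≤ M :=
  ⟨_, fun y => c0_abs_le ⟨⟨φ, h.1⟩, h.2⟩ y⟩

/-- Blow-up for every p > 1 when σ > 0: no global mild solution. -/
theorem blowup_pos_sigma
    (N : ℕ) (hN : 2 ≤ N) (σ p α : ℝ)
    (hσ : 0 < σ) (hp1 : 1 < p)
    (hα : α ∈ Set.Ioo (0 : ℝ) 1)
    (w : Eu N → ℝ) (hwH : IsHolder α w) (hwC : IsC0 w) (hwI : Integrable w)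
    (hwpos : 0 < ∫ x, w x)
    (u₀ : Eu N → ℝ) (hu₀ : IsC0 u₀) :
    ¬ ∃ u : ℝ → C₀(Eu N, ℝ), IsGlobalMildSolution N p σ u₀ w u := by
  rintro ⟨u, huc, hu⟩
  obtain ⟨M₀, hM₀⟩ := isC0_bound hu₀
  obtain ⟨D, hD⟩ := isC0_bound hwC
  obtain ⟨R, hR, hRw⟩ := exists_R w hwI hwpos
  have hp0 : 0 < p := by linarith
  have hpp := Real.HolderConjugate.conjExponent hp1
  set V : ℝ → C₀(Eu N, ℝ) := fun s => u (max s 0) with hV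
  have hVc : Continuous V :=
    huc.comp_continuous (f := fun s : ℝ => max s 0) (by fun_prop) (fun s => mem_Ici.mpr (le_max_right _ _))
  set U : ℝ → Eu N → ℝ := fun s y => V s y with hUdef
  have hUcont : Continuous (Function.uncurry U) := by
    have h1 : Continuous (fun z : ℝ × Eu N => (V z.1).toBCF z.2) := by
      have h2 : Continuous (fun s => (V s).toBCF) :=
        ZeroAtInftyContinuousMap.isometry_toBCF.continuous.comp hVc
      exact continuous_eval.comp ((h2.comp continuous_fst).prodMk continuous_snd)
    exact h1
  have hUA : ∀ t y, |U t y| ≤ ‖V t‖ := fun t y => c0_abs_le _ _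
  set F : ℝ → Eu N → ℝ := fun s y => |U s y| ^ p + (max s 0) ^ σ * w y with hFdef
  have hms : Continuous (fun s : ℝ => (max s 0) ^ σ) :=
    (by fun_prop : Continuous fun s : ℝ => max s 0).rpow_const (fun _ => Or.inr hσ.le)
  have hFc : Continuous (Function.uncurry F) := by
    refine Continuous.add ?_ ?_
    · exact hUcont.abs.rpow_const (fun _ => Or.inr hp0.le)
    · exact (hms.comp continuous_fst).mul (hwC.1.comp continuous_snd)
  set B : ℝ → ℝ := fun s => ‖V s‖ ^ p + (max s 0) ^ σ * D with hBdef
  have hBc : Continuous B :=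
    (hVc.norm.rpow_const (fun _ => Or.inr hp0.le)).add (hms.mul continuous_const)
  have hFB : ∀ s y, |F s y| ≤ B s := by
    intro s y
    have hm : 0 ≤ (max s 0) ^ σ := Real.rpow_nonneg (le_max_right _ _) _
    refine (abs_add_le _ _).trans ?_
    rw [abs_mul, abs_of_nonneg hm, abs_of_nonneg (Real.rpow_nonneg (abs_nonneg _) _)]
    have h1 := Real.rpow_le_rpow (abs_nonneg _) (hUA s y) hp0.le
    have h2 := mul_le_mul_of_nonneg_left (hD y) hm
    exact add_le_add h1 h2
  have hU : ∀ t, 0 ≤ t → ∀ x, U t x = heatSG N t u₀ x +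
      ∫ s in (0:ℝ)..t, heatSG N (t - s) (F s) x := by
    intro t ht x
    have h1 : U t x = u t x := by simp only [hUdef, hV, max_eq_left ht]
    rw [h1, hu t ht x]
    congr 1
    refine intervalIntegral.integral_congr fun s hs => ?_
    rw [uIcc_of_le ht] at hs
    simp only [hFdef, hUdef, hV, max_eq_left hs.1]
  have hUt : ∀ t, Continuous (U t) := fun t => (V t).continuous
  refine ode_blowup (fun t => ∫ x, hk N R x * U t x)
    (fun t => (∫ x, hk N R x * hq N R x * U t x) + ∫ x, hk N R x * F t x)
    (flow_continuous U hUcont (fun t => ‖V t‖) hVc.norm hUA hR)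
    (fun t ht => flow_right_deriv U F u₀ M₀ hu₀.1 hM₀ hFc B hBc hFB hUt (fun t => ‖V t‖) hUA hU
      hR ht)
    (θ := 1 - 1 / p) (p := p) (c := ∫ x, hk N R x * w x)
    (C := (∫ x, hk N R x * |hq N R x| ^ p.conjExponent) / p.conjExponent) (σ := σ)
    ?_ hp1 hRw hσ ?_
  · have : 1 / p < 1 := by rw [div_lt_one hp0]; exact hp1
    linarith
  · intro t ht
    have := deriv_lower hpp hR (U t) w (hUt t) hwC.1 ‖V t‖ D (hUA t) hD (t ^ σ)
    simpa only [hFdef, max_eq_left ht] using this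

end
end

section
/- Let N ≥ 1, p > 1, σ > −1, and let w ∈ L¹(ℝ^N) satisfy ∫_{ℝ^N} w(x) dx > 0. With cutoff functions ξ, η and φ_T as in the context, there exist constants C > 0 and T₀ > 0 such that for every T ≥ T₀, ∫_0^T ∫_{ℝ^N} t^σ w(x) φ_T(t,x) dx dt ≥ C T^{σ+1} ∫_{ℝ^N} w(x) dx. -/
open MeasureTheory Filter Set
open scoped ENNReal NNReal

noncomputable section

/-- Lower bound for the forcing term tested against the rescaled test function
φ_T(t,x) = η(t/T)^{p/(p−1)} ξ(|x|²/T)^{2p/(p−1)}: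
∫₀ᵀ∫ t^σ w(x) φ_T(t,x) dx dt ≥ C T^{σ+1} ∫ w for large T. -/
theorem forcing_test_function_lower_bound
    (N : ℕ) (hN : 1 ≤ N) (p σ : ℝ) (hp1 : 1 < p) (hσ : -1 < σ)
    (ξ : ℝ → ℝ) (hξsm : ContDiffOn ℝ (⊤ : ℕ∞) ξ (Set.Ici 0))
    (hξ01 : ∀ s ∈ Set.Ici (0 : ℝ), ξ s ∈ Set.Icc (0 : ℝ) 1)
    (hξ1 : ∀ s ∈ Set.Icc (0 : ℝ) 1, ξ s = 1)
    (hξ0 : ∀ s ∈ Set.Ici (2 : ℝ), ξ s = 0)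
    (η : ℝ → ℝ) (hηsm : ContDiffOn ℝ (⊤ : ℕ∞) η (Set.Ici 0))
    (hηpos : ∀ s, 0 ≤ η s) (hηne : ∃ s, η s ≠ 0)
    (hηsupp : Function.support η ⊆ Set.Ioo 0 1)
    (w : Eu N → ℝ) (hwI : Integrable w) (hwpos : 0 < ∫ x, w x) :
    ∃ C > (0 : ℝ), ∃ T₀ > (0 : ℝ), ∀ T : ℝ, T₀ ≤ T →
      C * T ^ (σ + 1) * ∫ x, w x ≤
        ∫ t in (0 : ℝ)..T, ∫ x : Eu N,
          t ^ σ * w x * (η (t / T) ^ (p / (p - 1)) * ξ (‖x‖ ^ 2 / T) ^ (2 * p / (p - 1))) := by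
  have hp : 0 < p - 1 := by linarith
  have hq : 0 < p / (p - 1) := by positivity
  have hr : 0 < 2 * p / (p - 1) := by positivity
  set q := p / (p - 1) with hqdef
  set r := 2 * p / (p - 1) with hrdef
  have hξc : ContinuousOn ξ (Set.Ici 0) := hξsm.continuousOn
  have hηc : ContinuousOn η (Set.Ici 0) := hηsm.continuousOn
  -- time integral
  have hint : IntervalIntegrable (fun s : ℝ => s ^ σ * η s ^ q) volume 0 1 := by
    refine (intervalIntegral.intervalIntegrable_rpow' hσ).mul_continuousOn ?_
    refine ContinuousOn.rpow_const (hηc.mono ?_) (fun x _ => Or.inr hq.le)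
    intro x hx
    rw [Set.uIcc_of_le zero_le_one] at hx
    exact hx.1
  have hA : 0 < ∫ s in (0 : ℝ)..1, s ^ σ * η s ^ q := by
    rw [intervalIntegral.integral_of_le zero_le_one,
      setIntegral_pos_iff_support_of_nonneg_ae]
    · have hopen : IsOpen (Set.Ioo (0 : ℝ) 1 ∩ η ⁻¹' {0}ᶜ) :=
        (hηc.mono (fun x hx => hx.1.le)).isOpen_inter_preimage isOpen_Ioo
          isOpen_compl_singleton
      obtain ⟨s, hs⟩ := hηne
      have hne : (Set.Ioo (0 : ℝ) 1 ∩ η ⁻¹' {0}ᶜ).Nonempty := ⟨s, hηsupp hs, hs⟩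
      refine (hopen.measure_pos volume hne).trans_le (measure_mono ?_)
      rintro x ⟨hx, hx0⟩
      refine ⟨?_, hx.1, hx.2.le⟩
      have h1 : 0 < η x := lt_of_le_of_ne (hηpos x) (Ne.symm hx0)
      have h2 : 0 < x := hx.1
      exact (mul_pos (Real.rpow_pos_of_pos h2 _) (Real.rpow_pos_of_pos h1 _)).ne'
    · refine (ae_restrict_iff' measurableSet_Ioc).2 (Eventually.of_forall fun x hx => ?_)
      exact mul_nonneg (Real.rpow_nonneg hx.1.le _) (Real.rpow_nonneg (hηpos x) _)
    · exact (intervalIntegrable_iff_integrableOn_Ioc_of_le zero_le_one).1 hint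
  -- space integral
  have hlim : Tendsto (fun T : ℝ => ∫ x : Eu N, w x * ξ (‖x‖ ^ 2 / T) ^ r) atTop
      (nhds (∫ x, w x)) := by
    refine tendsto_integral_filter_of_dominated_convergence (fun x => ‖w x‖) ?_ ?_ hwI.norm ?_
    · filter_upwards [eventually_gt_atTop 0] with T hT
      refine hwI.aestronglyMeasurable.mul (Continuous.aestronglyMeasurable ?_)
      refine Continuous.rpow_const ?_ (fun x => Or.inr hr.le)
      refine hξc.comp_continuous (by fun_prop) (fun x => ?_)
      exact Set.mem_Ici.2 (by positivity)
    · filter_upwards [eventually_gt_atTop 0] with T hT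
      refine Eventually.of_forall fun x => ?_
      obtain ⟨h0, h1⟩ := hξ01 (‖x‖ ^ 2 / T) (Set.mem_Ici.2 (by positivity))
      rw [norm_mul, Real.norm_of_nonneg (Real.rpow_nonneg h0 r)]
      exact mul_le_of_le_one_right (norm_nonneg _) (Real.rpow_le_one h0 h1 hr.le)
    · refine Eventually.of_forall fun x => ?_
      refine tendsto_const_nhds.congr' ?_
      filter_upwards [eventually_gt_atTop 0, eventually_ge_atTop (‖x‖ ^ 2)] with T hT hx
      rw [hξ1 _ ⟨by positivity, (div_le_one hT).2 hx⟩, Real.one_rpow, mul_one]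
  have hev := hlim.eventually_const_le (half_lt_self hwpos)
  obtain ⟨T₁, hT₁⟩ := eventually_atTop.1 hev
  refine ⟨(∫ s in (0 : ℝ)..1, s ^ σ * η s ^ q) / 2, by positivity, max T₁ 1, by positivity, ?_⟩
  intro T hT
  have hT0 : 0 < T := lt_of_lt_of_le one_pos ((le_max_right _ _).trans hT)
  have hJ := hT₁ T ((le_max_left _ _).trans hT)
  have hinner : ∀ t : ℝ, (∫ x : Eu N, t ^ σ * w x * (η (t / T) ^ q * ξ (‖x‖ ^ 2 / T) ^ r))
      = (t ^ σ * η (t / T) ^ q) * ∫ x : Eu N, w x * ξ (‖x‖ ^ 2 / T) ^ r := by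
    intro t
    rw [← integral_const_mul]
    congr 1
    ext x
    ring
  have htime : (∫ t in (0 : ℝ)..T, t ^ σ * η (t / T) ^ q)
      = T ^ (σ + 1) * ∫ s in (0 : ℝ)..1, s ^ σ * η s ^ q := by
    have h1 : (∫ t in (0 : ℝ)..T, t ^ σ * η (t / T) ^ q)
        = ∫ t in (0 : ℝ)..T, T ^ σ * ((t / T) ^ σ * η (t / T) ^ q) := by
      refine intervalIntegral.integral_congr fun t ht => ?_
      rw [Set.uIcc_of_le hT0.le] at ht
      have : t ^ σ = T ^ σ * (t / T) ^ σ := by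
        rw [← Real.mul_rpow hT0.le (div_nonneg ht.1 hT0.le), mul_div_cancel₀ _ hT0.ne']
      simp only [this]
      ring
    rw [h1, intervalIntegral.integral_const_mul,
      intervalIntegral.integral_comp_div (fun s => s ^ σ * η s ^ q) hT0.ne', zero_div,
      div_self hT0.ne', smul_eq_mul, Real.rpow_add hT0, Real.rpow_one]
    ring
  simp only [hinner]
  rw [intervalIntegral.integral_mul_const, htime]
  have hTp : 0 < T ^ (σ + 1) := Real.rpow_pos_of_pos hT0 _
  have := mul_le_mul_of_nonneg_left hJ (mul_pos hTp hA).le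
  linarith

end
end

section
/- Let N ≥ 1 and p > 1, and let ξ, η, η_T, μ_T, φ_T be as in the context. There exists a constant C > 0, depending only on N, p, ξ and η, such that for every T > 0, ∫_0^T ∫_{ℝ^N} φ_T(t,x)^{−1/(p−1)} |Δ_x φ_T(t,x)|^{p/(p−1)} dx dt ≤ C T^{1 + N/2 − p/(p−1)}, where the integrand is interpreted as 0 at points where φ_T vanishes. -/
open MeasureTheory Filter Set
open scoped ENNReal NNReal

noncomputable section

/-- The Laplacian of a function on ℝ^N, as the sum of second derivatives in the
coordinate directions. -/
noncomputable def lap {N : ℕ} (f : Eu N → ℝ) (x : Eu N) : ℝ :=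
  ∑ i : Fin N, iteratedFDeriv ℝ 2 f x (fun _ : Fin 2 => EuclideanSpace.single i (1 : ℝ))

theorem aux_lap {N : ℕ} (c T : ℝ) (F F' : ℝ → ℝ) (F2 : ℝ) (x : Eu N)
    (h1 : ∀ᶠ u in nhds (‖x‖ ^ 2 / T), HasDerivAt F (F' u) u)
    (h2 : HasDerivAt F' F2 (‖x‖ ^ 2 / T)) :
    lap (fun y : Eu N => c * F (‖y‖ ^ 2 / T)) x =
      c * (4 * (‖x‖ ^ 2 / T) * F2 + 2 * N * F' (‖x‖ ^ 2 / T)) / T := by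
  have hn : ∀ y : Eu N, HasFDerivAt (fun y : Eu N => ‖y‖ ^ 2 / T)
      ((2 / T) • innerSL ℝ y) y := by
    intro y
    have h := ((hasStrictFDerivAt_norm_sq y).hasFDerivAt).mul_const (1 / T)
    refine (h.congr_fderiv ?_).congr_of_eventuallyEq ?_
    · ext v; simp; ring
    · exact Eventually.of_forall fun z => by simp [div_eq_mul_inv]
  have hc : ContinuousAt (fun y : Eu N => ‖y‖ ^ 2 / T) x := (hn x).continuousAt
  have hev : fderiv ℝ (fun y : Eu N => c * F (‖y‖ ^ 2 / T)) =ᶠ[nhds x]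
      fun y => (c * F' (‖y‖ ^ 2 / T) * (2 / T)) • innerSL ℝ y := by
    filter_upwards [hc.eventually h1] with y hy
    have := ((hy.comp_hasFDerivAt y (hn y)).const_mul c).fderiv
    simp only [Function.comp_def] at this
    rw [this]
    simp only [smul_smul]; ring_nf
  let J : Eu N →L[ℝ] Eu N →L[ℝ] ℝ := LinearMap.toContinuousLinearMap
    { toFun := fun y => innerSL ℝ y
      map_add' := fun a b => by simp
      map_smul' := fun a b => by ext v; simp [inner_smul_left] }
  have hJ : ∀ y, J y = innerSL ℝ y := fun y => rfl
  have hG : HasFDerivAt (fun y : Eu N => (c * F' (‖y‖ ^ 2 / T) * (2 / T)) • innerSL ℝ y)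
      ((c * F' (‖x‖ ^ 2 / T) * (2 / T)) • J +
        ((2 / T) • (c • (F2 • ((2 / T) • innerSL ℝ x)))).smulRight (innerSL ℝ x)) x := by
    have h := ((h2.comp_hasFDerivAt x (hn x)).const_mul c).mul_const (2 / T)
    exact h.smul J.hasFDerivAt
  have hi : ∀ i : Fin N, iteratedFDeriv ℝ 2 (fun y : Eu N => c * F (‖y‖ ^ 2 / T)) x
      (fun _ : Fin 2 => EuclideanSpace.single i (1 : ℝ)) =
      c * F' (‖x‖ ^ 2 / T) * (2 / T) + c * F2 * (4 / T ^ 2) * (x i) ^ 2 := by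
    intro i
    rw [iteratedFDeriv_two_apply, hev.fderiv_eq, hG.fderiv]
    simp [EuclideanSpace.inner_single_right, hJ]
    ring
  unfold lap
  rw [Finset.sum_congr rfl fun i _ => hi i, Finset.sum_add_distrib,
    ← Finset.mul_sum Finset.univ (fun i => (x i) ^ 2), ← EuclideanSpace.real_norm_sq_eq]
  simp
  ring

theorem aux_ext (ξ : ℝ → ℝ) (hξsm : ContDiffOn ℝ (⊤ : ℕ∞) ξ (Set.Ici 0))
    (hξ1 : ∀ s ∈ Set.Icc (0 : ℝ) 1, ξ s = 1) :
    ∃ ζ : ℝ → ℝ, ContDiff ℝ (⊤ : ℕ∞) ζ ∧ ∀ s, 0 ≤ s → ζ s = ξ s := by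
  refine ⟨fun s => if s < 1/2 then 1 else ξ s, ?_, ?_⟩
  · rw [contDiff_iff_contDiffAt]
    intro s
    rcases lt_or_ge s 1 with hs | hs
    · refine (contDiffAt_const (c := (1:ℝ))).congr_of_eventuallyEq ?_
      filter_upwards [Iio_mem_nhds hs] with u hu
      split_ifs with h
      · rfl
      · exact hξ1 u ⟨by linarith, le_of_lt hu⟩
    · refine (hξsm.contDiffAt (Ici_mem_nhds (by linarith : (0:ℝ) < s))).congr_of_eventuallyEq ?_
      filter_upwards [Ioi_mem_nhds (by linarith : (1/2:ℝ) < s)] with u hu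
      rw [if_neg (not_lt.2 (le_of_lt hu))]
  · intro s hs
    dsimp only
    split_ifs with h
    · exact (hξ1 s ⟨hs, by linarith⟩).symm
    · rfl

/-- pointwise bound -/
theorem aux_point {N : ℕ} (q : ℝ) (hq : 1 < q) (ζ : ℝ → ℝ) (hζ : ContDiff ℝ (⊤ : ℕ∞) ζ)
    (M : ℝ) (hM0 : 0 ≤ M) (hM1 : ∀ s ∈ Icc (0:ℝ) 2, |deriv ζ s| ≤ M)
    (hM2 : ∀ s ∈ Icc (0:ℝ) 2, |deriv (deriv ζ) s| ≤ M)
    (A T : ℝ) (hA : 0 < A) (hT : 0 < T) (x : Eu N)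
    (hs2 : ‖x‖ ^ 2 / T ≤ 2) (hz0 : 0 < ζ (‖x‖ ^ 2 / T)) (hz1 : ζ (‖x‖ ^ 2 / T) ≤ 1) :
    (A * ζ (‖x‖ ^ 2 / T) ^ (2 * q)) ^ (1 - q) *
      |lap (fun y : Eu N => A * ζ (‖y‖ ^ 2 / T) ^ (2 * q)) x| ^ q ≤
    A * (8 * (2 * q * M + 2 * q * (2 * q - 1) * M ^ 2) + 2 * N * (2 * q * M)) ^ q * T ^ (-q) := by
  have hs0 : 0 ≤ ‖x‖ ^ 2 / T := by positivity
  have hd1 : ∀ u, HasDerivAt ζ (deriv ζ u) u := fun u =>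
    (hζ.differentiable (by simp) u).hasDerivAt
  have hζ' : ContDiff ℝ 1 (deriv ζ) := by
    have : ContDiff ℝ (1 + 1) ζ := hζ.of_le (by norm_cast)
    exact (contDiff_succ_iff_deriv.1 this).2.2
  have hd2 : ∀ u, HasDerivAt (deriv ζ) (deriv (deriv ζ) u) u := fun u =>
    (hζ'.differentiable (by simp) u).hasDerivAt
  rw [aux_lap A T (fun u => ζ u ^ (2 * q)) (fun u => deriv ζ u * (2 * q) * ζ u ^ (2 * q - 1))
    (deriv (deriv ζ) (‖x‖ ^ 2 / T) * (2 * q) * ζ (‖x‖ ^ 2 / T) ^ (2 * q - 1) +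
      deriv ζ (‖x‖ ^ 2 / T) * (2 * q) *
        (deriv ζ (‖x‖ ^ 2 / T) * (2 * q - 1) * ζ (‖x‖ ^ 2 / T) ^ (2 * q - 1 - 1))) x ?_ ?_]
  rotate_left
  · filter_upwards [hζ.continuous.continuousAt.eventually (lt_mem_nhds hz0)] with u hu
    exact (hd1 u).rpow_const (Or.inl hu.ne')
  · exact ((hd2 _).mul_const _).mul ((hd1 _).rpow_const (Or.inl hz0.ne'))
  have m1 := hM1 _ ⟨hs0, hs2⟩
  have m2 := hM2 _ ⟨hs0, hs2⟩
  generalize ‖x‖ ^ 2 / T = s at *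
  generalize deriv (deriv ζ) s = b at *
  generalize deriv ζ s = a at *
  generalize ζ s = z at *
  set w := z ^ (2 * q - 1 - 1) with hw
  have hw0 : 0 < w := Real.rpow_pos_of_pos hz0 _
  set v := z ^ (2 * q - 1) with hv
  have hv0 : 0 < v := Real.rpow_pos_of_pos hz0 _
  have hvw : v ≤ w := Real.rpow_le_rpow_of_exponent_ge hz0 hz1 (by linarith)
  have hF1 : |a * (2 * q) * v| ≤ 2 * q * M * w := by
    rw [abs_mul, abs_mul, abs_of_pos hv0, abs_of_pos (by linarith : 0 < 2 * q)]
    calc |a| * (2 * q) * v ≤ M * (2 * q) * w := by gcongr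
      _ = _ := by ring
  have hF2 : |b * (2 * q) * v + a * (2 * q) * (a * (2 * q - 1) * w)| ≤
      (2 * q * M + 2 * q * (2 * q - 1) * M ^ 2) * w := by
    refine (abs_add_le _ _).trans ?_
    have e1 : |b * (2 * q) * v| ≤ 2 * q * M * w := by
      rw [abs_mul, abs_mul, abs_of_pos hv0, abs_of_pos (by linarith : 0 < 2 * q)]
      calc |b| * (2 * q) * v ≤ M * (2 * q) * w := by gcongr
        _ = _ := by ring
    have e2 : |a * (2 * q) * (a * (2 * q - 1) * w)| ≤ 2 * q * (2 * q - 1) * M ^ 2 * w := by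
      have hq1 : 0 < 2 * q - 1 := by linarith
      have : a * (2 * q) * (a * (2 * q - 1) * w) = 2 * q * (2 * q - 1) * a ^ 2 * w := by ring
      rw [this, abs_of_nonneg (by positivity)]
      have : a ^ 2 ≤ M ^ 2 := sq_le_sq' (by linarith [abs_le.1 m1]) (by linarith [abs_le.1 m1])
      gcongr
    linarith
  generalize a * (2 * q) * v = f1 at *
  generalize b * (2 * q) * v + a * (2 * q) * (a * (2 * q - 1) * w) = f2 at *
  have hq1 : 0 < 2 * q - 1 := by linarith
  set K2 := 2 * q * M + 2 * q * (2 * q - 1) * M ^ 2 with hK2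
  have hK20 : 0 ≤ K2 := by positivity
  set B := 8 * K2 + 2 * N * (2 * q * M) with hB
  have hB0 : 0 ≤ B := by positivity
  have hL : |A * (4 * s * f2 + 2 * N * f1) / T| ≤ A * w * B * T⁻¹ := by
    rw [abs_div, abs_mul, abs_of_pos hA, abs_of_pos hT, div_eq_mul_inv]
    have : |4 * s * f2 + 2 * N * f1| ≤ w * B := by
      refine (abs_add_le _ _).trans ?_
      rw [abs_mul (4 * s), abs_mul (2 * (N:ℝ)), abs_of_nonneg (by positivity : 0 ≤ 4 * s),
        abs_of_nonneg (by positivity : 0 ≤ 2 * (N:ℝ))]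
      calc 4 * s * |f2| + 2 * N * |f1| ≤ 4 * 2 * (K2 * w) + 2 * N * (2 * q * M * w) := by gcongr
        _ = w * B := by rw [hB]; ring
    calc A * |4 * s * f2 + 2 * N * f1| * T⁻¹ ≤ A * (w * B) * T⁻¹ := by gcongr
      _ = _ := by ring
  calc (A * z ^ (2 * q)) ^ (1 - q) * |A * (4 * s * f2 + 2 * N * f1) / T| ^ q
      ≤ (A * z ^ (2 * q)) ^ (1 - q) * (A * w * B * T⁻¹) ^ q := by gcongr
    _ = (A ^ (1 - q) * A ^ q) * (z ^ (2 * q * (1 - q)) * z ^ ((2 * q - 1 - 1) * q)) *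
          B ^ q * T ^ (-q) := by
        rw [Real.mul_rpow hA.le (by positivity), Real.mul_rpow (by positivity) (by positivity),
          Real.mul_rpow (by positivity) hB0, Real.mul_rpow hA.le hw0.le, hw,
          ← Real.rpow_mul hz0.le, ← Real.rpow_mul hz0.le, Real.inv_rpow hT.le,
          Real.rpow_neg hT.le]
        ring
    _ = A * B ^ q * T ^ (-q) := by
        rw [← Real.rpow_add hA, ← Real.rpow_add hz0]
        have e1 : 1 - q + q = 1 := by ring
        have e2 : 2 * q * (1 - q) + (2 * q - 1 - 1) * q = 0 := by ring
        rw [e1, e2]; simp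

/-- Estimate on I₁(T) = ∫₀ᵀ∫ φ_T^{−1/(p−1)} |Δ_x φ_T|^{p/(p−1)} dx dt ≤ C T^{1+N/2−p/(p−1)},
where φ_T(t,x) = η(t/T)^{p/(p−1)} ξ(|x|²/T)^{2p/(p−1)} and the integrand is interpreted
as 0 where φ_T vanishes. -/
theorem I1_estimate
    (N : ℕ) (hN : 1 ≤ N) (p : ℝ) (hp1 : 1 < p)
    (ξ : ℝ → ℝ) (hξsm : ContDiffOn ℝ (⊤ : ℕ∞) ξ (Set.Ici 0))
    (hξ01 : ∀ s ∈ Set.Ici (0 : ℝ), ξ s ∈ Set.Icc (0 : ℝ) 1)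
    (hξ1 : ∀ s ∈ Set.Icc (0 : ℝ) 1, ξ s = 1)
    (hξ0 : ∀ s ∈ Set.Ici (2 : ℝ), ξ s = 0)
    (η : ℝ → ℝ) (hηsm : ContDiffOn ℝ (⊤ : ℕ∞) η (Set.Ici 0))
    (hηpos : ∀ s, 0 ≤ η s) (hηne : ∃ s, η s ≠ 0)
    (hηsupp : Function.support η ⊆ Set.Ioo 0 1)
    (φT : ℝ → ℝ → Eu N → ℝ)
    (hφT : ∀ T t x, φT T t x = η (t / T) ^ (p / (p - 1)) * ξ (‖x‖ ^ 2 / T) ^ (2 * p / (p - 1))) :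
    ∃ C > (0 : ℝ), ∀ T : ℝ, 0 < T →
      (∫⁻ t in Set.Ioo (0 : ℝ) T, ∫⁻ x : Eu N, ENNReal.ofReal
          (if φT T t x = 0 then 0
           else φT T t x ^ (-(1 : ℝ) / (p - 1)) * |lap (φT T t) x| ^ (p / (p - 1))))
        ≤ ENNReal.ofReal (C * T ^ (1 + (N : ℝ) / 2 - p / (p - 1))) := by
  have hp0 : 0 < p - 1 := by linarith
  obtain ⟨q, hqdef⟩ : ∃ q, q = p / (p - 1) := ⟨_, rfl⟩
  have hq : 1 < q := by rw [hqdef, lt_div_iff₀ hp0]; linarith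
  have e1 : 2 * p / (p - 1) = 2 * q := by rw [hqdef]; ring
  have e2 : -(1:ℝ) / (p - 1) = 1 - q := by rw [hqdef]; field_simp; ring
  rw [e1] at hφT
  rw [e2]
  rw [← hqdef] at hφT ⊢
  obtain ⟨ζ, hζ, hζξ⟩ := aux_ext ξ hξsm hξ1
  have hφ : ∀ T t, 0 < T → φT T t = fun y : Eu N => η (t / T) ^ q * ζ (‖y‖ ^ 2 / T) ^ (2 * q) := by
    intro T t hT
    funext y
    rw [hφT, hζξ _ (by positivity)]
  have hζ' : ContDiff ℝ 1 (deriv ζ) := by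
    have : ContDiff ℝ (1 + 1) ζ := hζ.of_le (by norm_cast)
    exact (contDiff_succ_iff_deriv.1 this).2.2
  obtain ⟨M1, hM1⟩ := (isCompact_Icc (a := (0:ℝ)) (b := 2)).exists_bound_of_continuousOn
    hζ'.continuous.continuousOn
  obtain ⟨M2, hM2⟩ := (isCompact_Icc (a := (0:ℝ)) (b := 2)).exists_bound_of_continuousOn
    (hζ'.continuous_deriv le_rfl).continuousOn
  obtain ⟨E, hE⟩ := (isCompact_Icc (a := (0:ℝ)) (b := 1)).exists_bound_of_continuousOn
    (hηsm.continuousOn.mono Icc_subset_Ici_self)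
  obtain ⟨M, hM⟩ : ∃ M, M = max 0 (max M1 M2) := ⟨_, rfl⟩
  have hM0 : 0 ≤ M := hM ▸ le_max_left _ _
  have hMM1 : M1 ≤ M := hM ▸ (le_max_left _ _).trans (le_max_right _ _)
  have hMM2 : M2 ≤ M := hM ▸ (le_max_right _ _).trans (le_max_right _ _)
  have hE0 : 0 ≤ E := (norm_nonneg _).trans (hE 0 (by simp))
  have hηE : ∀ s, η s ≤ E := by
    intro s
    by_cases h : η s = 0
    · rw [h]; exact hE0
    · have := hηsupp h
      exact (le_abs_self _).trans (hE s ⟨this.1.le, this.2.le⟩)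
  obtain ⟨B, hB⟩ : ∃ B, B = (8 * (2 * q * M + 2 * q * (2 * q - 1) * M ^ 2) + 2 * N * (2 * q * M)) ^ q :=
    ⟨_, rfl⟩
  have hq1 : 0 < 2 * q - 1 := by linarith
  have hB0 : 0 ≤ B := by rw [hB]; positivity
  obtain ⟨V, hV⟩ : ∃ V : ℝ, V = (volume (Metric.ball (0 : Eu N) 1)).toReal := ⟨_, rfl⟩
  have hV0 : 0 ≤ V := hV ▸ ENNReal.toReal_nonneg
  have hVe : volume (Metric.ball (0 : Eu N) 1) = ENNReal.ofReal V := by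
    rw [hV, ENNReal.ofReal_toReal measure_ball_lt_top.ne]
  refine ⟨E ^ q * B * (2 ^ ((N:ℝ) / 2) * V) + 1, by positivity, fun T hT => ?_⟩
  have hx : ∀ t, (∫⁻ x : Eu N, ENNReal.ofReal
          (if φT T t x = 0 then 0
           else φT T t x ^ (1 - q) * |lap (φT T t) x| ^ q)) ≤
      ENNReal.ofReal (E ^ q * B * T ^ (-q) * ((2 * T) ^ ((N:ℝ) / 2) * V)) := by
    intro t
    calc _ ≤ ∫⁻ x : Eu N, (Metric.closedBall (0 : Eu N) (√(2 * T))).indicator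
          (fun _ => ENNReal.ofReal (E ^ q * B * T ^ (-q))) x := by
          refine lintegral_mono fun x => ?_
          dsimp only
          split_ifs with h
          · simp
          rw [hφT] at h
          have hη0 : 0 < η (t / T) := by
            refine lt_of_le_of_ne (hηpos _) fun h0 => h ?_
            rw [← h0, Real.zero_rpow (by linarith), zero_mul]
          have hs0 : 0 ≤ ‖x‖ ^ 2 / T := by positivity
          have hξne : ξ (‖x‖ ^ 2 / T) ≠ 0 := by
            intro h0
            exact h (by rw [h0, Real.zero_rpow (by linarith), mul_zero])
          have hξpos : 0 < ξ (‖x‖ ^ 2 / T) := lt_of_le_of_ne (hξ01 _ hs0).1 hξne.symm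
          have hs2 : ‖x‖ ^ 2 / T ≤ 2 := by
            by_contra hcon
            exact hξne (hξ0 _ (not_le.1 hcon).le)
          have hxm : x ∈ Metric.closedBall (0 : Eu N) (√(2 * T)) := by
            rw [mem_closedBall_zero_iff]
            apply Real.le_sqrt_of_sq_le
            rwa [div_le_iff₀ hT] at hs2
          rw [indicator_of_mem hxm, hφ T t hT]
          apply ENNReal.ofReal_le_ofReal
          refine (aux_point q hq ζ hζ M hM0 (fun s hs => (hM1 s hs).trans hMM1)
            (fun s hs => (hM2 s hs).trans hMM2) (η (t / T) ^ q) T (by positivity) hT x hs2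
            (by rw [hζξ _ hs0]; exact hξpos)
            (by rw [hζξ _ hs0]; exact (hξ01 _ hs0).2)).trans ?_
          rw [← hB]
          have := hηE (t / T)
          gcongr
      _ = ENNReal.ofReal (E ^ q * B * T ^ (-q)) *
            volume (Metric.closedBall (0 : Eu N) (√(2 * T))) :=
          lintegral_indicator_const Metric.isClosed_closedBall.measurableSet _
      _ = _ := by
          rw [Measure.addHaar_closedBall _ _ (Real.sqrt_nonneg _), hVe, finrank_euclideanSpace_fin,
            ← ENNReal.ofReal_mul (by positivity), ← ENNReal.ofReal_mul (by positivity)]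
          congr 3
          rw [Real.sqrt_eq_rpow, ← Real.rpow_natCast, ← Real.rpow_mul (by positivity)]
          congr 1; ring
  calc _ ≤ ∫⁻ t in Set.Ioo (0 : ℝ) T,
        ENNReal.ofReal (E ^ q * B * T ^ (-q) * ((2 * T) ^ ((N:ℝ) / 2) * V)) :=
        lintegral_mono fun t => hx t
    _ = ENNReal.ofReal ((E ^ q * B * T ^ (-q) * ((2 * T) ^ ((N:ℝ) / 2) * V)) * T) := by
        rw [setLIntegral_const, Real.volume_Ioo, sub_zero, ← ENNReal.ofReal_mul (by positivity)]
    _ ≤ _ := by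
        apply ENNReal.ofReal_le_ofReal
        have : T ^ (1 + (N:ℝ) / 2 - q) = T * T ^ ((N:ℝ) / 2) * T ^ (-q) := by
          rw [sub_eq_add_neg, Real.rpow_add hT, Real.rpow_add hT, Real.rpow_one]
        rw [this, Real.mul_rpow (by norm_num) hT.le]
        have h0 : 0 ≤ T * T ^ ((N:ℝ) / 2) * T ^ (-q) := by positivity
        nlinarith

end
end

section
/- Let N ≥ 2, p > 1, σ > −1, u_0 ∈ C_0(ℝ^N), and let w ∈ C_0(ℝ^N) ∩ L¹(ℝ^N) with ∫_{ℝ^N} w(x) dx > 0. Suppose u : [0,∞) × ℝ^N → ℝ is continuous, is continuously differentiable in t and twice continuously differentiable in x on (0,∞) × ℝ^N, satisfies ∂_t u = Δu + |u|^p + t^σ w(x) on (0,∞) × ℝ^N, and u(0,·) = u_0. Then there exist constants C > 0 and T₀ > 0 such that for all T ≥ T₀, ∫_{ℝ^N} w(x) dx ≤ C T^{N/2 − σ − p/(p−1)}. -/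
open MeasureTheory Filter Set
open scoped ENNReal NNReal

noncomputable section

open scoped Topology

/-- Second difference estimate in one variable. -/
lemma second_diff_bound (f f' f'' : ℝ → ℝ) (A M r : ℝ) (hr : 0 ≤ r)
    (hf : ∀ z, HasDerivAt f (f' z) z) (hf' : ∀ z, HasDerivAt f' (f'' z) z)
    (hb : ∀ z, |z| ≤ r → |f'' z - A| ≤ M) :
    |f r + f (-r) - 2 * f 0 - A * r ^ 2| ≤ 2 * M * r ^ 2 := by
  have hM : 0 ≤ M := (abs_nonneg _).trans (hb 0 (by simpa using hr))
  have hneg : ∀ z : ℝ, HasDerivAt (fun s : ℝ => -s) (-1) z := fun z =>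
    hasDerivAt_neg z
  have hq : ∀ z, HasDerivAt (fun s => f s + f (-s) - 2 * f 0 - A * s ^ 2)
      (f' z - f' (-z) - 2 * A * z) z := by
    intro z
    have h1 := ((hf z).add ((hf (-z)).comp z (hneg z))).sub_const (2 * f 0)
    have h2 := h1.sub (((hasDerivAt_id z).pow 2).const_mul A)
    refine HasDerivAt.congr_deriv h2 ?_
    simp; ring
  have hq' : ∀ z, HasDerivAt (fun z => f' z - f' (-z) - 2 * A * z)
      (f'' z + f'' (-z) - 2 * A) z := by
    intro z
    have h1 := ((hf' z).sub ((hf' (-z)).comp z (hneg z)))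
    have h2 := h1.sub ((hasDerivAt_id z).const_mul (2 * A))
    refine HasDerivAt.congr_deriv h2 ?_
    simp
  have hb1 : ∀ z ∈ Icc 0 r, |f' z - f' (-z) - 2 * A * z| ≤ 2 * M * r := by
    intro z hz
    have := norm_image_sub_le_of_norm_deriv_le_segment' (a := 0) (b := r) (C := 2 * M)
      (f := fun z => f' z - f' (-z) - 2 * A * z)
      (fun x _ => (hq' x).hasDerivWithinAt)
      (fun x hx => by
        have e1 := hb x (by rw [abs_of_nonneg hx.1]; exact hx.2.le)
        have e2 := hb (-x) (by rw [abs_neg, abs_of_nonneg hx.1]; exact hx.2.le)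
        rw [Real.norm_eq_abs]
        rw [abs_le] at *
        constructor <;> linarith [e1.1, e1.2, e2.1, e2.2]) z hz
    simp only [neg_zero, sub_self, mul_zero, sub_zero, Real.norm_eq_abs] at this
    exact this.trans (mul_le_mul_of_nonneg_left hz.2 (by positivity))
  have := norm_image_sub_le_of_norm_deriv_le_segment' (a := 0) (b := r) (C := 2 * M * r)
      (f := fun s => f s + f (-s) - 2 * f 0 - A * s ^ 2)
      (fun x _ => (hq x).hasDerivWithinAt)
      (fun x hx => hb1 x ⟨hx.1, hx.2.le⟩) r ⟨hr, le_rfl⟩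
  rw [Real.norm_eq_abs] at this
  calc _ = |f r + f (-r) - 2 * f 0 - A * r ^ 2 - (f 0 + f (-0) - 2 * f 0 - A * 0 ^ 2)| := by
        congr 1; rw [neg_zero]; ring
    _ ≤ _ := this
    _ = _ := by ring

lemma second_diff_tendsto (f f' f'' : ℝ → ℝ)
    (hf : ∀ z, HasDerivAt f (f' z) z) (hf' : ∀ z, HasDerivAt f' (f'' z) z)
    (hc : ContinuousAt f'' 0) :
    Tendsto (fun r => (f r + f (-r) - 2 * f 0) / r ^ 2) (𝓝[>] 0) (𝓝 (f'' 0)) := by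
  rw [Metric.tendsto_nhds]
  intro ε hε
  obtain ⟨δ, hδ, h⟩ := Metric.continuousAt_iff.1 hc (ε / 4) (by positivity)
  filter_upwards [Ioo_mem_nhdsGT hδ] with r hr
  have hb := second_diff_bound f f' f'' (f'' 0) (ε / 4) r hr.1.le hf hf' (fun z hz => by
    have := h (x := z) (by simpa [Real.dist_eq] using hz.trans_lt hr.2)
    rw [Real.dist_eq] at this; exact this.le)
  have hr2 : 0 < r ^ 2 := pow_pos hr.1 2
  rw [Real.dist_eq]
  have : (f r + f (-r) - 2 * f 0) / r ^ 2 - f'' 0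
      = (f r + f (-r) - 2 * f 0 - f'' 0 * r ^ 2) / r ^ 2 := by
    rw [sub_div (f r + f (-r) - 2 * f 0), mul_div_cancel_right₀ _ hr2.ne']
  rw [this, abs_div, abs_of_pos hr2, div_lt_iff₀ hr2]
  nlinarith

/-- The coordinate vectors. -/
def ee {N : ℕ} (i : Fin N) : Eu N := EuclideanSpace.single i (1 : ℝ)

/-- The (scaled) second difference in space plus time difference. -/
def DD {N : ℕ} (s r : ℝ) (F : ℝ × Eu N → ℝ) (q : ℝ × Eu N) : ℝ :=
  (∑ i : Fin N, (F (q + (0, r • ee i)) + F (q - (0, r • ee i)) - 2 * F q)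
    + (F (q + (s * r ^ 2, 0)) - F q)) / r ^ 2

instance instInvX (N : ℕ) : (volume : Measure (ℝ × Eu N)).IsAddLeftInvariant :=
  inferInstanceAs ((volume.prod volume : Measure (ℝ × Eu N)).IsAddLeftInvariant)

instance instInvXR (N : ℕ) : (volume : Measure (ℝ × Eu N)).IsAddRightInvariant :=
  inferInstanceAs ((volume.prod volume : Measure (ℝ × Eu N)).IsAddRightInvariant)

lemma integral_DD_aux {N : ℕ} (A B : Fin N → ℝ × Eu N → ℝ) (D E : ℝ × Eu N → ℝ)
    (hA : ∀ i, Integrable (A i)) (hB : ∀ i, Integrable (B i)) (hD : Integrable D)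
    (hE : Integrable E) :
    ∫ q, (∑ i, (A i q + B i q - 2 * E q) + (D q - E q))
      = ∑ i, ((∫ q, A i q) + (∫ q, B i q) - 2 * ∫ q, E q) + ((∫ q, D q) - ∫ q, E q) := by
  have h1 : ∀ i, Integrable (fun q => A i q + B i q) := fun i => (hA i).add (hB i)
  have h2 : Integrable (fun q => 2 * E q) := hE.const_mul 2
  have h3 : ∀ i, Integrable (fun q => A i q + B i q - 2 * E q) := fun i => (h1 i).sub h2
  have h4 : Integrable (fun q => ∑ i, (A i q + B i q - 2 * E q)) :=
    integrable_finsetSum _ fun i _ => h3 i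
  have h5 : Integrable (fun q => D q - E q) := hD.sub hE
  rw [integral_add h4 h5, integral_finsetSum _ (fun i _ => h3 i), integral_sub hD hE]
  congr 1
  refine Finset.sum_congr rfl fun i _ => ?_
  rw [integral_sub (h1 i) h2, integral_add (hA i) (hB i), integral_const_mul]

lemma integral_DD {N : ℕ} (r : ℝ) (U ψ : ℝ × Eu N → ℝ) (hU : Continuous U) (hψ : Continuous ψ)
    (hs : HasCompactSupport ψ) :
    ∫ q, ψ q * DD (-1) r U q = ∫ q, U q * DD 1 r ψ q := by
  have i1 : ∀ z : ℝ × Eu N, Integrable (fun q => ψ q * U (q + z)) := fun z =>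
    (hψ.mul (by fun_prop)).integrable_of_hasCompactSupport hs.mul_right
  have i2 : ∀ z : ℝ × Eu N, Integrable (fun q => U q * ψ (q + z)) := fun z => by
    have := (i1 (-z)).comp_add_right z
    refine this.congr (Eventually.of_forall fun q => ?_)
    simp [mul_comm]
  have key : ∀ z : ℝ × Eu N, ∫ q, ψ q * U (q + z) = ∫ q, U q * ψ (q - z) := by
    intro z
    rw [← integral_add_right_eq_self (fun q => U q * ψ (q - z)) z]
    simp [mul_comm]
  have i10 := i1 0
  have i20 := i2 0
  simp only [add_zero] at i10 i20
  have key0 := key 0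
  simp only [add_zero, sub_zero] at key0
  have e1 : ∀ q, ψ q * DD (-1) r U q = (∑ i : Fin N, (ψ q * U (q + (0, r • ee i))
      + ψ q * U (q + -(0, r • ee i)) - 2 * (ψ q * U q))
      + (ψ q * U (q + (-(r ^ 2), 0)) - ψ q * U q)) / r ^ 2 := by
    intro q
    simp only [DD, ← mul_div_assoc, mul_add, Finset.mul_sum, sub_eq_add_neg]
    congr 2
    · refine Finset.sum_congr rfl fun i _ => by ring
    · simp
  have e2 : ∀ q, U q * DD 1 r ψ q = (∑ i : Fin N, (U q * ψ (q + (0, r • ee i))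
      + U q * ψ (q + -(0, r • ee i)) - 2 * (U q * ψ q))
      + (U q * ψ (q + (r ^ 2, 0)) - U q * ψ q)) / r ^ 2 := by
    intro q
    simp only [DD, ← mul_div_assoc, mul_add, Finset.mul_sum, sub_eq_add_neg]
    congr 2
    · refine Finset.sum_congr rfl fun i _ => by ring
    · simp
  simp only [e1, e2]
  rw [integral_div, integral_div]
  congr 1
  rw [integral_DD_aux (fun i q => ψ q * U (q + (0, r • ee i)))
      (fun i q => ψ q * U (q + -(0, r • ee i))) (fun q => ψ q * U (q + (-(r ^ 2), 0)))
      (fun q => ψ q * U q) (fun _ => i1 _) (fun _ => i1 _) (i1 _) i10,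
    integral_DD_aux (fun i q => U q * ψ (q + (0, r • ee i)))
      (fun i q => U q * ψ (q + -(0, r • ee i))) (fun q => U q * ψ (q + (r ^ 2, 0)))
      (fun q => U q * ψ q) (fun _ => i2 _) (fun _ => i2 _) (i2 _) i20]
  simp only [key, key0]
  congr 1
  · refine Finset.sum_congr rfl fun i _ => ?_
    simp only [sub_eq_add_neg, neg_neg]
    ring
  · congr 2
    ext q
    simp [sub_eq_add_neg]

/-- Local sup-convolution. -/
lemma sup_conv {N : ℕ} (v H : ℝ × Eu N → ℝ) (Ω K0 : Set (ℝ × Eu N)) (hΩ : IsOpen Ω)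
    (hv : Continuous v) (hH : ContinuousOn H Ω)
    (hlim : ∀ q ∈ Ω, Tendsto (fun r => DD (-1) r v q) (𝓝[>] 0) (𝓝 (-(H q))))
    (hK0 : IsCompact K0) (hsub : K0 ⊆ Ω) (ω : ℝ) (hω : 0 < ω) :
    ∃ U : ℝ × Eu N → ℝ, Continuous U ∧ (∀ q ∈ K0, |U q - v q| ≤ ω) ∧
      (∃ C : ℝ, ∀ r, 0 < r → r ≤ 1 → ∀ q ∈ K0, -C ≤ DD (-1) r U q) ∧
      (∀ q ∈ K0, ∀ᶠ r in 𝓝[>] 0, -(H q) - ω ≤ DD (-1) r U q) := by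
  obtain ⟨δ, hδ, hδs⟩ := hK0.exists_cthickening_subset_open hΩ hsub
  set K := Metric.cthickening δ K0 with hK
  have hKc : IsCompact K := hK0.cthickening
  have hK0K : K0 ⊆ K := Metric.self_subset_cthickening K0
  obtain ⟨M, hM⟩ := hKc.exists_bound_of_continuousOn hv.continuousOn
  have hM0 : ∀ q ∈ K, |v q| ≤ |M| + 1 := fun q hq => (hM q hq).trans
    ((le_abs_self M).trans (by linarith))
  set B := |M| + 1 with hB
  have hBpos : 0 < B := by positivity
  obtain ⟨δ1, hδ1, huv⟩ := Metric.uniformContinuousOn_iff.1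
    (hKc.uniformContinuousOn_of_continuous hv.continuousOn) ω hω
  obtain ⟨δ2, hδ2, huH⟩ := Metric.uniformContinuousOn_iff.1
    (hKc.uniformContinuousOn_of_continuous (hH.mono hδs)) (ω / 2) (by positivity)
  set ρ := min (δ / 2) (min δ1 δ2) with hρ
  have hρ0 : 0 < ρ := by positivity
  set ε := ρ ^ 2 / (8 * B) with hε
  have hε0 : 0 < ε := by positivity
  let c : ℝ × Eu N → ℝ := fun z => z.1 ^ 2 + ‖z.2‖ ^ 2
  have hc0 : ∀ z, 0 ≤ c z := fun z => by positivity
  let Φ : ℝ × Eu N → ℝ × Eu N → ℝ := fun q k => v k - c (q - k) / (2 * ε)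
  have hΦ : Continuous ↿Φ := by
    change Continuous fun z : (ℝ × Eu N) × (ℝ × Eu N) => v z.2
      - ((z.1.1 - z.2.1) ^ 2 + ‖z.1.2 - z.2.2‖ ^ 2) / (2 * ε)
    fun_prop
  have hΦq : ∀ q, Continuous (Φ q) := fun q => hΦ.comp (.prodMk_right q)
  let U : ℝ × Eu N → ℝ := fun q => sSup (Φ q '' K)
  have hUc : Continuous U := hKc.continuous_sSup hΦ
  have hUge : ∀ q, ∀ k ∈ K, Φ q k ≤ U q := fun q k hk =>
    le_csSup (hKc.bddAbove_image (hΦq q).continuousOn) (mem_image_of_mem _ hk)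
  -- the maximizer
  have hmax : ∀ q ∈ K0, ∃ k ∈ K, U q = Φ q k ∧ dist q k < ρ := by
    intro q hq
    obtain ⟨k, hk, hk1, -⟩ := hKc.exists_sSup_image_eq_and_ge ⟨q, hK0K hq⟩ (hΦq q).continuousOn
    refine ⟨k, hk, hk1, ?_⟩
    have h1 := hUge q q (hK0K hq)
    have h2 : U q = Φ q k := hk1
    rw [h2] at h1
    have hcc : Φ q q = v q := by simp [Φ, c]
    rw [hcc] at h1
    have h3 := abs_le.1 (hM0 q (hK0K hq))
    have h4 := abs_le.1 (hM0 k hk)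
    have h5 : c (q - k) / (2 * ε) ≤ 2 * B := by
      have : v q ≤ v k - c (q - k) / (2 * ε) := h1
      linarith [h3.1, h4.2]
    rw [div_le_iff₀ (by positivity)] at h5
    have h6 : c (q - k) < ρ ^ 2 := by
      have : 2 * B * (2 * ε) = ρ ^ 2 / 2 := by rw [hε]; field_simp; ring
      rw [this] at h5
      have : 0 < ρ ^ 2 := by positivity
      linarith
    have h7 : (q.1 - k.1) ^ 2 + ‖q.2 - k.2‖ ^ 2 < ρ ^ 2 := h6
    rw [Prod.dist_eq, max_lt_iff]
    constructor
    · rw [Real.dist_eq]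
      exact abs_lt_of_sq_lt_sq (by nlinarith [sq_nonneg ‖q.2 - k.2‖]) hρ0.le
    · rw [dist_eq_norm]
      exact lt_of_pow_lt_pow_left₀ 2 hρ0.le (by nlinarith [sq_nonneg (q.1 - k.1)])
  have hρδ : ρ ≤ δ / 2 := min_le_left _ _
  have hρ1 : ρ ≤ δ1 := (min_le_right _ _).trans (min_le_left _ _)
  have hρ2 : ρ ≤ δ2 := (min_le_right _ _).trans (min_le_right _ _)
  refine ⟨U, hUc, ?_, ?_, ?_⟩
  · intro q hq
    obtain ⟨k, hk, hUk, hd⟩ := hmax q hq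
    have h1 := hUge q q (hK0K hq)
    have hcc : Φ q q = v q := by simp [Φ, c]
    rw [hcc] at h1
    have h2 := huv q (hK0K hq) k hk (hd.trans_le hρ1)
    rw [Real.dist_eq, abs_lt] at h2
    have h3 : U q ≤ v k := by
      rw [hUk]
      have : 0 ≤ c (q - k) / (2 * ε) := div_nonneg (hc0 _) (by positivity)
      simp only [Φ]; linarith
    rw [abs_le]; constructor <;> linarith [h2.1, h2.2]
  · refine ⟨N * (1 / ε) + (2 * ρ + 1) / (2 * ε), fun r hr hr1 q hq => ?_⟩
    obtain ⟨k, hk, hUk, hd⟩ := hmax q hq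
    have hr2 : 0 < r ^ 2 := by positivity
    rw [DD, le_div_iff₀ hr2]
    have key : ∀ z, U q + (c (q - k) - c (q + z - k)) / (2 * ε) ≤ U (q + z) := by
      intro z
      refine le_trans (le_of_eq ?_) (hUge (q + z) k hk)
      rw [hUk]; simp only [Φ]; ring
    have hsp : ∀ i : Fin N, -(1 / ε) * r ^ 2 ≤
        U (q + (0, r • ee i)) + U (q - (0, r • ee i)) - 2 * U q := by
      intro i
      have k1 := key (0, r • ee i)
      have k2 := key (-(0, r • ee i))
      have par := parallelogram_law_with_norm ℝ (q.2 - k.2) (r • ee i : Eu N)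
      have hn : ‖r • (ee i : Eu N)‖ = r := by
        simp [norm_smul, ee, abs_of_pos hr]
      rw [hn] at par
      have : (c (q - k) - c (q + (0, r • ee i) - k)) / (2 * ε)
          + (c (q - k) - c (q + (-(0, r • ee i)) - k)) / (2 * ε) = -(1 / ε) * r ^ 2 := by
        have e1 : q.2 + r • ee i - k.2 = q.2 - k.2 + r • ee i := by abel
        have e2 : q.2 + -(r • ee i) - k.2 = q.2 - k.2 - r • ee i := by abel
        have : c (q - k) - c (q + (0, r • ee i) - k) + (c (q - k) - c (q + (-(0, r • ee i)) - k))
            = - 2 * r ^ 2 := by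
          simp only [c, Prod.fst_sub, Prod.snd_sub, Prod.fst_add, Prod.snd_add, Prod.fst_neg,
            Prod.snd_neg, e1, e2, neg_zero, add_zero]
          nlinarith
        rw [← add_div, this]; field_simp
      rw [← sub_eq_add_neg q] at k2 this
      linarith
    have htm : -((2 * ρ + 1) / (2 * ε)) * r ^ 2 ≤ U (q + (-1 * r ^ 2, 0)) - U q := by
      have k1 := key (-1 * r ^ 2, 0)
      have : -((2 * ρ + 1) / (2 * ε)) * r ^ 2 ≤
          (c (q - k) - c (q + (-1 * r ^ 2, 0) - k)) / (2 * ε) := by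
        have hd1 : |q.1 - k.1| < ρ := by
          rw [Prod.dist_eq, max_lt_iff, Real.dist_eq] at hd; exact hd.1
        have : c (q - k) - c (q + (-1 * r ^ 2, 0) - k)
            = r ^ 2 * (2 * (q.1 - k.1) - r ^ 2) := by
          simp only [c, Prod.fst_sub, Prod.snd_sub, Prod.fst_add, Prod.snd_add, add_zero]
          ring
        rw [this, neg_mul, div_mul_eq_mul_div, ← neg_div]
        gcongr
        have h1 := abs_lt.1 hd1
        have : r ^ 2 ≤ 1 := pow_le_one₀ hr.le hr1
        nlinarith [h1.1]
      linarith
    have := Finset.sum_le_sum (fun i (_ : i ∈ Finset.univ) => hsp i)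
    rw [Finset.sum_const, Finset.card_univ, Fintype.card_fin, nsmul_eq_mul] at this
    linarith
  · intro q hq
    obtain ⟨k, hk, hUk, hd⟩ := hmax q hq
    have hkK : ∀ z : ℝ × Eu N, ‖z‖ < δ / 2 → k + z ∈ K := by
      intro z hz
      refine Metric.mem_cthickening_of_dist_le _ q _ _ hq ?_
      have : dist (k + z) q ≤ dist (k + z) k + dist k q := dist_triangle _ _ _
      rw [dist_comm k q, dist_eq_norm (k + z) k, add_sub_cancel_left] at this
      linarith
    have key : ∀ z : ℝ × Eu N, ‖z‖ < δ / 2 → U q + (v (k + z) - v k) ≤ U (q + z) := by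
      intro z hz
      refine le_trans (le_of_eq ?_) (hUge (q + z) (k + z) (hkK z hz))
      rw [hUk]; simp only [Φ, add_sub_add_right_eq_sub]; ring
    have hl := hlim k (hδs hk)
    have hHk := huH q (hK0K hq) k hk (hd.trans_le hρ2)
    rw [Real.dist_eq, abs_lt] at hHk
    have hev := hl.eventually (lt_mem_nhds (show -(H q) - ω < -(H k) by linarith [hHk.1]))
    filter_upwards [hev, Ioo_mem_nhdsGT (show (0 : ℝ) < min 1 (δ / 2) by positivity)] with r h1 hr
    have hr2 : 0 < r ^ 2 := pow_pos hr.1 2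
    have hrδ : r < δ / 2 := hr.2.trans_le (min_le_right _ _)
    have hr1 : r < 1 := hr.2.trans_le (min_le_left _ _)
    refine h1.le.trans ?_
    have hn : ∀ i : Fin N, ‖((0, r • ee i) : ℝ × Eu N)‖ < δ / 2 := by
      intro i
      have : ‖r • (ee i : Eu N)‖ = r := by
        simp [norm_smul, ee, abs_of_pos hr.1]
      rw [Prod.norm_mk, this, norm_zero, max_eq_right hr.1.le]; exact hrδ
    have hn' : ‖((-1 * r ^ 2, 0) : ℝ × Eu N)‖ < δ / 2 := by
      rw [Prod.norm_mk, norm_zero, Real.norm_eq_abs, neg_one_mul, abs_neg, abs_of_pos hr2,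
        max_eq_left hr2.le]
      nlinarith [hr.1]
    rw [DD, DD]
    refine div_le_div_of_nonneg_right ?_ hr2.le
    refine add_le_add (Finset.sum_le_sum fun i _ => ?_) ?_
    · have k1 := key _ (hn i)
      have k2 := key (-(0, r • ee i)) (by rw [norm_neg]; exact hn i)
      rw [← sub_eq_add_neg q, ← sub_eq_add_neg k] at k2
      linarith
    · have := key _ hn'
      linarith

lemma DD_continuous {N : ℕ} (s r : ℝ) (F : ℝ × Eu N → ℝ) (hF : Continuous F) :
    Continuous (DD s r F) := by
  unfold DD
  fun_prop

/-- Weak (one-sided) form from pointwise difference limits. -/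
lemma weak_core {N : ℕ} (v H ψ L : ℝ × Eu N → ℝ) (Ω : Set (ℝ × Eu N)) (hΩ : IsOpen Ω)
    (hv : Continuous v) (hH : ContinuousOn H Ω)
    (hlim : ∀ q ∈ Ω, Tendsto (fun r => DD (-1) r v q) (𝓝[>] 0) (𝓝 (-(H q))))
    (hψ : Continuous ψ) (hψ0 : ∀ q, 0 ≤ ψ q) (hs : HasCompactSupport ψ)
    (hsub : tsupport ψ ⊆ Ω) (M : ℝ) (hM : ∀ r, 0 < r → ∀ q, |DD 1 r ψ q| ≤ M)
    (hLc : Continuous L)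
    (hL : ∀ q, Tendsto (fun r => DD 1 r ψ q) (𝓝[>] 0) (𝓝 (L q))) :
    -∫ q, ψ q * H q ≤ ∫ q, v q * L q := by
  set K0 := tsupport ψ with hK0
  have hK0c : IsCompact K0 := hs
  have hMn : 0 ≤ M := (abs_nonneg _).trans (hM 1 one_pos 0)
  have hψz : ∀ q, q ∉ K0 → ψ q = 0 := fun q hq => image_eq_zero_of_notMem_tsupport hq
  -- support of DD
  have hDz : ∀ r, 0 < r → r ≤ 1 → ∀ q, q ∉ Metric.cthickening r K0 → DD 1 r ψ q = 0 := by
    intro r hr hr1 q hq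
    have hz : ∀ z : ℝ × Eu N, ‖z‖ ≤ r → ψ (q + z) = 0 := by
      intro z hz
      apply hψz
      intro hmem
      exact hq (Metric.mem_cthickening_of_dist_le _ _ _ _ hmem (by
        rw [dist_eq_norm, sub_add_cancel_left, norm_neg]; exact hz))
    have hn : ∀ i : Fin N, ‖((0, r • ee i) : ℝ × Eu N)‖ ≤ r := by
      intro i
      have : ‖r • (ee i : Eu N)‖ = r := by
        simp [norm_smul, ee, abs_of_pos hr]
      rw [Prod.norm_mk, this, norm_zero, max_eq_right hr.le]
    have hn' : ‖((1 * r ^ 2, 0) : ℝ × Eu N)‖ ≤ r := by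
      rw [Prod.norm_mk, norm_zero, Real.norm_eq_abs, one_mul, abs_of_pos (by positivity),
        max_eq_left (by positivity)]
      nlinarith
    have h0 := hz 0 (by simpa using hr.le)
    rw [add_zero] at h0
    rw [DD, h0, hz _ hn']
    have hz1 : ∀ i : Fin N, ψ (q + (0, r • ee i)) = 0 := fun i => hz _ (hn i)
    have hz2 : ∀ i : Fin N, ψ (q - (0, r • ee i)) = 0 := fun i => by
      rw [sub_eq_add_neg]
      exact hz _ (by rw [norm_neg]; exact hn i)
    simp only [hz1, hz2]
    simp
  have hLz : ∀ q, q ∉ K0 → L q = 0 := by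
    intro q hq
    have ho : IsOpen K0ᶜ := (isClosed_tsupport ψ).isOpen_compl
    obtain ⟨d, hd, hds⟩ := Metric.isOpen_iff.1 ho q hq
    refine tendsto_nhds_unique (hL q) (tendsto_const_nhds.congr' ?_)
    filter_upwards [Ioo_mem_nhdsGT (show (0 : ℝ) < min 1 (d / 2) by positivity)] with r hr
    refine (hDz r hr.1 (hr.2.le.trans (min_le_left _ _)) q fun hmem => ?_).symm
    rw [hK0c.cthickening_eq_biUnion_closedBall hr.1.le] at hmem
    simp only [mem_iUnion, Metric.mem_closedBall] at hmem
    obtain ⟨y, hy, hyq⟩ := hmem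
    refine hds (a := y) ?_ hy
    rw [Metric.mem_ball, dist_comm]
    have := hr.2.trans_le (min_le_right _ _)
    linarith
  have intK : ∀ F : ℝ × Eu N → ℝ, ContinuousOn F K0 → (∀ q, q ∉ K0 → F q = 0) →
      Integrable F := by
    intro F hF hz
    refine (integrableOn_iff_integrable_of_support_subset (s := K0) fun q hq => ?_).1
      (hF.integrableOn_compact hK0c)
    by_contra h
    exact hq (hz q h)
  have iψ : Integrable ψ := hψ.integrable_of_hasCompactSupport hs
  have iL : Integrable L := intK L hLc.continuousOn hLz
  have ivL : Integrable (fun q => v q * L q) :=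
    intK _ (hv.mul hLc).continuousOn fun q hq => by simp [hLz q hq]
  have iψH : Integrable (fun q => ψ q * H q) :=
    intK _ (hψ.continuousOn.mul (hH.mono hsub)) fun q hq => by simp [hψz q hq]
  have main : ∀ ω : ℝ, 0 < ω →
      -∫ q, ψ q * H q ≤ (∫ q, v q * L q) + ω * ((∫ q, ψ q) + ∫ q, |L q|) := by
    intro ω hω
    obtain ⟨U, hU, hUv, ⟨C, hC⟩, hUl⟩ := sup_conv v H Ω K0 hΩ hv hH hlim hK0c hsub ω hω
    -- the right-hand side limit
    have lim1 : Tendsto (fun r => ∫ q, U q * DD 1 r ψ q) (𝓝[>] 0) (𝓝 (∫ q, U q * L q)) := by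
      set K1 := Metric.cthickening 1 K0 with hK1
      have hK1c : IsCompact K1 := hK0c.cthickening
      obtain ⟨B, hB⟩ := hK1c.exists_bound_of_continuousOn hU.continuousOn
      refine tendsto_integral_filter_of_dominated_convergence
        (K1.indicator fun _ => B * M) ?_ ?_ ?_ ?_
      · exact Eventually.of_forall fun r =>
          (hU.mul (DD_continuous 1 r ψ hψ)).aestronglyMeasurable
      · filter_upwards [Ioo_mem_nhdsGT (show (0 : ℝ) < 1 by norm_num)] with r hr
        refine Eventually.of_forall fun q => ?_
        by_cases hq : q ∈ K1
        · rw [indicator_of_mem hq, norm_mul]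
          exact mul_le_mul (hB q hq) (hM r hr.1 q) (norm_nonneg _)
            ((norm_nonneg _).trans (hB q hq))
        · rw [indicator_of_notMem hq, hDz r hr.1 hr.2.le q fun h => hq
            (Metric.cthickening_mono hr.2.le _ h)]
          simp
      · exact (integrable_indicator_iff hK1c.measurableSet).2
          (continuousOn_const.integrableOn_compact hK1c)
      · exact Eventually.of_forall fun q => (hL q).const_mul (U q)
    have lim2 : Tendsto (fun r => ∫ q, min (ψ q * DD (-1) r U q) (ψ q * (-(H q) - ω))) (𝓝[>] 0)
        (𝓝 (∫ q, ψ q * (-(H q) - ω))) := by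
      have iB : Integrable (fun q => ψ q * (-(H q) - ω)) := intK _
        (hψ.continuousOn.mul ((hH.mono hsub).neg.sub continuousOn_const))
        fun q hq => by simp [hψz q hq]
      refine tendsto_integral_filter_of_dominated_convergence
        (fun q => |C| * ψ q + |ψ q * (-(H q) - ω)|) ?_ ?_ ?_ ?_
      · exact Eventually.of_forall fun r =>
          ((hψ.mul (DD_continuous (-1) r U hU)).aestronglyMeasurable.inf iB.1)
      · filter_upwards [Ioo_mem_nhdsGT (show (0 : ℝ) < 1 by norm_num)] with r hr
        refine Eventually.of_forall fun q => ?_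
        have hl : -(|C| * ψ q) ≤ ψ q * DD (-1) r U q := by
          by_cases hq : q ∈ K0
          · have := hC r hr.1 hr.2.le q hq
            nlinarith [hψ0 q, le_abs_self C]
          · simp [hψz q hq]
        have hCψ : 0 ≤ |C| * ψ q := mul_nonneg (abs_nonneg _) (hψ0 q)
        rw [Real.norm_eq_abs, abs_le]
        constructor
        · rw [le_min_iff]
          constructor
          · linarith [abs_nonneg (ψ q * (-(H q) - ω))]
          · linarith [neg_abs_le (ψ q * (-(H q) - ω))]
        · exact (min_le_right _ _).trans (by linarith [le_abs_self (ψ q * (-(H q) - ω))])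
      · exact (iψ.const_mul _).add iB.abs
      · refine Eventually.of_forall fun q => tendsto_const_nhds.congr' ?_
        by_cases hq : q ∈ K0
        · filter_upwards [hUl q hq] with r hr
          rw [min_eq_right]
          exact mul_le_mul_of_nonneg_left hr (hψ0 q)
        · exact Eventually.of_forall fun r => by simp [hψz q hq]
    have comp : ∀ᶠ r in 𝓝[>] (0 : ℝ), ∫ q, min (ψ q * DD (-1) r U q) (ψ q * (-(H q) - ω))
        ≤ ∫ q, U q * DD 1 r ψ q := by
      refine Eventually.of_forall fun r => ?_
      rw [← integral_DD r U ψ hU hψ hs]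
      have i1 : Integrable (fun q => ψ q * DD (-1) r U q) :=
        (hψ.mul (DD_continuous (-1) r U hU)).integrable_of_hasCompactSupport hs.mul_right
      have iB : Integrable (fun q => ψ q * (-(H q) - ω)) := intK _
        (hψ.continuousOn.mul ((hH.mono hsub).neg.sub continuousOn_const))
        fun q hq => by simp [hψz q hq]
      exact integral_mono (i1.inf iB) i1 fun q => min_le_left _ _
    have fin := le_of_tendsto_of_tendsto lim2 lim1 comp
    have e1 : ∫ q, ψ q * (-(H q) - ω) = -(∫ q, ψ q * H q) - ω * ∫ q, ψ q := by
      have hn : Integrable (fun q => -(ψ q * H q)) := iψH.neg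
      rw [← integral_neg, ← integral_const_mul, ← integral_sub hn (iψ.const_mul ω)]
      congr 1; ext q; ring
    have e2 : ∫ q, U q * L q ≤ (∫ q, v q * L q) + ω * ∫ q, |L q| := by
      rw [← integral_const_mul, ← integral_add ivL (iL.abs.const_mul ω)]
      refine integral_mono (intK _ (hU.mul hLc).continuousOn fun q hq => by simp [hLz q hq])
        (ivL.add (iL.abs.const_mul ω)) fun q => ?_
      by_cases hq : q ∈ K0
      · have h1 := hUv q hq
        have h2 : (U q - v q) * L q ≤ ω * |L q| := by
          refine (le_abs_self _).trans ?_
          rw [abs_mul]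
          exact mul_le_mul_of_nonneg_right h1 (abs_nonneg _)
        linarith
      · simp [hLz q hq]
    linarith
  have ht : Tendsto (fun ω : ℝ => (∫ q, v q * L q) + ω * ((∫ q, ψ q) + ∫ q, |L q|)) (𝓝[>] 0)
      (𝓝 ((∫ q, v q * L q) + 0 * ((∫ q, ψ q) + ∫ q, |L q|))) := by
    refine tendsto_nhdsWithin_of_tendsto_nhds (Continuous.tendsto ?_ 0)
    fun_prop
  rw [zero_mul, add_zero] at ht
  exact ge_of_tendsto ht (by
    filter_upwards [self_mem_nhdsWithin] with ω hω using main ω hω)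

lemma time_diff (f : ℝ → ℝ) (d t s : ℝ) (h : HasDerivAt f d t) :
    Tendsto (fun r => (f (t + s * r ^ 2) - f t) / r ^ 2) (𝓝[>] 0) (𝓝 (s * d)) := by
  have hg : HasDerivAt (fun y => f (t + s * y)) (s * d) 0 := by
    have h1 : HasDerivAt (fun y : ℝ => t + s * y) s 0 := by
      simpa using ((hasDerivAt_id (0 : ℝ)).const_mul s).const_add t
    have h2 : HasDerivAt f d (t + s * 0) := by simpa using h
    have := h2.comp (0 : ℝ) h1
    rw [mul_comm]
    exact this
  have h3 := hasDerivAt_iff_tendsto_slope_zero.1 hg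
  have h4 : Tendsto (fun r : ℝ => r ^ 2) (𝓝[>] 0) (𝓝[≠] 0) := by
    refine tendsto_nhdsWithin_iff.2 ⟨?_, ?_⟩
    · have : Tendsto (fun r : ℝ => r ^ 2) (𝓝 0) (𝓝 (0 ^ 2)) := (continuous_pow 2).tendsto 0
      rw [zero_pow two_ne_zero] at this
      exact tendsto_nhdsWithin_of_tendsto_nhds this
    · filter_upwards [self_mem_nhdsWithin] with r hr
      have : (0 : ℝ) < r := hr
      exact (pow_pos this 2).ne'
  refine (h3.comp h4).congr fun r => ?_
  simp [div_eq_inv_mul]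

lemma lap_diff {N : ℕ} (f : Eu N → ℝ) (hf : ContDiff ℝ 2 f) (x : Eu N) :
    Tendsto (fun r : ℝ => ∑ i : Fin N, (f (x + r • ee i) + f (x - r • ee i) - 2 * f x) / r ^ 2)
      (𝓝[>] 0) (𝓝 (lap f x)) := by
  unfold lap
  refine tendsto_finsetSum _ fun i _ => ?_
  have hl : ∀ z : ℝ, HasDerivAt (fun s : ℝ => x + s • (ee i : Eu N)) (ee i) z := by
    intro z
    simpa using ((hasDerivAt_id z).smul_const (ee i : Eu N)).const_add x
  have hd1 : ∀ y, HasFDerivAt f (fderiv ℝ f y) y := fun y =>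
    ((hf.differentiable (by norm_num)) y).hasFDerivAt
  have hf1 : ContDiff ℝ 1 (fderiv ℝ f) := hf.fderiv_right (by norm_num)
  have hd2 : ∀ y, HasFDerivAt (fderiv ℝ f) (fderiv ℝ (fderiv ℝ f) y) y := fun y =>
    ((hf1.differentiable (by norm_num)) y).hasFDerivAt
  have hc : Continuous (fderiv ℝ (fderiv ℝ f)) := hf1.continuous_fderiv (by norm_num)
  have h1 : ∀ z : ℝ, HasDerivAt (fun s : ℝ => f (x + s • ee i))
      (fderiv ℝ f (x + z • ee i) (ee i)) z := fun z =>
    (hd1 _).comp_hasDerivAt z (hl z)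
  have h2 : ∀ z : ℝ, HasDerivAt (fun s : ℝ => fderiv ℝ f (x + s • ee i) (ee i))
      (fderiv ℝ (fderiv ℝ f) (x + z • ee i) (ee i) (ee i)) z := fun z => by
    have := ((hd2 _).comp_hasDerivAt z (hl z)).clm_apply (hasDerivAt_const z (ee i : Eu N))
    simpa using this
  have := second_diff_tendsto _ _ _ h1 h2 (by
    refine Continuous.continuousAt ?_
    fun_prop)
  rw [iteratedFDeriv_two_apply]
  simpa [sub_eq_add_neg, ee] using this

lemma DD_eq {N : ℕ} (s r : ℝ) (F : ℝ × Eu N → ℝ) (t : ℝ) (x : Eu N) :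
    DD s r F (t, x) = ∑ i : Fin N, (F (t, x + r • ee i) + F (t, x - r • ee i) - 2 * F (t, x)) / r ^ 2
      + (F (t + s * r ^ 2, x) - F (t, x)) / r ^ 2 := by
  rw [DD, add_div, Finset.sum_div]
  simp only [Prod.mk_add_mk, Prod.mk_sub_mk, add_zero, sub_zero]

lemma pde_lim {N : ℕ} (p σ : ℝ) (w : Eu N → ℝ) (u : ℝ → Eu N → ℝ)
    (hx : ∀ t : ℝ, 0 < t → ContDiff ℝ 2 (u t))
    (hpde : ∀ t : ℝ, 0 < t → ∀ x : Eu N,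
      HasDerivAt (fun τ : ℝ => u τ x) (lap (u t) x + |u t x| ^ p + t ^ σ * w x) t)
    (q : ℝ × Eu N) (hq : 0 < q.1) :
    Tendsto (fun r => DD (-1) r (fun q : ℝ × Eu N => -(u (max q.1 0) q.2)) q) (𝓝[>] 0)
      (𝓝 (-(-(|u q.1 q.2| ^ p + q.1 ^ σ * w q.2)))) := by
  obtain ⟨t, x⟩ := q
  simp only at hq
  have h1 := lap_diff (u t) (hx t hq) x
  have h2 := time_diff _ _ t (-1) (hpde t hq x)
  have h3 := (h1.add h2).neg
  have e : -(lap (u t) x + -1 * (lap (u t) x + |u t x| ^ p + t ^ σ * w x))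
    = -(-(|u t x| ^ p + t ^ σ * w x)) := by ring
  rw [e] at h3
  refine h3.congr' ?_
  have hev : ∀ᶠ r : ℝ in 𝓝[>] 0, 0 < t + -1 * r ^ 2 := by
    have : Tendsto (fun r : ℝ => t + -1 * r ^ 2) (𝓝 0) (𝓝 (t + -1 * 0 ^ 2)) :=
      Continuous.tendsto (by fun_prop) 0
    refine (tendsto_nhdsWithin_of_tendsto_nhds this).eventually (lt_mem_nhds ?_)
    simpa using hq
  filter_upwards [hev] with r hr
  rw [DD_eq]
  simp only [max_eq_left hq.le, max_eq_left hr.le]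
  rw [neg_add, ← Finset.sum_neg_distrib]
  congr 1
  · refine Finset.sum_congr rfl fun i _ => by ring
  · ring

/-- Powers of the positive part. -/
def mm (n : ℕ) (z : ℝ) : ℝ := max z 0 ^ n

lemma mm_continuous (n : ℕ) : Continuous (mm n) := by unfold mm; fun_prop

lemma mm_nonneg (n : ℕ) (z : ℝ) : 0 ≤ mm n z := by unfold mm; positivity

lemma mm_le_one (n : ℕ) (z : ℝ) (hz : z ≤ 1) : mm n z ≤ 1 :=
  pow_le_one₀ (le_max_right _ _) (max_le hz zero_le_one)

lemma mm_anti {n k : ℕ} (h : n ≤ k) (z : ℝ) (hz : z ≤ 1) : mm k z ≤ mm n z :=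
  pow_le_pow_of_le_one (le_max_right _ _) (max_le hz zero_le_one) h

lemma mm_zero (n : ℕ) (z : ℝ) (hz : z ≤ 0) : mm (n + 1) z = 0 := by
  simp [mm, max_eq_right hz]

lemma mm_hasDerivAt (n : ℕ) (z : ℝ) :
    HasDerivAt (mm (n + 2)) ((n + 2 : ℝ) * mm (n + 1) z) z := by
  have hne : ∀ y : ℝ, y ≠ 0 → HasDerivAt (mm (n + 2)) ((n + 2 : ℝ) * mm (n + 1) y) y := by
    intro y hy
    rcases lt_or_gt_of_ne hy with h | h
    · rw [mm_zero n y h.le, mul_zero]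
      refine (hasDerivAt_const y (0 : ℝ)).congr_of_eventuallyEq ?_
      filter_upwards [gt_mem_nhds h] with z hz
      exact mm_zero (n + 1) z hz.le
    · have := hasDerivAt_pow (n + 2) y
      have e : mm (n + 1) y = y ^ (n + 1) := by simp [mm, max_eq_left h.le]
      rw [e]
      refine HasDerivAt.congr_of_eventuallyEq (f := fun y : ℝ => y ^ (n + 2)) ?_ ?_
      · simpa using this
      · filter_upwards [lt_mem_nhds h] with z hz
        simp [mm, max_eq_left hz.le]
  rcases eq_or_ne z 0 with rfl | hz
  · exact hasDerivAt_of_hasDerivAt_of_ne (g := fun y => (n + 2 : ℝ) * mm (n + 1) y) hne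
      (mm_continuous _).continuousAt
      (continuous_const.mul (mm_continuous _)).continuousAt
  · exact hne z hz

def PP {N : ℕ} (T : ℝ) (x : Eu N) : ℝ := 1 - ‖x‖ ^ 2 / T
def QQ (T t : ℝ) : ℝ := (t / T - 1) * (2 - t / T)

def GG {N : ℕ} (n : ℕ) (T : ℝ) (i : Fin N) (y : Eu N) : ℝ :=
  (n + 3) * ((n + 2) * mm (n + 1) (PP T y) * (2 * y i / T) ^ 2 - mm (n + 2) (PP T y) * (2 / T))

def AA (n : ℕ) (T t : ℝ) : ℝ := (n + 3) * mm (n + 2) (QQ T t) * ((3 - 2 * (t / T)) / T)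

def psi {N : ℕ} (n : ℕ) (T : ℝ) (q : ℝ × Eu N) : ℝ := mm (n + 3) (QQ T q.1) * mm (n + 3) (PP T q.2)

def LL {N : ℕ} (n : ℕ) (T : ℝ) (q : ℝ × Eu N) : ℝ :=
  mm (n + 3) (QQ T q.1) * ∑ i, GG n T i q.2 + AA n T q.1 * mm (n + 3) (PP T q.2)

lemma QQ_le (T t : ℝ) : QQ T t ≤ 1 := by
  unfold QQ; nlinarith [sq_nonneg (t / T - 3 / 2)]

lemma PP_le {N : ℕ} (T : ℝ) (hT : 0 < T) (x : Eu N) : PP T x ≤ 1 := by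
  unfold PP
  have : 0 ≤ ‖x‖ ^ 2 / T := by positivity
  linarith

lemma PP_continuous {N : ℕ} (T : ℝ) : Continuous (PP T : Eu N → ℝ) := by unfold PP; fun_prop

lemma QQ_continuous (T : ℝ) : Continuous (QQ T) := by unfold QQ; fun_prop

lemma GG_continuous {N : ℕ} (n : ℕ) (T : ℝ) (i : Fin N) : Continuous (GG n T i) := by
  have h1 : Continuous fun y : Eu N => mm (n + 1) (PP T y) := (mm_continuous _).comp (PP_continuous T)
  have h2 : Continuous fun y : Eu N => mm (n + 2) (PP T y) := (mm_continuous _).comp (PP_continuous T)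
  unfold GG
  fun_prop

lemma GG_bound {N : ℕ} (n : ℕ) (T : ℝ) (hT : 0 < T) (i : Fin N) (y : Eu N) :
    |GG n T i y| ≤ 4 * (n + 3) ^ 2 / T * mm (n + 1) (PP T y) := by
  rcases le_or_gt (PP T y) 0 with h | h
  · simp [GG, mm_zero _ _ h]
  · have hy : (y i) ^ 2 ≤ T := by
      have h1 : ‖y‖ ^ 2 < T := by
        have : ‖y‖ ^ 2 / T < 1 := by unfold PP at h; linarith
        rwa [div_lt_one hT] at this
      have h2 : ‖y i‖ ≤ ‖y‖ := PiLp.norm_apply_le y i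
      rw [Real.norm_eq_abs] at h2
      have : (y i) ^ 2 ≤ ‖y‖ ^ 2 := by
        rw [← sq_abs]; exact pow_le_pow_left₀ (abs_nonneg _) h2 2
      linarith
    have h1 : (2 * y i / T) ^ 2 ≤ 4 / T := by
      rw [div_pow, mul_pow, div_le_div_iff₀ (by positivity) hT]
      nlinarith
    have hm := mm_nonneg (n + 1) (PP T y)
    have hm2 := mm_nonneg (n + 2) (PP T y)
    have hmm := mm_anti (show n + 1 ≤ n + 2 by omega) (PP T y) (PP_le T hT y)
    set m1 := mm (n + 1) (PP T y)
    set m2 := mm (n + 2) (PP T y)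
    have ha : 0 ≤ (n + 2) * m1 * (2 * y i / T) ^ 2 := by positivity
    have ha' : (n + 2) * m1 * (2 * y i / T) ^ 2 ≤ (n + 2) * m1 * (4 / T) := by gcongr
    have hb : 0 ≤ m2 * (2 / T) := by positivity
    have hb' : m2 * (2 / T) ≤ m1 * (2 / T) := by gcongr
    have hc : (0 : ℝ) ≤ m1 * (2 / T) := by positivity
    have hn : (0 : ℝ) ≤ n := n.cast_nonneg
    have : |(n + 2) * m1 * (2 * y i / T) ^ 2 - m2 * (2 / T)| ≤ 4 * (n + 3) / T * m1 := by
      have e1 : 4 * (n + 3) / T * m1 = (n + 2) * m1 * (4 / T) + 2 * (m1 * (2 / T)) := by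
        ring
      rw [e1, abs_le]
      constructor
      · have : 0 ≤ (n + 2) * m1 * (4 / T) := by positivity
        linarith
      · linarith
    unfold GG
    rw [abs_mul, abs_of_nonneg (by positivity : (0 : ℝ) ≤ n + 3)]
    calc _ ≤ (n + 3 : ℝ) * (4 * (n + 3) / T * m1) := by gcongr
      _ = _ := by ring

lemma AA_bound (n : ℕ) (T t : ℝ) (hT : 0 < T) :
    |AA n T t| ≤ (n + 3) / T * mm (n + 2) (QQ T t) := by
  rcases le_or_gt (QQ T t) 0 with h | h
  · simp [AA, mm_zero _ _ h]
  · have h1 : |3 - 2 * (t / T)| ≤ 1 := by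
      unfold QQ at h
      rw [abs_le]; constructor <;> nlinarith
    have hm := mm_nonneg (n + 2) (QQ T t)
    unfold AA
    rw [abs_mul, abs_mul, abs_div, abs_of_pos hT, abs_of_nonneg hm,
      abs_of_nonneg (by positivity : (0 : ℝ) ≤ n + 3)]
    calc _ ≤ (n + 3 : ℝ) * mm (n + 2) (QQ T t) * (1 / T) := by gcongr
      _ = _ := by ring

lemma mmQ_deriv (n : ℕ) (T t : ℝ) : HasDerivAt (fun t => mm (n + 3) (QQ T t)) (AA n T t) t := by
  have hQ : HasDerivAt (QQ T) ((3 - 2 * (t / T)) / T) t := by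
    have h1 : HasDerivAt (fun t : ℝ => t / T) (1 / T) t := (hasDerivAt_id t).div_const T
    have := (h1.sub_const 1).mul (h1.const_sub 2)
    refine HasDerivAt.congr_deriv this ?_
    ring
  have := (mm_hasDerivAt (n + 1) (QQ T t)).comp t hQ
  refine HasDerivAt.congr_deriv this ?_
  unfold AA; push_cast; ring_nf

lemma mmP_deriv {N : ℕ} (n : ℕ) (T : ℝ) (x : Eu N) (i : Fin N) : ∃ f' : ℝ → ℝ,
    (∀ z, HasDerivAt (fun s : ℝ => mm (n + 3) (PP T (x + s • ee i))) (f' z) z) ∧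
    (∀ z, HasDerivAt f' (GG n T i (x + z • ee i)) z) := by
  have hexp : ∀ s : ℝ, PP T (x + s • ee i) = 1 - (‖x‖ ^ 2 + 2 * s * x i + s ^ 2) / T := by
    intro s
    unfold PP
    have hn : ‖(ee i : Eu N)‖ = 1 := by simp [ee]
    rw [norm_add_sq_real, inner_smul_right, norm_smul, hn, mul_one, Real.norm_eq_abs, sq_abs]
    have : inner ℝ x (ee i) = x i := by simp [ee, EuclideanSpace.inner_single_right]
    rw [this]; ring
  have hP : ∀ z : ℝ, HasDerivAt (fun s : ℝ => PP T (x + s • ee i)) (-(2 * (x i + z) / T)) z := by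
    intro z
    simp only [hexp]
    have h1 : HasDerivAt (fun s : ℝ => ‖x‖ ^ 2 + 2 * s * x i + s ^ 2) (2 * x i + 2 * z) z := by
      have a1 := (((hasDerivAt_id z).const_mul 2).mul_const (x i)).const_add (‖x‖ ^ 2)
      have a2 := a1.add (hasDerivAt_pow 2 z)
      refine HasDerivAt.congr_deriv a2 ?_
      simp
    refine HasDerivAt.congr_deriv ((h1.div_const T).const_sub 1) ?_
    ring
  refine ⟨fun z => (n + 3 : ℝ) * (mm (n + 2) (PP T (x + z • ee i)) * (-(2 * (x i + z) / T))),
    fun z => ?_, fun z => ?_⟩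
  · refine HasDerivAt.congr_deriv ((mm_hasDerivAt (n + 1) _).comp z (hP z)) ?_
    push_cast; ring_nf
  · have a1 := (mm_hasDerivAt n _).comp z (hP z)
    have a2 : HasDerivAt (fun z : ℝ => (-(2 * (x i + z) / T))) (-(2 / T)) z := by
      have := ((((hasDerivAt_id z).const_add (x i)).const_mul 2).div_const T).neg
      refine HasDerivAt.congr_deriv this ?_
      simp
    refine HasDerivAt.congr_deriv ((a1.mul a2).const_mul (n + 3 : ℝ)) ?_
    have : (x + z • ee i : Eu N) i = x i + z := by simp [ee]
    simp only [GG, this, Function.comp]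
    ring

lemma psi_continuous {N : ℕ} (n : ℕ) (T : ℝ) : Continuous (psi n T : ℝ × Eu N → ℝ) := by
  unfold psi
  exact ((mm_continuous _).comp ((QQ_continuous T).comp continuous_fst)).mul
    ((mm_continuous _).comp ((PP_continuous T).comp continuous_snd))

lemma psi_nonneg {N : ℕ} (n : ℕ) (T : ℝ) (q : ℝ × Eu N) : 0 ≤ psi n T q :=
  mul_nonneg (mm_nonneg _ _) (mm_nonneg _ _)

/-- The cylinder carrying the test function. -/
def cyl (N : ℕ) (T : ℝ) : Set (ℝ × Eu N) := Icc T (2 * T) ×ˢ Metric.closedBall 0 (√T)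

lemma cyl_compact (N : ℕ) (T : ℝ) : IsCompact (cyl N T) :=
  isCompact_Icc.prod (isCompact_closedBall _ _)

lemma cyl_compl {N : ℕ} (T : ℝ) (hT : 0 < T) (q : ℝ × Eu N) (hq : q ∉ cyl N T) :
    QQ T q.1 ≤ 0 ∨ PP T q.2 ≤ 0 := by
  by_contra! h
  obtain ⟨h1, h2⟩ := h
  apply hq
  refine ⟨?_, ?_⟩
  · unfold QQ at h1
    have a1 : 1 ≤ q.1 / T := by nlinarith
    have a2 : q.1 / T ≤ 2 := by nlinarith
    rw [le_div_iff₀ hT] at a1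
    rw [div_le_iff₀ hT] at a2
    exact ⟨by linarith, by linarith⟩
  · rw [mem_closedBall_zero_iff]
    apply Real.le_sqrt_of_sq_le
    unfold PP at h2
    have : ‖q.2‖ ^ 2 / T ≤ 1 := by linarith
    rwa [div_le_one hT] at this

lemma psi_tsupport {N : ℕ} (n : ℕ) (T : ℝ) (hT : 0 < T) :
    tsupport (psi n T : ℝ × Eu N → ℝ) ⊆ cyl N T := by
  refine closure_minimal ?_ (cyl_compact N T).isClosed
  intro q hq
  by_contra h
  apply hq
  rcases cyl_compl T hT q h with h | h
  · simp [psi, mm_zero _ _ h]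
  · simp [psi, mm_zero _ _ h]

lemma LL_continuous {N : ℕ} (n : ℕ) (T : ℝ) : Continuous (LL n T : ℝ × Eu N → ℝ) := by
  have h1 : Continuous fun q : ℝ × Eu N => mm (n + 3) (QQ T q.1) :=
    (mm_continuous _).comp ((QQ_continuous T).comp continuous_fst)
  have h2 : Continuous fun q : ℝ × Eu N => mm (n + 3) (PP T q.2) :=
    (mm_continuous _).comp ((PP_continuous T).comp continuous_snd)
  have h3 : Continuous fun q : ℝ × Eu N => ∑ i, GG n T i q.2 :=
    continuous_finsetSum _ fun i _ => (GG_continuous n T i).comp continuous_snd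
  have h4 : Continuous fun q : ℝ × Eu N => mm (n + 2) (QQ T q.1) :=
    (mm_continuous _).comp ((QQ_continuous T).comp continuous_fst)
  unfold LL AA
  fun_prop

lemma LL_bound {N : ℕ} (n : ℕ) (T : ℝ) (hT : 0 < T) (q : ℝ × Eu N) :
    |LL n T q| ≤ (N * (4 * (n + 3) ^ 2) + (n + 3)) / T *
      (max (QQ T q.1) 0 * max (PP T q.2) 0) ^ (n + 1) := by
  have hQ := QQ_le T q.1
  have hP := PP_le T hT q.2
  have a1 : |∑ i, GG n T i q.2| ≤ N * (4 * (n + 3) ^ 2 / T * mm (n + 1) (PP T q.2)) := by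
    refine (Finset.abs_sum_le_sum_abs _ _).trans ?_
    refine (Finset.sum_le_sum fun i _ => GG_bound n T hT i q.2).trans ?_
    simp
  have a2 := AA_bound n T q.1 hT
  have e : (max (QQ T q.1) 0 * max (PP T q.2) 0) ^ (n + 1)
      = mm (n + 1) (QQ T q.1) * mm (n + 1) (PP T q.2) := by rw [mul_pow]; rfl
  rw [e]
  have b1 := mm_anti (show n + 1 ≤ n + 3 by omega) _ hQ
  have b2 := mm_anti (show n + 1 ≤ n + 2 by omega) _ hQ
  have b3 := mm_anti (show n + 1 ≤ n + 3 by omega) _ hP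
  have c1 := mm_nonneg (n + 1) (QQ T q.1)
  have c2 := mm_nonneg (n + 1) (PP T q.2)
  have c3 := mm_nonneg (n + 3) (QQ T q.1)
  have c4 := mm_nonneg (n + 3) (PP T q.2)
  unfold LL
  refine (abs_add_le _ _).trans ?_
  rw [abs_mul, abs_mul, abs_of_nonneg c3, abs_of_nonneg c4]
  calc _ ≤ mm (n + 1) (QQ T q.1) * (N * (4 * (n + 3) ^ 2 / T * mm (n + 1) (PP T q.2)))
        + ((n + 3) / T * mm (n + 1) (QQ T q.1)) * mm (n + 1) (PP T q.2) := by
        refine add_le_add (mul_le_mul b1 a1 (abs_nonneg _) c1)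
          (mul_le_mul (a2.trans ?_) b3 c4 (by positivity))
        gcongr
    _ = _ := by ring

lemma DD_psi_eq {N : ℕ} (n : ℕ) (T r : ℝ) (q : ℝ × Eu N) :
    DD 1 r (psi n T) q = mm (n + 3) (QQ T q.1) * ∑ i : Fin N, ((mm (n + 3) (PP T (q.2 + r • ee i))
      + mm (n + 3) (PP T (q.2 - r • ee i)) - 2 * mm (n + 3) (PP T q.2)) / r ^ 2)
      + (mm (n + 3) (QQ T (q.1 + 1 * r ^ 2)) - mm (n + 3) (QQ T q.1)) / r ^ 2
        * mm (n + 3) (PP T q.2) := by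
  obtain ⟨t, x⟩ := q
  rw [DD_eq, Finset.mul_sum]
  simp only [psi]
  congr 1
  · refine Finset.sum_congr rfl fun i _ => by ring
  · ring

lemma DD_psi_lim {N : ℕ} (n : ℕ) (T : ℝ) (q : ℝ × Eu N) :
    Tendsto (fun r => DD 1 r (psi n T) q) (𝓝[>] 0) (𝓝 (LL n T q)) := by
  simp only [DD_psi_eq, LL]
  have ht := time_diff _ _ q.1 1 (mmQ_deriv n T q.1)
  rw [one_mul] at ht
  refine Tendsto.add (Tendsto.const_mul _ (tendsto_finsetSum _ fun i _ => ?_)) (ht.mul_const _)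
  obtain ⟨f', h1, h2⟩ := mmP_deriv n T q.2 i
  have := second_diff_tendsto _ _ _ h1 h2 (by
    have := GG_continuous n T i
    exact Continuous.continuousAt (by fun_prop))
  simpa [sub_eq_add_neg] using this

lemma DD_psi_bound {N : ℕ} (n : ℕ) (T : ℝ) (hT : 0 < T) : ∃ M : ℝ, ∀ r, 0 < r →
    ∀ q : ℝ × Eu N, |DD 1 r (psi n T) q| ≤ M := by
  refine ⟨N * (2 * (4 * (n + 3) ^ 2 / T)) + (n + 3) / T, fun r hr q => ?_⟩
  have hr2 : 0 < r ^ 2 := by positivity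
  rw [DD_psi_eq]
  refine (abs_add_le _ _).trans ?_
  rw [abs_mul, abs_mul, abs_of_nonneg (mm_nonneg _ _), abs_of_nonneg (mm_nonneg _ _)]
  have hQ := mm_le_one (n + 3) _ (QQ_le T q.1)
  have hP := mm_le_one (n + 3) _ (PP_le T hT q.2)
  refine add_le_add ?_ ?_
  · refine (mul_le_of_le_one_left (abs_nonneg _) hQ).trans ?_
    refine (Finset.abs_sum_le_sum_abs _ _).trans ?_
    have : ∀ i : Fin N, |(mm (n + 3) (PP T (q.2 + r • ee i))
      + mm (n + 3) (PP T (q.2 - r • ee i)) - 2 * mm (n + 3) (PP T q.2)) / r ^ 2|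
        ≤ 2 * (4 * (n + 3) ^ 2 / T) := by
      intro i
      rw [abs_div, abs_of_pos hr2, div_le_iff₀ hr2]
      obtain ⟨f', h1, h2⟩ := mmP_deriv n T q.2 i
      have := second_diff_bound _ _ _ 0 (4 * (n + 3) ^ 2 / T) r hr.le h1 h2 (fun z _ => by
        rw [sub_zero]
        refine (GG_bound n T hT i _).trans (mul_le_of_le_one_right (by positivity)
          (mm_le_one _ _ (PP_le T hT _))))
      simpa [sub_eq_add_neg] using this
    refine (Finset.sum_le_sum fun i _ => this i).trans ?_
    simp
  · refine (mul_le_of_le_one_right (abs_nonneg _) hP).trans ?_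
    rw [abs_div, abs_of_pos hr2, div_le_iff₀ hr2]
    have := norm_image_sub_le_of_norm_deriv_le_segment' (a := q.1) (b := q.1 + 1 * r ^ 2)
      (C := (n + 3) / T) (f := fun t => mm (n + 3) (QQ T t))
      (fun x _ => (mmQ_deriv n T x).hasDerivWithinAt)
      (fun x _ => (AA_bound n T x hT).trans (mul_le_of_le_one_right (by positivity)
          (mm_le_one _ _ (QQ_le T _)))) (q.1 + 1 * r ^ 2) ⟨by linarith, le_rfl⟩
    simpa using this

lemma young_step (p X θ A : ℝ) (n : ℕ) (hp : 1 < p) (hX : 0 ≤ X) (hθ0 : 0 ≤ θ) (hθ1 : θ ≤ 1)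
    (hA : 0 ≤ A) (hn : ((n : ℝ) + 3) / p ≤ n + 1) :
    X * (A * θ ^ (n + 1)) ≤ X ^ p * θ ^ (n + 3) + A ^ (p / (p - 1)) := by
  have hp0 : 0 < p := by linarith
  have hpq : p.HolderConjugate (p / (p - 1)) := Real.HolderConjugate.conjExponent hp
  have hq0 : 0 < p / (p - 1) := hpq.symm.pos
  have hq1 : 1 < p / (p - 1) := hpq.symm.lt
  have h := Real.young_inequality_of_nonneg (a := X * θ ^ (((n : ℝ) + 3) / p)) (b := A)
    (by positivity) hA hpq
  have e1 : (X * θ ^ (((n : ℝ) + 3) / p)) ^ p = X ^ p * θ ^ (n + 3) := by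
    rw [Real.mul_rpow hX (by positivity), ← Real.rpow_mul hθ0, div_mul_cancel₀ _ hp0.ne',
      ← Real.rpow_natCast θ (n + 3)]
    push_cast; rfl
  rw [e1] at h
  have e2 : θ ^ (n + 1) ≤ θ ^ (((n : ℝ) + 3) / p) := by
    rw [← Real.rpow_natCast θ (n + 1)]
    refine Real.rpow_le_rpow_of_exponent_ge' hθ0 hθ1 (by positivity) ?_
    push_cast; exact hn
  calc X * (A * θ ^ (n + 1)) = X * θ ^ (n + 1) * A := by ring
    _ ≤ X * θ ^ (((n : ℝ) + 3) / p) * A := by gcongr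
    _ ≤ _ := h
    _ ≤ _ := add_le_add (div_le_self (by positivity) hp.le) (div_le_self (by positivity) hq1.le)

lemma intOn {N : ℕ} (K0 : Set (ℝ × Eu N)) (hK : IsCompact K0) (F : ℝ × Eu N → ℝ)
    (hF : ContinuousOn F K0) (hz : ∀ q, q ∉ K0 → F q = 0) : Integrable F := by
  refine (integrableOn_iff_integrable_of_support_subset (s := K0) fun q hq => ?_).1
    (hF.integrableOn_compact hK)
  by_contra h
  exact hq (hz q h)

lemma fixed_T {N : ℕ} (p σ : ℝ) (hp1 : 1 < p) (w : Eu N → ℝ) (hw : Continuous w)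
    (u : ℝ → Eu N → ℝ)
    (hcont : ContinuousOn (fun q : ℝ × Eu N => u q.1 q.2) (Set.Ici 0 ×ˢ Set.univ))
    (hx : ∀ t : ℝ, 0 < t → ContDiff ℝ 2 (u t))
    (hpde : ∀ t : ℝ, 0 < t → ∀ x : Eu N,
      HasDerivAt (fun τ : ℝ => u τ x) (lap (u t) x + |u t x| ^ p + t ^ σ * w x) t)
    (n : ℕ) (hn : ((n : ℝ) + 3) / p ≤ n + 1) (T : ℝ) (hT : 0 < T) :
    ∫ q : ℝ × Eu N, psi n T q * (q.1 ^ σ * w q.2) ≤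
      ((N * (4 * (n + 3) ^ 2) + (n + 3)) / T) ^ (p / (p - 1)) * volume.real (cyl N T) := by
  set A : ℝ := (N * (4 * (n + 3) ^ 2) + (n + 3)) / T with hA
  have hA0 : 0 ≤ A := by positivity
  set Ω : Set (ℝ × Eu N) := {q | 0 < q.1} with hΩ
  have hΩo : IsOpen Ω := isOpen_lt continuous_const continuous_fst
  have hcylΩ : cyl N T ⊆ Ω := fun q hq => hT.trans_le hq.1.1
  have hv : Continuous (fun q : ℝ × Eu N => -(u (max q.1 0) q.2)) := by
    refine Continuous.neg ?_
    have hm : Continuous fun q : ℝ × Eu N => (max q.1 0, q.2) := by fun_prop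
    exact hcont.comp_continuous hm fun q => ⟨mem_Ici.2 (le_max_right _ _), mem_univ _⟩
  have hvΩ : ∀ q ∈ Ω, u (max q.1 0) q.2 = u q.1 q.2 := fun q hq => by
    rw [max_eq_left (le_of_lt hq)]
  have hu : ContinuousOn (fun q : ℝ × Eu N => u q.1 q.2) Ω :=
    hcont.mono fun q hq => ⟨mem_Ici.2 (show 0 < q.1 from hq).le, mem_univ _⟩
  have htσ : ContinuousOn (fun q : ℝ × Eu N => q.1 ^ σ * w q.2) Ω := by
    refine ContinuousOn.mul ?_ (hw.comp continuous_snd).continuousOn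
    exact continuous_fst.continuousOn.rpow_const fun q hq => Or.inl (ne_of_gt hq)
  have hup : ContinuousOn (fun q : ℝ × Eu N => |u q.1 q.2| ^ p) Ω :=
    hu.abs.rpow_const fun q _ => Or.inr (by linarith)
  have hH : ContinuousOn (fun q : ℝ × Eu N => -(|u q.1 q.2| ^ p + q.1 ^ σ * w q.2)) Ω :=
    (hup.add htσ).neg
  obtain ⟨M, hM⟩ := DD_psi_bound (N := N) n T hT
  have hcs : HasCompactSupport (psi n T : ℝ × Eu N → ℝ) :=
    (cyl_compact N T).of_isClosed_subset (isClosed_tsupport _) (psi_tsupport n T hT)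
  have weak := weak_core _ _ (psi n T) (LL n T) Ω hΩo hv hH
    (fun q hq => pde_lim p σ w u hx hpde q hq) (psi_continuous n T) (psi_nonneg n T) hcs
    ((psi_tsupport n T hT).trans hcylΩ) M hM (LL_continuous n T) (DD_psi_lim n T)
  have hψz : ∀ q, q ∉ cyl N T → psi n T q = 0 := fun q hq =>
    image_eq_zero_of_notMem_tsupport fun h => hq (psi_tsupport n T hT h)
  have hLz : ∀ q, q ∉ cyl N T → LL n T q = 0 := fun q hq => by
    have := LL_bound n T hT q
    have e : (max (QQ T q.1) 0 * max (PP T q.2) 0) ^ (n + 1) = 0 := by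
      rcases cyl_compl T hT q hq with h | h
      · rw [max_eq_right h]; simp
      · rw [max_eq_right h]; simp
    rw [e, mul_zero] at this
    exact abs_eq_zero.1 (le_antisymm this (abs_nonneg _))
  have i1 : Integrable fun q : ℝ × Eu N => -(u (max q.1 0) q.2) * LL n T q :=
    intOn _ (cyl_compact N T) _ (hv.mul (LL_continuous n T)).continuousOn
      fun q hq => by simp [hLz q hq]
  have i2 : Integrable fun q : ℝ × Eu N => psi n T q * -(|u q.1 q.2| ^ p + q.1 ^ σ * w q.2) :=
    intOn _ (cyl_compact N T) _ ((psi_continuous n T).continuousOn.mul (hH.mono hcylΩ))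
      fun q hq => by simp [hψz q hq]
  have i3 : Integrable fun q : ℝ × Eu N => psi n T q * (q.1 ^ σ * w q.2) :=
    intOn _ (cyl_compact N T) _ ((psi_continuous n T).continuousOn.mul (htσ.mono hcylΩ))
      fun q hq => by simp [hψz q hq]
  have hcm : MeasurableSet (cyl N T) := (cyl_compact N T).measurableSet
  have i4 : Integrable ((cyl N T).indicator fun _ => A ^ (p / (p - 1))) :=
    (integrable_indicator_iff hcm).2 (continuousOn_const.integrableOn_compact (cyl_compact N T))
  have mono := integral_mono ((i1.add i2).add i3) i4 (fun q => by
    by_cases hq : q ∈ cyl N T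
    · rw [indicator_of_mem hq]
      simp only [Pi.add_apply]
      rw [hvΩ q (hcylΩ hq)]
      have hθ0 : 0 ≤ max (QQ T q.1) 0 * max (PP T q.2) 0 := by positivity
      have hθ1 : max (QQ T q.1) 0 * max (PP T q.2) 0 ≤ 1 :=
        mul_le_one₀ (max_le (QQ_le T q.1) zero_le_one) (le_max_right _ _)
          (max_le (PP_le T hT q.2) zero_le_one)
      have y := young_step p |u q.1 q.2| _ A n hp1 (abs_nonneg _) hθ0 hθ1 hA0 hn
      have e : psi n T q = (max (QQ T q.1) 0 * max (PP T q.2) 0) ^ (n + 3) := by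
        rw [mul_pow]; rfl
      rw [← e] at y
      have b : -(u q.1 q.2) * LL n T q ≤ |u q.1 q.2| * (A * (max (QQ T q.1) 0 * max (PP T q.2) 0) ^ (n + 1)) := by
        refine (le_abs_self _).trans ?_
        rw [abs_mul, abs_neg]
        exact mul_le_mul_of_nonneg_left (LL_bound n T hT q) (abs_nonneg _)
      linarith
    · rw [indicator_of_notMem hq]
      simp [hψz q hq, hLz q hq])
  have e1 : ∫ q : ℝ × Eu N, ((fun q => -(u (max q.1 0) q.2) * LL n T q)
      + (fun q => psi n T q * -(|u q.1 q.2| ^ p + q.1 ^ σ * w q.2))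
      + fun q => psi n T q * (q.1 ^ σ * w q.2)) q = (∫ q : ℝ × Eu N, -(u (max q.1 0) q.2) * LL n T q)
      + (∫ q : ℝ × Eu N, psi n T q * -(|u q.1 q.2| ^ p + q.1 ^ σ * w q.2))
      + ∫ q : ℝ × Eu N, psi n T q * (q.1 ^ σ * w q.2) := by
    rw [integral_add' (i1.add i2) i3, integral_add' i1 i2]
  rw [e1, integral_indicator hcm, setIntegral_const, smul_eq_mul] at mono
  linarith

lemma cyl_volume (N : ℕ) (T : ℝ) (hT : 0 < T) :
    volume.real (cyl N T) = T ^ (1 + (N : ℝ) / 2) * volume.real (Metric.ball (0 : Eu N) 1) := by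
  unfold cyl
  rw [Measure.volume_eq_prod, measureReal_prod_prod, Real.volume_real_Icc_of_le (by linarith),
    Measure.addHaar_real_closedBall _ _ (Real.sqrt_nonneg T), finrank_euclideanSpace,
    Fintype.card_fin, Real.rpow_add hT, Real.rpow_one, Real.sqrt_eq_rpow, ← Real.rpow_mul_natCast hT.le]
  have : (1 / 2 : ℝ) * N = N / 2 := by ring
  rw [this]
  ring

lemma time_int (n : ℕ) (σ T : ℝ) (hT : 0 < T) :
    ∫ t : ℝ, mm (n + 3) (QQ T t) * t ^ σ
      = T ^ (σ + 1) * ∫ s : ℝ, mm (n + 3) (QQ 1 s) * s ^ σ := by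
  have h := Measure.integral_comp_div (fun s : ℝ => mm (n + 3) (QQ 1 s) * s ^ σ) T
  rw [abs_of_pos hT, smul_eq_mul] at h
  rw [Real.rpow_add hT, Real.rpow_one, mul_assoc, ← h, ← integral_const_mul]
  congr 1; ext t
  have hQ : QQ 1 (t / T) = QQ T t := by simp [QQ]
  rw [hQ]
  rcases le_or_gt t 0 with ht | ht
  · have : QQ T t ≤ 0 := by
      have : t / T ≤ 0 := div_nonpos_of_nonpos_of_nonneg ht hT.le
      unfold QQ; nlinarith
    rw [mm_zero _ _ this]; simp
  · rw [Real.div_rpow ht.le hT.le]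
    have := (Real.rpow_pos_of_pos hT σ).ne'
    field_simp

lemma time_int_pos (n : ℕ) (σ : ℝ) : 0 < ∫ s : ℝ, mm (n + 3) (QQ 1 s) * s ^ σ := by
  have hz : ∀ s, s ∉ Icc (1 : ℝ) 2 → mm (n + 3) (QQ 1 s) * s ^ σ = 0 := by
    intro s hs
    have : QQ 1 s ≤ 0 := by
      unfold QQ
      rw [div_one]
      by_contra! h
      exact hs ⟨by nlinarith, by nlinarith⟩
    rw [mm_zero _ _ this, zero_mul]
  have hi : Integrable fun s : ℝ => mm (n + 3) (QQ 1 s) * s ^ σ := by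
    refine (integrableOn_iff_integrable_of_support_subset (s := Icc 1 2) fun q hq => ?_).1
      (ContinuousOn.integrableOn_compact isCompact_Icc ?_)
    · by_contra h
      exact hq (hz q h)
    · refine ((mm_continuous _).comp (QQ_continuous 1)).continuousOn.mul ?_
      exact continuousOn_id.rpow_const fun s hs => Or.inl (by
        have := hs.1; simp only [id]; linarith)
  have hnn : 0 ≤ fun s : ℝ => mm (n + 3) (QQ 1 s) * s ^ σ := by
    intro s
    by_cases hs : s ∈ Icc (1 : ℝ) 2
    · exact mul_nonneg (mm_nonneg _ _) (Real.rpow_nonneg (by linarith [hs.1]) _)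
    · simp [hz s hs]
  rw [integral_pos_iff_support_of_nonneg hnn hi]
  have hsub : Ioo (1 : ℝ) 2 ⊆ Function.support fun s : ℝ => mm (n + 3) (QQ 1 s) * s ^ σ := by
    intro s hs
    have h1 : 0 < QQ 1 s := by
      unfold QQ; rw [div_one]; nlinarith [hs.1, hs.2]
    have h2 : 0 < mm (n + 3) (QQ 1 s) := by
      unfold mm; rw [max_eq_left h1.le]; positivity
    have h3 : 0 < s ^ σ := Real.rpow_pos_of_pos (by linarith [hs.1]) _
    exact (mul_pos h2 h3).ne'
  refine lt_of_lt_of_le ?_ (measure_mono hsub)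
  rw [Real.volume_Ioo]; norm_num

lemma space_lim {N : ℕ} (n : ℕ) (w : Eu N → ℝ) (hwI : Integrable w) :
    Tendsto (fun T : ℝ => ∫ x, mm (n + 3) (PP T x) * w x) atTop (𝓝 (∫ x, w x)) := by
  refine tendsto_integral_filter_of_dominated_convergence (fun x => ‖w x‖) ?_ ?_ hwI.norm ?_
  · exact Eventually.of_forall fun T =>
      ((mm_continuous _).comp (PP_continuous T)).aestronglyMeasurable.mul hwI.1
  · filter_upwards [eventually_gt_atTop 0] with T hT
    refine Eventually.of_forall fun x => ?_
    rw [norm_mul, Real.norm_eq_abs, abs_of_nonneg (mm_nonneg _ _)]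
    exact mul_le_of_le_one_left (norm_nonneg _) (mm_le_one _ _ (PP_le T hT x))
  · refine Eventually.of_forall fun x => ?_
    have h1 : Tendsto (fun T : ℝ => PP T x) atTop (𝓝 (1 - 0)) :=
      tendsto_const_nhds.sub (tendsto_const_nhds.div_atTop tendsto_id)
    have h2 := ((mm_continuous (n + 3)).tendsto (1 - 0)).comp h1
    have h3 := h2.mul_const (w x)
    simpa [mm] using h3

/-- The key test-function inequality for global classical solutions, −1 < σ:
∫ w ≤ C T^{N/2 − σ − p/(p−1)} for all large T. -/
theorem test_function_inequality_global_solution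
    (N : ℕ) (hN : 2 ≤ N) (p σ : ℝ) (hp1 : 1 < p) (hσ : -1 < σ)
    (u₀ : Eu N → ℝ) (hu₀ : IsC0 u₀)
    (w : Eu N → ℝ) (hwC : IsC0 w) (hwI : Integrable w) (hwpos : 0 < ∫ x, w x)
    (u : ℝ → Eu N → ℝ)
    (hcont : ContinuousOn (fun q : ℝ × Eu N => u q.1 q.2) (Set.Ici 0 ×ˢ Set.univ))
    (hx : ∀ t : ℝ, 0 < t → ContDiff ℝ 2 (u t))
    (hderiv : ∀ x : Eu N, ContinuousOn (fun t : ℝ => deriv (fun τ : ℝ => u τ x) t) (Set.Ioi 0))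
    (hpde : ∀ t : ℝ, 0 < t → ∀ x : Eu N,
      HasDerivAt (fun τ : ℝ => u τ x) (lap (u t) x + |u t x| ^ p + t ^ σ * w x) t)
    (hinit : u 0 = u₀) :
    ∃ C > (0 : ℝ), ∃ T₀ > (0 : ℝ), ∀ T : ℝ, T₀ ≤ T →
      (∫ x, w x) ≤ C * T ^ ((N : ℝ) / 2 - σ - p / (p - 1)) := by
  have hp0 : 0 < p := by linarith
  obtain ⟨n, hn0⟩ := exists_nat_ge (2 / (p - 1))
  have hn : ((n : ℝ) + 3) / p ≤ n + 1 := by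
    rw [div_le_iff₀ (by linarith : (0 : ℝ) < p - 1)] at hn0
    rw [div_le_iff₀ hp0]
    nlinarith
  set c0 := ∫ s : ℝ, mm (n + 3) (QQ 1 s) * s ^ σ with hc0
  have hc0pos : 0 < c0 := time_int_pos n σ
  set B : ℝ := N * (4 * (n + 3) ^ 2) + (n + 3) with hB
  have hBpos : 0 < B := by positivity
  set β := volume.real (Metric.ball (0 : Eu N) 1) with hβ
  have hβpos : 0 < β := by
    rw [hβ, Measure.real]
    exact ENNReal.toReal_pos (Metric.measure_ball_pos _ _ one_pos).ne' measure_ball_lt_top.ne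
  have hev := ((space_lim n w hwI).eventually
    (lt_mem_nhds (show (∫ x, w x) / 2 < ∫ x, w x by linarith)))
  obtain ⟨T₁, hT₁⟩ := eventually_atTop.1 hev
  refine ⟨2 * B ^ (p / (p - 1)) * β / c0, by positivity, max T₁ 1, by positivity, fun T hT => ?_⟩
  have hTpos : 0 < T := lt_of_lt_of_le one_pos ((le_max_right _ _).trans hT)
  have h1 := hT₁ T ((le_max_left _ _).trans hT)
  have h2 := fixed_T p σ hp1 w hwC.1 u hcont hx hpde n hn T hTpos
  have e : ∫ q : ℝ × Eu N, psi n T q * (q.1 ^ σ * w q.2)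
      = T ^ (σ + 1) * c0 * ∫ x, mm (n + 3) (PP T x) * w x := by
    rw [hc0, ← time_int n σ T hTpos, ← integral_prod_mul, ← Measure.volume_eq_prod]
    congr 1; ext q
    simp only [psi]; ring
  rw [e, cyl_volume N T hTpos, Real.div_rpow hBpos.le hTpos.le] at h2
  have hTσ : 0 < T ^ (σ + 1) := Real.rpow_pos_of_pos hTpos _
  have h3 : T ^ (σ + 1) * c0 * ((∫ x, w x) / 2) ≤
      B ^ (p / (p - 1)) / T ^ (p / (p - 1)) * (T ^ (1 + (N : ℝ) / 2) * β) :=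
    (mul_le_mul_of_nonneg_left h1.le (by positivity)).trans h2
  have hexp : T ^ ((N : ℝ) / 2 - σ - p / (p - 1))
      = T ^ (1 + (N : ℝ) / 2) / T ^ (p / (p - 1)) / T ^ (σ + 1) := by
    rw [← Real.rpow_sub hTpos, ← Real.rpow_sub hTpos]
    congr 1; ring
  rw [hexp]
  have h4 : (∫ x, w x) ≤ B ^ (p / (p - 1)) / T ^ (p / (p - 1)) * (T ^ (1 + (N : ℝ) / 2) * β)
      / (T ^ (σ + 1) * c0) * 2 := by
    rw [div_mul_eq_mul_div, le_div_iff₀ (by positivity)]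
    linarith
  refine h4.trans (le_of_eq ?_)
  have := (Real.rpow_pos_of_pos hTpos (p / (p - 1))).ne'
  field_simp

end
end
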